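/- arXiv:1303.1879 — 2 statements merged into one kernel-verified Lean document; each statement's English description precedes it below -/
import Mathlib

section
/- For each positive integer q, the counting function n ↦ u_P(q;n) is a quasipolynomial in n of degree 2q: there exist a positive integer p and polynomials f_0, …, f_{p−1} with rational coefficients, each of degree exactly 2q and with leading coefficient (vol B)^q / q! (where vol B is the Lebesgue area of B), such that u_P(q;n) = f_{n mod p}(n) for every integer n ≥ 0. -/
open MeasureTheory Pointwise


namespace RiderCount

/-- Quasipolynomial functions on the integers. -/
def QP (τ : ℤ → ℚ) : Prop :=
  ∃ N : ℤ, 0 < N ∧ ∃ P : ℤ → Polynomial ℚ, ∀ y : ℤ, τ y = (P (y % N)).eval (y : ℚ)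

lemma emod_mul_left (y N K : ℤ) : y % (N * K) % N = y % N :=
  Int.emod_emod_of_dvd y (Dvd.intro _ rfl)

lemma emod_mul_right (y N K : ℤ) : y % (N * K) % K = y % K :=
  Int.emod_emod_of_dvd y (Dvd.intro_left _ rfl)

lemma QP.add {a b : ℤ → ℚ} (ha : QP a) (hb : QP b) : QP (fun y => a y + b y) := by
  obtain ⟨N, hN, P, hP⟩ := ha
  obtain ⟨K, hK, Q, hQ⟩ := hb
  refine ⟨N * K, mul_pos hN hK, fun r => P (r % N) + Q (r % K), fun y => ?_⟩
  simp only [emod_mul_left, emod_mul_right, Polynomial.eval_add, hP, hQ]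

lemma QP.mul {a b : ℤ → ℚ} (ha : QP a) (hb : QP b) : QP (fun y => a y * b y) := by
  obtain ⟨N, hN, P, hP⟩ := ha
  obtain ⟨K, hK, Q, hQ⟩ := hb
  refine ⟨N * K, mul_pos hN hK, fun r => P (r % N) * Q (r % K), fun y => ?_⟩
  simp only [emod_mul_left, emod_mul_right, Polynomial.eval_mul, hP, hQ]

lemma QP.const (c : ℚ) : QP (fun _ => c) :=
  ⟨1, one_pos, fun _ => Polynomial.C c, fun y => by simp⟩

lemma QP.id : QP (fun y => (y : ℚ)) :=
  ⟨1, one_pos, fun _ => Polynomial.X, fun y => by simp⟩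

lemma QP.periodic (N : ℤ) (hN : 0 < N) (φ : ℤ → ℚ) : QP (fun y => φ (y % N)) :=
  ⟨N, hN, fun r => Polynomial.C (φ r), fun y => by simp⟩

/-- Polynomials have polynomial antidifferences. -/
lemma poly_antidiff (P : Polynomial ℚ) :
    ∃ Q : Polynomial ℚ, ∀ x : ℚ, Q.eval (x + 1) - Q.eval x = P.eval x := by
  induction P using Polynomial.induction_on' with
  | add p q hp hq =>
    obtain ⟨P, hP⟩ := hp
    obtain ⟨Q, hQ⟩ := hq
    refine ⟨P + Q, fun x => ?_⟩
    simp only [Polynomial.eval_add, ← hP, ← hQ]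
    ring
  | monomial n a =>
    refine ⟨Polynomial.C (a / (n + 1)) * Polynomial.bernoulli (n + 1), fun x => ?_⟩
    have h := Polynomial.bernoulli_eval_one_add (n + 1) x
    rw [add_comm 1 x] at h
    simp only [Polynomial.eval_mul, Polynomial.eval_C, h, Polynomial.eval_monomial]
    have : ((n : ℚ) + 1) ≠ 0 := by positivity
    push_cast
    field_simp
    simp only [add_sub_cancel_left]
    ring

/-- Quasipolynomials have quasipolynomial antidifferences. -/
lemma QP.antidiff {τ : ℤ → ℚ} (h : QP τ) :
    ∃ T : ℤ → ℚ, QP T ∧ ∀ y, T (y + 1) - T y = τ y := by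
  obtain ⟨N, hN, P, hP⟩ := h
  have hex : ∀ c : ℤ, ∃ Q : Polynomial ℚ, ∀ x : ℚ,
      Q.eval (x + 1) - Q.eval x = (P c).eval (c + N * x) := by
    intro c
    obtain ⟨Q, hQ⟩ := poly_antidiff
      ((P c).comp (Polynomial.C (c : ℚ) + Polynomial.C (N : ℚ) * Polynomial.X))
    refine ⟨Q, fun x => ?_⟩
    rw [hQ]; simp [Polynomial.eval_comp]
  choose Q hQ using hex
  have hN0 : (N : ℚ) ≠ 0 := by exact_mod_cast hN.ne'
  refine ⟨fun y => ∑ c ∈ Finset.Ico 0 N, (Q c).eval (((y + (N - 1 - c)) / N : ℤ) : ℚ),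
    ⟨N, hN, fun r => ∑ c ∈ Finset.Ico 0 N, (Q c).comp
      (Polynomial.C (1 / (N : ℚ)) * (Polynomial.X - Polynomial.C (r : ℚ)) +
        Polynomial.C (((r + (N - 1 - c)) / N : ℤ) : ℚ)), fun y => ?_⟩, fun y => ?_⟩
  · rw [Polynomial.eval_finsetSum]
    refine Finset.sum_congr rfl fun c _ => ?_
    rw [Polynomial.eval_comp]
    congr 1
    have e : y + (N - 1 - c) = (y % N + (N - 1 - c)) + N * (y / N) := by
      have := Int.emod_add_mul_ediv y N
      linarith
    have e3 : ((y : ℤ) : ℚ) = ((y % N : ℤ) : ℚ) + N * ((y / N : ℤ) : ℚ) := by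
      exact_mod_cast (Int.emod_add_mul_ediv y N).symm
    rw [e, Int.add_mul_ediv_left _ _ hN.ne']
    simp only [Polynomial.eval_add, Polynomial.eval_mul, Polynomial.eval_C, Polynomial.eval_sub,
      Polynomial.eval_X]
    push_cast
    set A := (((y % N + (N - 1 - c)) / N : ℤ) : ℚ)
    rw [e3]
    field_simp
    ring
  · rw [← Finset.sum_sub_distrib]
    have hr0 := Int.emod_nonneg y hN.ne'
    have hr1 := Int.emod_lt_of_pos y hN
    have hy := Int.emod_add_mul_ediv y N
    rw [Finset.sum_eq_single (y % N)]
    · have e1 : (y + 1 + (N - 1 - y % N)) / N = y / N + 1 := by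
        rw [show y + 1 + (N - 1 - y % N) = 0 + N * (y / N + 1) by linarith,
          Int.add_mul_ediv_left _ _ hN.ne']
        simp
      have e2 : (y + (N - 1 - y % N)) / N = y / N := by
        rw [show y + (N - 1 - y % N) = (N - 1) + N * (y / N) by linarith,
          Int.add_mul_ediv_left _ _ hN.ne', Int.ediv_eq_zero_of_lt (by linarith) (by linarith)]
        simp
      rw [e1, e2, hP y]
      push_cast
      rw [hQ]
      congr 1
      exact_mod_cast hy
    · intro c hc hcr
      rw [Finset.mem_Ico] at hc
      have : (y + 1 + (N - 1 - c)) / N = (y + (N - 1 - c)) / N := by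
        rw [show y + 1 + (N - 1 - c) = (y % N + (N - c)) + N * (y / N) by linarith,
          show y + (N - 1 - c) = (y % N + (N - 1 - c)) + N * (y / N) by linarith,
          Int.add_mul_ediv_left _ _ hN.ne', Int.add_mul_ediv_left _ _ hN.ne']
        congr 1
        rcases lt_or_gt_of_ne hcr with h | h
        · rw [show y % N + (N - c) = (y % N - c) + N * 1 by ring,
            show y % N + (N - 1 - c) = (y % N - c - 1) + N * 1 by ring,
            Int.add_mul_ediv_left _ _ hN.ne', Int.add_mul_ediv_left _ _ hN.ne',
            Int.ediv_eq_zero_of_lt (by omega) (by omega),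
            Int.ediv_eq_zero_of_lt (by omega) (by omega)]
        · rw [Int.ediv_eq_zero_of_lt (by omega) (by omega),
            Int.ediv_eq_zero_of_lt (by omega) (by omega)]
      rw [this, sub_self]
    · intro h
      exact absurd (Finset.mem_Ico.mpr ⟨hr0, hr1⟩) h

lemma sum_antidiff {τ T : ℤ → ℚ} (h : ∀ y, T (y + 1) - T y = τ y) (a b : ℤ) (hab : a ≤ b) :
    ∑ y ∈ Finset.Ico a b, τ y = T b - T a := by
  induction b, hab using Int.leInduction with
  | base => simp
  | succ b hb ih =>
    have : Finset.Ico a (b + 1) = insert b (Finset.Ico a b) := by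
      ext x; simp only [Finset.mem_Ico, Finset.mem_insert]; omega
    rw [this, Finset.sum_insert (by simp), ih, ← h b]
    ring

/-! ### The algebra of piecewise quasipolynomial functions on an abelian group -/

section Alg

variable {G H : Type} [AddCommGroup G] [AddCommGroup H]

/-- Generators: periodic functions, linear forms, indicators of open half spaces. -/
def gens (G : Type) [AddCommGroup G] : Set (G → ℚ) :=
  {f | (∃ N : ℤ, 0 < N ∧ ∀ x v, f (x + N • v) = f x) ∨
    (∃ L : G →+ ℤ, f = fun x => (L x : ℚ)) ∨
    (∃ L : G →+ ℤ, f = fun x => if 0 < L x then 1 else 0)}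

/-- The algebra generated by `gens`. -/
def PQ (G : Type) [AddCommGroup G] : Subalgebra ℚ (G → ℚ) := Algebra.adjoin ℚ (gens G)

lemma PQ.periodic {f : G → ℚ} (N : ℤ) (hN : 0 < N) (h : ∀ x v, f (x + N • v) = f x) :
    f ∈ PQ G := Algebra.subset_adjoin (Or.inl ⟨N, hN, h⟩)

lemma PQ.lin (L : G →+ ℤ) : (fun x => (L x : ℚ)) ∈ PQ G :=
  Algebra.subset_adjoin (Or.inr (Or.inl ⟨L, rfl⟩))

lemma PQ.pos (L : G →+ ℤ) : (fun x => if 0 < L x then (1 : ℚ) else 0) ∈ PQ G :=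
  Algebra.subset_adjoin (Or.inr (Or.inr ⟨L, rfl⟩))

lemma PQ.const (c : ℚ) : (fun _ => c) ∈ PQ G := (PQ G).algebraMap_mem c

lemma PQ.add {f g : G → ℚ} (hf : f ∈ PQ G) (hg : g ∈ PQ G) : (fun x => f x + g x) ∈ PQ G :=
  (PQ G).add_mem hf hg

lemma PQ.mul {f g : G → ℚ} (hf : f ∈ PQ G) (hg : g ∈ PQ G) : (fun x => f x * g x) ∈ PQ G :=
  (PQ G).mul_mem hf hg

lemma PQ.sub {f g : G → ℚ} (hf : f ∈ PQ G) (hg : g ∈ PQ G) : (fun x => f x - g x) ∈ PQ G :=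
  (PQ G).sub_mem hf hg

lemma PQ.sum {ι : Type*} (s : Finset ι) {f : ι → G → ℚ} (hf : ∀ i ∈ s, f i ∈ PQ G) :
    (fun x => ∑ i ∈ s, f i x) ∈ PQ G := by
  have := (PQ G).sum_mem hf
  convert this using 1
  ext x; simp

lemma PQ.comp (φ : H →+ G) {f : G → ℚ} (hf : f ∈ PQ G) : (fun x => f (φ x)) ∈ PQ H := by
  induction hf using Algebra.adjoin_induction with
  | mem f hf =>
    rcases hf with ⟨N, hN, h⟩ | ⟨L, rfl⟩ | ⟨L, rfl⟩
    · exact PQ.periodic N hN fun x v => by simp [h]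
    · exact PQ.lin (L.comp φ)
    · exact PQ.pos (L.comp φ)
  | algebraMap r => exact PQ.const r
  | add f g _ _ hf hg => exact PQ.add hf hg
  | mul f g _ _ hf hg => exact PQ.mul hf hg

lemma PQ.poly (P : Polynomial ℚ) {f : G → ℚ} (hf : f ∈ PQ G) :
    (fun x => P.eval (f x)) ∈ PQ G := by
  induction P using Polynomial.induction_on' with
  | add p q hp hq => simpa using PQ.add hp hq
  | monomial n a =>
    simpa using PQ.mul (PQ.const a) (show (fun x => f x ^ n) ∈ PQ G from (PQ G).pow_mem hf n)

lemma PQ.floor (L : G →+ ℤ) (e D : ℤ) (hD : 0 < D) :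
    (fun x => (((L x + e) / D : ℤ) : ℚ)) ∈ PQ G := by
  have h1 : (fun x => (((L x + e) % D : ℤ) : ℚ)) ∈ PQ G :=
    PQ.periodic D hD fun x v => by
      rw [map_add, map_zsmul, smul_eq_mul,
        show L x + D * L v + e = L x + e + D * L v by ring, Int.add_mul_emod_self_left]
  have h2 := PQ.mul (PQ.sub (PQ.add (PQ.lin L) (PQ.const (e : ℚ))) h1) (PQ.const (1 / (D : ℚ)))
  convert h2 using 1
  ext x
  have hD0 : (D : ℚ) ≠ 0 := by exact_mod_cast hD.ne'
  have e3 : ((L x : ℤ) : ℚ) + e = (((L x + e) % D : ℤ) : ℚ) + D * (((L x + e) / D : ℤ) : ℚ) := by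
    exact_mod_cast (Int.emod_add_mul_ediv (L x + e) D).symm
  rw [e3]
  field_simp
  ring

lemma PQ.qp_floor {T : ℤ → ℚ} (hT : QP T) (L : G →+ ℤ) (e D : ℤ) (hD : 0 < D) :
    (fun x => T ((L x + e) / D)) ∈ PQ G := by
  obtain ⟨N, hN, P, hP⟩ := hT
  have h : ∀ c ∈ Finset.Ico 0 N, (fun x => (if (L x + e) / D % N = c then (1 : ℚ) else 0) *
      (P c).eval ((((L x + e) / D : ℤ) : ℚ))) ∈ PQ G := by
    intro c _
    refine PQ.mul (PQ.periodic (D * N) (mul_pos hD hN) fun x v => ?_) 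
      (PQ.poly (P c) (PQ.floor L e D hD))
    rw [map_add, map_zsmul, smul_eq_mul,
        show L x + D * N * L v + e = L x + e + D * (N * L v) by ring,
        Int.add_mul_ediv_left _ _ hD.ne', Int.add_mul_emod_self_left]
  convert PQ.sum _ h using 1
  ext x
  rw [hP, Finset.sum_eq_single ((L x + e) / D % N)]
  · simp
  · intro c _ hc
    simp [hc.symm]
  · intro h
    exact absurd (Finset.mem_Ico.mpr ⟨Int.emod_nonneg _ hN.ne', Int.emod_lt_of_pos _ hN⟩) h

/-! ### Definable predicates -/

open Classical in
/-- Predicates whose indicator is piecewise quasipolynomial. -/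
def Dfn (p : G → Prop) : Prop := (fun x => if p x then (1 : ℚ) else 0) ∈ PQ G

lemma Dfn.pos (L : G →+ ℤ) : Dfn (fun x => 0 < L x) := by
  unfold Dfn
  convert PQ.pos L

lemma Dfn.not {p : G → Prop} (h : Dfn p) : Dfn (fun x => ¬ p x) := by
  unfold Dfn at *
  convert PQ.sub (PQ.const 1) h using 2 with x
  by_cases p x <;> simp [*]

lemma Dfn.and {p r : G → Prop} (h : Dfn p) (h' : Dfn r) : Dfn (fun x => p x ∧ r x) := by
  unfold Dfn at *
  convert PQ.mul h h' using 2 with x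
  by_cases p x <;> by_cases r x <;> simp [*]

lemma Dfn.or {p r : G → Prop} (h : Dfn p) (h' : Dfn r) : Dfn (fun x => p x ∨ r x) := by
  convert (h.not.and h'.not).not using 2 with x
  tauto

lemma Dfn.imp {p r : G → Prop} (h : Dfn p) (h' : Dfn r) : Dfn (fun x => p x → r x) := by
  convert h.not.or h' using 2 with x
  tauto

lemma Dfn.const (p : Prop) : Dfn (fun _ : G => p) := by
  unfold Dfn
  exact PQ.const _

lemma Dfn.all {ι : Type*} (s : Finset ι) {p : ι → G → Prop} (h : ∀ i ∈ s, Dfn (p i)) :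
    Dfn (fun x => ∀ i ∈ s, p i x) := by
  classical
  induction s using Finset.induction_on with
  | empty => simpa using Dfn.const True
  | insert a s ha ih =>
    simp only [Finset.forall_mem_insert] at h ⊢
    exact h.1.and (ih h.2)

lemma Dfn.ex {ι : Type*} (s : Finset ι) {p : ι → G → Prop} (h : ∀ i ∈ s, Dfn (p i)) :
    Dfn (fun x => ∃ i ∈ s, p i x) := by
  convert (Dfn.all s fun i hi => (h i hi).not).not using 2 with x
  push Not
  rfl

lemma Dfn.ne_zero (L : G →+ ℤ) : Dfn (fun x => L x ≠ 0) := by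
  convert (Dfn.pos L).or (Dfn.pos (-L)) using 2 with x
  simp only [AddMonoidHom.neg_apply]
  omega

lemma Dfn.comp (φ : H →+ G) {p : G → Prop} (h : Dfn p) : Dfn (fun x => p (φ x)) := by
  unfold Dfn at *
  exact PQ.comp φ h

end Alg


/-! ### Summing out a variable -/

section Summation

variable {G : Type} [AddCommGroup G]

/-- Spanning elements. -/
def atoms (G : Type) [AddCommGroup G] : Set (G × ℤ → ℚ) :=
  {w | ∃ a ∈ PQ G, ∃ τ : ℤ → ℚ, QP τ ∧ ∃ (b : ℤ) (L : G →+ ℤ) (e : ℤ), 0 < b ∧ (e = 0 ∨ e = 1) ∧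
    w = fun x => a x.1 * τ x.2 * (if L x.1 - e < b * x.2 then 1 else 0)}

/-- The span of the atoms. -/
def W (G : Type) [AddCommGroup G] : Submodule ℚ (G × ℤ → ℚ) := Submodule.span ℚ (atoms G)

lemma W.atom {a : G → ℚ} (ha : a ∈ PQ G) {τ : ℤ → ℚ} (hτ : QP τ) (b : ℤ) (L : G →+ ℤ) (e : ℤ)
    (hb : 0 < b) (he : e = 0 ∨ e = 1) :
    (fun x : G × ℤ => a x.1 * τ x.2 * (if L x.1 - e < b * x.2 then 1 else 0)) ∈ W G :=
  Submodule.subset_span ⟨a, ha, τ, hτ, b, L, e, hb, he, rfl⟩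

/-- Key product rule. -/
lemma prod_rule (b₁ b₂ l₁ l₂ e₁ e₂ y : ℤ) (hb₁ : 0 < b₁) (hb₂ : 0 < b₂) (he₁ : e₁ = 0 ∨ e₁ = 1)
    (he₂ : e₂ = 0 ∨ e₂ = 1) :
    ((if l₁ - e₁ < b₁ * y then 1 else 0) * (if l₂ - e₂ < b₂ * y then 1 else 0) : ℚ) =
      (if 0 < b₂ * l₁ - b₁ * l₂ then 1 else 0) * (if l₁ - e₁ < b₁ * y then 1 else 0) +
      (if 0 < b₁ * l₂ - b₂ * l₁ then 1 else 0) * (if l₂ - e₂ < b₂ * y then 1 else 0) +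
      (1 - (if 0 < b₂ * l₁ - b₁ * l₂ then 1 else 0)) *
        (1 - (if 0 < b₁ * l₂ - b₂ * l₁ then 1 else 0)) *
        (if l₁ - min e₁ e₂ < b₁ * y then 1 else 0) := by
  have k1 : 0 < b₂ * l₁ - b₁ * l₂ → l₁ - e₁ < b₁ * y → l₂ - e₂ < b₂ * y := by
    intro h h'
    have h1 : l₁ ≤ b₁ * y := by omega
    have h2 : b₂ * l₁ ≤ b₂ * (b₁ * y) := mul_le_mul_of_nonneg_left h1 hb₂.le
    have h3 : b₁ * l₂ < b₁ * (b₂ * y) := by linarith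
    have h4 : l₂ < b₂ * y := lt_of_mul_lt_mul_left h3 hb₁.le
    omega
  have k2 : 0 < b₁ * l₂ - b₂ * l₁ → l₂ - e₂ < b₂ * y → l₁ - e₁ < b₁ * y := by
    intro h h'
    have h1 : l₂ ≤ b₂ * y := by omega
    have h2 : b₁ * l₂ ≤ b₁ * (b₂ * y) := mul_le_mul_of_nonneg_left h1 hb₁.le
    have h3 : b₂ * l₁ < b₂ * (b₁ * y) := by linarith
    have h4 : l₁ < b₁ * y := lt_of_mul_lt_mul_left h3 hb₂.le
    omega
  by_cases c1 : 0 < b₂ * l₁ - b₁ * l₂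
  · have c2 : ¬ 0 < b₁ * l₂ - b₂ * l₁ := by linarith
    by_cases c3 : l₁ - e₁ < b₁ * y
    · simp only [c1, c2, c3, k1 c1 c3, if_true, if_false]; ring
    · simp only [c1, c2, c3, if_true, if_false]; ring
  · by_cases c2 : 0 < b₁ * l₂ - b₂ * l₁
    · by_cases c3 : l₂ - e₂ < b₂ * y
      · simp only [c1, c2, c3, k2 c2 c3, if_true, if_false]; ring
      · simp only [c1, c2, c3, if_true, if_false]; ring
    · have heq : b₁ * l₂ = b₂ * l₁ := by linarith
      have q1 : l₁ < b₁ * y ↔ l₂ < b₂ * y := by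
        rw [← mul_lt_mul_iff_right₀ hb₂, ← heq, show b₂ * (b₁ * y) = b₁ * (b₂ * y) by ring,
          mul_lt_mul_iff_right₀ hb₁]
      have q2 : l₁ ≤ b₁ * y ↔ l₂ ≤ b₂ * y := by
        rw [← mul_le_mul_iff_right₀ hb₂, ← heq, show b₂ * (b₁ * y) = b₁ * (b₂ * y) by ring,
          mul_le_mul_iff_right₀ hb₁]
      have q3 : (l₁ - min e₁ e₂ < b₁ * y) ↔ (l₁ - e₁ < b₁ * y ∧ l₂ - e₂ < b₂ * y) := by
        rcases he₁ with rfl | rfl <;> rcases he₂ with rfl | rfl <;> simp <;> omega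
      simp only [c1, c2, q3, if_false]
      by_cases c3 : l₁ - e₁ < b₁ * y <;> by_cases c4 : l₂ - e₂ < b₂ * y <;> simp [*]

lemma W.mul_ind (b : ℤ) (L : G →+ ℤ) (e : ℤ) (hb : 0 < b) (he : e = 0 ∨ e = 1)
    {w : G × ℤ → ℚ} (hw : w ∈ W G) :
    (fun x => (if L x.1 - e < b * x.2 then 1 else 0) * w x) ∈ W G := by
  induction hw using Submodule.span_induction with
  | mem w hw =>
    obtain ⟨a, ha, τ, hτ, b', L', e', hb', he', rfl⟩ := hw
    have hm : min e e' = 0 ∨ min e e' = 1 := by omega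
    have p1 := PQ.pos (b' • L - b • L')
    have p2 := PQ.pos (b • L' - b' • L)
    have h1 := W.atom (PQ.mul p1 ha) hτ b L e hb he
    have h2 := W.atom (PQ.mul p2 ha) hτ b' L' e' hb' he'
    have h3 := W.atom (PQ.mul (PQ.mul (PQ.sub (PQ.const 1) p1) (PQ.sub (PQ.const 1) p2)) ha)
      hτ b L (min e e') hb hm
    convert (W G).add_mem ((W G).add_mem h1 h2) h3 using 1
    ext x
    have := prod_rule b b' (L x.1) (L' x.1) e e' x.2 hb hb' he he'
    rw [show b' * L x.1 - b * L' x.1 = (b' • L - b • L') x.1 by simp,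
      show b * L' x.1 - b' * L x.1 = (b • L' - b' • L) x.1 by simp] at this
    simp only [Pi.add_apply]
    linear_combination (a x.1 * τ x.2) * this
  | zero => convert (W G).zero_mem using 1; ext; simp
  | add f g _ _ hf hg =>
    convert (W G).add_mem hf hg using 1; ext; simp only [Pi.add_apply]; ring
  | smul c f _ hf =>
    convert (W G).smul_mem c hf using 1; ext; simp only [Pi.smul_apply, smul_eq_mul]; ring

lemma W.mul_sep {a : G → ℚ} (ha : a ∈ PQ G) {τ : ℤ → ℚ} (hτ : QP τ)
    {w : G × ℤ → ℚ} (hw : w ∈ W G) :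
    (fun x => a x.1 * τ x.2 * w x) ∈ W G := by
  induction hw using Submodule.span_induction with
  | mem w hw =>
    obtain ⟨a', ha', τ', hτ', b', L', e', hb', he', rfl⟩ := hw
    convert W.atom (PQ.mul ha ha') (hτ.mul hτ') b' L' e' hb' he' using 1
    ext; ring
  | zero => convert (W G).zero_mem using 1; ext; simp
  | add f g _ _ hf hg =>
    convert (W G).add_mem hf hg using 1; ext; simp only [Pi.add_apply]; ring
  | smul c f _ hf =>
    convert (W G).smul_mem c hf using 1; ext; simp only [Pi.smul_apply, smul_eq_mul]; ring

lemma hom_split (L : G × ℤ →+ ℤ) (g : G) (y : ℤ) :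
    L (g, y) = (L.comp (AddMonoidHom.inl G ℤ)) g + L (0, 1) * y := by
  have : ((g, y) : G × ℤ) = (g, 0) + y • (0, 1) := by ext <;> simp
  rw [this, map_add, map_zsmul]
  simp [mul_comm]

lemma W.mul_PQ {F : G × ℤ → ℚ} (hF : F ∈ PQ (G × ℤ)) :
    ∀ w ∈ W G, (fun x => F x * w x) ∈ W G := by
  induction hF using Algebra.adjoin_induction with
  | mem f hf =>
    intro w hw
    rcases hf with ⟨N, hN, h⟩ | ⟨L, rfl⟩ | ⟨L, rfl⟩
    · have hs : ∀ c ∈ Finset.Ico 0 N, (fun x : G × ℤ =>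
          f (x.1, c) * (if x.2 % N = c then 1 else 0) * w x) ∈ W G := by
        intro c _
        refine W.mul_sep (a := fun g => f (g, c)) (PQ.periodic N hN fun g v => ?_)
          (QP.periodic N hN fun r => if r = c then 1 else 0) hw
        rw [← h (g, c) (v, 0)]; simp
      convert (W G).sum_mem hs using 1
      ext ⟨g, y⟩
      rw [Finset.sum_apply, Finset.sum_eq_single (y % N)]
      · have e : ((g, y) : G × ℤ) = (g, y % N) + N • (0, y / N) := by
          ext
          · simp
          · simp [Int.emod_add_mul_ediv]
        simp only [if_true, mul_one]
        conv_lhs => rw [e, h]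
        rw [← e]
      · intro c _ hc
        simp [hc.symm]
      · intro h
        exact absurd (Finset.mem_Ico.mpr ⟨Int.emod_nonneg _ hN.ne', Int.emod_lt_of_pos _ hN⟩) h
    · have h1 := W.mul_sep (PQ.lin (L.comp (AddMonoidHom.inl G ℤ))) (QP.const 1) hw
      have h2 := W.mul_sep (PQ.const (G := G) (L (0, 1) : ℚ)) QP.id hw
      convert (W G).add_mem h1 h2 using 1
      ext ⟨g, y⟩
      have := hom_split L g y
      simp only [Pi.add_apply]
      rw [this]
      push_cast
      ring
    · set β := L (0, 1) with hβ
      set L1 := L.comp (AddMonoidHom.inl G ℤ) with hL1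
      rcases lt_trichotomy β 0 with hb | hb | hb
      · have h1 := W.mul_ind (-β) L1 1 (by omega) (Or.inr rfl) hw
        convert (W G).sub_mem hw h1 using 1
        ext ⟨g, y⟩
        simp only
        rw [hom_split L g y, ← hβ, ← hL1]
        simp only [Pi.sub_apply]
        by_cases hc : 0 < L1 g + β * y
        · have : ¬ L1 g - 1 < -β * y := by linarith
          simp only [hc, this, if_true, if_false]; ring
        · have : L1 g - 1 < -β * y := by linarith
          simp only [hc, this, if_true, if_false]; ring
      · convert W.mul_sep (PQ.pos L1) (QP.const 1) hw using 1
        ext ⟨g, y⟩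
        simp only
        rw [hom_split L g y, ← hβ, ← hL1, hb]
        simp
      · convert W.mul_ind β (-L1) 0 hb (Or.inl rfl) hw using 1
        ext ⟨g, y⟩
        simp only
        rw [hom_split L g y, ← hβ, ← hL1]
        congr 1
        simp only [AddMonoidHom.neg_apply]
        exact if_congr (by constructor <;> intro <;> linarith) rfl rfl
  | algebraMap r => intro w hw; exact (W G).smul_mem r hw
  | add f g _ _ hf hg =>
    intro w hw
    convert (W G).add_mem (hf w hw) (hg w hw) using 1
    ext; simp only [Pi.add_apply]; ring
  | mul f g _ _ hf hg =>
    intro w hw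
    convert hf _ (hg w hw) using 1
    ext; simp only [Pi.mul_apply]; ring

lemma W.sum_mem' (ℓ : G →+ ℤ) {w : G × ℤ → ℚ} (hw : w ∈ W G) :
    (fun g => ∑ y ∈ Finset.Ico 0 (ℓ g), w (g, y)) ∈ PQ G := by
  induction hw using Submodule.span_induction with
  | mem w hw =>
    obtain ⟨a, ha, τ, hτ, b, L, e, hb, he, rfl⟩ := hw
    obtain ⟨T, hT, hTd⟩ := hτ.antidiff
    have t1 : (fun g => T (ℓ g)) ∈ PQ G := by
      simpa using PQ.qp_floor hT ℓ 0 1 one_pos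
    have t2 : (fun g => T ((L g + (b - e)) / b)) ∈ PQ G := PQ.qp_floor hT L (b - e) b hb
    have r1 := PQ.mul (PQ.mul (PQ.pos ℓ) (PQ.pos (-L))) (PQ.sub t1 (PQ.const (T 0)))
    have r2 := PQ.mul (PQ.mul (PQ.sub (PQ.const 1) (PQ.pos (-L))) (PQ.pos (b • ℓ - L)))
      (PQ.sub t1 t2)
    convert PQ.mul ha (PQ.add r1 r2) using 1
    ext g
    simp only [mul_assoc]
    rw [← Finset.mul_sum]
    congr 1
    simp only [AddMonoidHom.sub_apply, AddMonoidHom.smul_apply, smul_eq_mul, AddMonoidHom.neg_apply]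
    simp only [mul_ite, mul_one, mul_zero]
    rw [← Finset.sum_filter]
    by_cases hL : L g < 0
    · have hL' : 0 < - L g := by omega
      have hf : (Finset.Ico 0 (ℓ g)).filter (fun y => L g - e < b * y) = Finset.Ico 0 (ℓ g) := by
        apply Finset.filter_true_of_mem
        intro y hy
        rw [Finset.mem_Ico] at hy
        have := mul_nonneg hb.le hy.1
        omega
      rw [hf]
      simp only [hL', if_true]
      by_cases h0 : 0 < ℓ g
      · rw [sum_antidiff hTd _ _ h0.le]; simp [h0]
      · rw [Finset.Ico_eq_empty (by omega)]; simp [h0]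
    · have hL' : ¬ 0 < - L g := by omega
      simp only [hL', if_false]
      have hiff : ∀ y, L g - e < b * y ↔ (L g + (b - e)) / b ≤ y := by
        intro y
        rw [← Int.lt_add_one_iff, Int.ediv_lt_iff_lt_mul hb]
        constructor <;> intro h <;> linarith
      by_cases hc : 0 < b * ℓ g - L g
      · have h0 : 0 ≤ (L g + (b - e)) / b := Int.ediv_nonneg (by omega) hb.le
        have h1 : (L g + (b - e)) / b ≤ ℓ g := by rw [← hiff]; omega
        have hf : (Finset.Ico 0 (ℓ g)).filter (fun y => L g - e < b * y) =
            Finset.Ico ((L g + (b - e)) / b) (ℓ g) := by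
          ext y
          rw [Finset.mem_filter, Finset.mem_Ico, Finset.mem_Ico, hiff]
          omega
        rw [hf, sum_antidiff hTd _ _ h1]
        simp only [hc, if_true]; ring
      · have hf : (Finset.Ico 0 (ℓ g)).filter (fun y => L g - e < b * y) = ∅ := by
          apply Finset.filter_false_of_mem
          intro y hy
          rw [Finset.mem_Ico] at hy
          have : b * (y + 1) ≤ b * ℓ g := mul_le_mul_of_nonneg_left (by omega) hb.le
          have : b * (y + 1) = b * y + b := by ring
          omega
        rw [hf]
        simp only [hc, if_false, Finset.sum_empty]; ring
  | zero => simpa using PQ.const (G := G) 0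
  | add f g _ _ hf hg =>
    simpa [Finset.sum_add_distrib] using PQ.add hf hg
  | smul c f _ hf =>
    simpa [Finset.mul_sum] using PQ.mul (PQ.const c) hf

theorem PQ.sum_Ico_zero (ℓ : G →+ ℤ) {F : G × ℤ → ℚ} (hF : F ∈ PQ (G × ℤ)) :
    (fun g => ∑ y ∈ Finset.Ico 0 (ℓ g), F (g, y)) ∈ PQ G := by
  have h0 := W.atom (PQ.const (G := G) 1) (QP.const 1) 1 0 1 one_pos (Or.inr rfl)
  convert W.sum_mem' ℓ (W.mul_PQ hF _ h0) using 1
  ext g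
  refine Finset.sum_congr rfl fun y hy => ?_
  rw [Finset.mem_Ico] at hy
  have : (-1 : ℤ) < y := by omega
  simp [this]

theorem PQ.sum_Ico (ℓ : G →+ ℤ) {F : G × ℤ → ℚ} (hF : F ∈ PQ (G × ℤ)) :
    (fun g => ∑ y ∈ Finset.Ico (-ℓ g) (ℓ g), F (g, y)) ∈ PQ G := by
  let φ : G × ℤ →+ G × ℤ := (AddMonoidHom.fst G ℤ).prod
    (AddMonoidHom.snd G ℤ - ℓ.comp (AddMonoidHom.fst G ℤ))
  convert PQ.sum_Ico_zero (ℓ + ℓ) (PQ.comp φ hF) using 1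
  ext g
  refine Finset.sum_nbij' (fun y => y + ℓ g) (fun y => y - ℓ g) ?_ ?_ ?_ ?_ ?_
  · intro y; simp only [Finset.mem_Ico, AddMonoidHom.add_apply]; omega
  · intro y; simp only [Finset.mem_Ico, AddMonoidHom.add_apply]; omega
  · intro y _; simp
  · intro y _; simp
  · intro y _; simp [φ]

theorem PQ.sum_sq (ℓ : G →+ ℤ) {F : G × (ℤ × ℤ) → ℚ} (hF : F ∈ PQ (G × (ℤ × ℤ))) :
    (fun g => ∑ z ∈ Finset.Ico (-ℓ g) (ℓ g) ×ˢ Finset.Ico (-ℓ g) (ℓ g), F (g, z)) ∈ PQ G := by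
  let φ : (G × ℤ) × ℤ →+ G × (ℤ × ℤ) := AddEquiv.prodAssoc.toAddMonoidHom
  have h := PQ.sum_Ico ℓ (PQ.sum_Ico (ℓ.comp (AddMonoidHom.fst G ℤ)) (PQ.comp φ hF))
  convert h using 1
  ext g
  rw [Finset.sum_product]
  rfl

/-- The box of tuples. -/
noncomputable def bx (k : ℕ) (r : ℤ) : Finset (Fin k → ℤ × ℤ) :=
  Fintype.piFinset fun _ => Finset.Ico (-r) r ×ˢ Finset.Ico (-r) r

theorem PQ.sum_bx (k : ℕ) : ∀ {G : Type} [AddCommGroup G] (ℓ : G →+ ℤ)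
    {F : G × (Fin k → ℤ × ℤ) → ℚ}, F ∈ PQ (G × (Fin k → ℤ × ℤ)) →
    (fun g => ∑ z ∈ bx k (ℓ g), F (g, z)) ∈ PQ G := by
  induction k with
  | zero =>
    intro G _ ℓ F hF
    let φ : G →+ G × (Fin 0 → ℤ × ℤ) := AddMonoidHom.inl _ _
    convert PQ.comp φ hF using 1
    ext g
    simp only [bx]
    rw [Finset.sum_eq_single (0 : Fin 0 → ℤ × ℤ)]
    · rfl
    · intro b _ hb; exact absurd (Subsingleton.elim _ _) hb
    · intro h; exact absurd (Fintype.mem_piFinset.mpr fun i => i.elim0) h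
  | succ k ih =>
    intro G _ ℓ F hF
    let φ : (G × (ℤ × ℤ)) × (Fin k → ℤ × ℤ) →+ G × (Fin (k + 1) → ℤ × ℤ) :=
      { toFun := fun x => (x.1.1, Fin.cons x.1.2 x.2)
        map_zero' := by
          ext i
          · rfl
          all_goals refine Fin.cases ?_ (fun i => ?_) i <;> simp
        map_add' := fun x y => by
          ext i
          · rfl
          all_goals refine Fin.cases ?_ (fun i => ?_) i <;> simp }
    have h := PQ.sum_sq ℓ (ih (ℓ.comp (AddMonoidHom.fst G (ℤ × ℤ))) (PQ.comp φ hF))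
    convert h using 1
    ext g
    change _ = ∑ z ∈ Finset.Ico (-ℓ g) (ℓ g) ×ˢ Finset.Ico (-ℓ g) (ℓ g),
      ∑ z' ∈ bx k (ℓ g), F (g, Fin.cons z z')
    rw [← Finset.sum_product' _ _ (fun z z' => F (g, Fin.cons z z'))]
    refine Finset.sum_nbij' (fun z => (z 0, Fin.tail z)) (fun z => Fin.cons z.1 z.2) ?_ ?_ ?_ ?_ ?_
    · intro z hz
      simp only [bx, Fintype.mem_piFinset] at hz
      simp only [Finset.mem_product (s := _ ×ˢ _), bx, Fintype.mem_piFinset]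
      exact ⟨hz 0, fun i => hz i.succ⟩
    · intro z hz
      simp only [Finset.mem_product (s := _ ×ˢ _), bx, Fintype.mem_piFinset] at hz
      simp only [bx, Fintype.mem_piFinset]
      refine Fin.cases ?_ (fun i => ?_)
      · exact hz.1
      · exact hz.2 i
    · intro z _; exact Fin.cons_self_tail z
    · intro z _; simp
    · intro z _
      change F (g, z) = F (g, Fin.cons (z 0) (Fin.tail z))
      rw [Fin.cons_self_tail]

end Summation

/-- Functions in the algebra over `ℤ` are quasipolynomial on positive integers. -/
lemma PQ.qp {F : ℤ → ℚ} (hF : F ∈ PQ ℤ) : ∃ τ, QP τ ∧ ∀ t, 0 < t → F t = τ t := by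
  have hlin : ∀ (L : ℤ →+ ℤ) (t : ℤ), L t = t * L 1 := fun L t => by
    conv_lhs => rw [show t = t • (1 : ℤ) by simp, map_zsmul, smul_eq_mul]
  induction hF using Algebra.adjoin_induction with
  | mem f hf =>
    rcases hf with ⟨N, hN, h⟩ | ⟨L, rfl⟩ | ⟨L, rfl⟩
    · refine ⟨_, QP.periodic N hN f, fun t _ => ?_⟩
      conv_lhs => rw [← Int.emod_add_mul_ediv t N, ← smul_eq_mul, h]
    · exact ⟨_, QP.id.mul (QP.const (L 1 : ℚ)), fun t _ => by simp only; rw [hlin]; push_cast; rfl⟩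
    · refine ⟨_, QP.const (if 0 < L 1 then 1 else 0), fun t ht => ?_⟩
      simp only
      exact if_congr (by rw [hlin, mul_pos_iff_of_pos_left ht]) rfl rfl
  | algebraMap r => exact ⟨_, QP.const r, fun _ _ => rfl⟩
  | add f g _ _ hf hg =>
    obtain ⟨a, ha, h1⟩ := hf
    obtain ⟨b, hb, h2⟩ := hg
    exact ⟨_, ha.add hb, fun t ht => by simp [h1 t ht, h2 t ht]⟩
  | mul f g _ _ hf hg =>
    obtain ⟨a, ha, h1⟩ := hf
    obtain ⟨b, hb, h2⟩ := hg
    exact ⟨_, ha.mul hb, fun t ht => by simp [h1 t ht, h2 t ht]⟩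


/-! ### The interior of a polygon -/

section Geometry

/-- The two-dimensional determinant. -/
def det2 (a b : ℝ × ℝ) : ℝ := a.1 * b.2 - a.2 * b.1

lemma interior_not_halfplane (V : Finset (ℝ × ℝ)) (x a : ℝ × ℝ) (ha : a ≠ 0)
    (hx : x ∈ interior (convexHull ℝ (V : Set (ℝ × ℝ)))) :
    ∃ w ∈ V, 0 < det2 a (w - x) := by
  by_contra! hcon
  have hsub : convexHull ℝ (V : Set (ℝ × ℝ)) ⊆ {y | det2 a (y - x) ≤ 0} := by
    refine convexHull_min (fun w hw => hcon w hw) ?_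
    intro y hy z hz s t hs ht hst
    simp only [Set.mem_ofPred_eq, det2, Prod.fst_sub, Prod.snd_sub, Prod.fst_add, Prod.snd_add,
      Prod.smul_fst, Prod.smul_snd, smul_eq_mul] at *
    have h1 := mul_nonpos_of_nonneg_of_nonpos hs hy
    have h2 := mul_nonpos_of_nonneg_of_nonpos ht hz
    have : t = 1 - s := by linarith
    subst this
    linarith
  have hcont : Continuous fun ε : ℝ => x + ε • ((-a.2, a.1) : ℝ × ℝ) := by fun_prop
  have hopen : IsOpen ((fun ε : ℝ => x + ε • ((-a.2, a.1) : ℝ × ℝ)) ⁻¹'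
      interior (convexHull ℝ (V : Set (ℝ × ℝ)))) := isOpen_interior.preimage hcont
  obtain ⟨δ, hδ, hball⟩ := Metric.isOpen_iff.mp hopen 0 (by rw [Set.mem_preimage, zero_smul, add_zero]; exact hx)
  have hmem : δ / 2 ∈ Metric.ball (0 : ℝ) δ := by
    rw [Metric.mem_ball, dist_zero_right, Real.norm_eq_abs, abs_of_pos (by linarith)]
    linarith
  have h3 := hsub (interior_subset (hball hmem))
  simp only [Set.mem_ofPred_eq, det2, add_sub_cancel_left, Prod.smul_fst, Prod.smul_snd,
    smul_eq_mul] at h3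
  have h4 : 0 < a.1 ^ 2 + a.2 ^ 2 := by
    by_contra hle
    apply ha
    have h1 : a.1 ^ 2 = 0 := by nlinarith [sq_nonneg a.1, sq_nonneg a.2]
    have h2 : a.2 ^ 2 = 0 := by nlinarith [sq_nonneg a.1, sq_nonneg a.2]
    exact Prod.ext (by simpa using h1) (by simpa using h2)
  nlinarith

lemma mem_interior_iff (V : Finset (ℝ × ℝ))
    (hne : (interior (convexHull ℝ (V : Set (ℝ × ℝ)))).Nonempty) (x : ℝ × ℝ) :
    x ∈ interior (convexHull ℝ (V : Set (ℝ × ℝ))) ↔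
      ∀ v ∈ V, v ≠ x → (∃ w ∈ V, 0 < det2 (v - x) (w - x)) ∧
        (∃ w ∈ V, det2 (v - x) (w - x) < 0) := by
  constructor
  · intro hx v _ hvx
    refine ⟨interior_not_halfplane V x (v - x) (sub_ne_zero.mpr hvx) hx, ?_⟩
    obtain ⟨w, hw, h⟩ := interior_not_halfplane V x (-(v - x))
      (neg_ne_zero.mpr (sub_ne_zero.mpr hvx)) hx
    refine ⟨w, hw, ?_⟩
    simp only [det2, Prod.fst_neg, Prod.snd_neg] at h ⊢
    linarith
  · intro h
    by_contra hx
    have hconv : Convex ℝ (convexHull ℝ (V : Set (ℝ × ℝ))) := convex_convexHull _ _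
    obtain ⟨f, hf⟩ := geometric_hahn_banach_open_point hconv.interior isOpen_interior hx
    have hle : ∀ v ∈ V, f v ≤ f x := by
      intro v hv
      have h1 : v ∈ closure (interior (convexHull ℝ (V : Set (ℝ × ℝ)))) := by
        rw [hconv.closure_interior_eq_closure_of_nonempty_interior hne]
        exact subset_closure (subset_convexHull _ _ hv)
      have h2 : closure (interior (convexHull ℝ (V : Set (ℝ × ℝ)))) ⊆ {y | f y ≤ f x} :=
        closure_minimal (fun y hy => (hf y hy).le) (isClosed_le f.continuous continuous_const)
      exact h2 h1
    obtain ⟨p, hp⟩ : ∃ p, p = f (1, 0) := ⟨_, rfl⟩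
    obtain ⟨r, hr⟩ : ∃ r, r = f (0, 1) := ⟨_, rfl⟩
    have hfe : ∀ y : ℝ × ℝ, f y = p * y.1 + r * y.2 := by
      intro y
      have : y = y.1 • ((1, 0) : ℝ × ℝ) + y.2 • ((0, 1) : ℝ × ℝ) := by ext <;> simp
      conv_lhs => rw [this, map_add, map_smul, map_smul, ← hp, ← hr]
      simp [mul_comm]
    have hpr : 0 < p ^ 2 + r ^ 2 := by
      obtain ⟨y, hy⟩ := hne
      have h1 := hf y hy
      by_contra hle
      have h2 : p ^ 2 = 0 := by nlinarith [sq_nonneg p, sq_nonneg r]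
      have h3 : r ^ 2 = 0 := by nlinarith [sq_nonneg p, sq_nonneg r]
      have h2' : p = 0 := by simpa using h2
      have h3' : r = 0 := by simpa using h3
      rw [hfe, hfe, h2', h3'] at h1
      simp at h1
    obtain ⟨s, hs⟩ : ∃ s : ℝ × ℝ → ℝ, ∀ v, s v = -(p * (v - x).1 + r * (v - x).2) := ⟨_, fun _ => rfl⟩
    obtain ⟨g, hg⟩ : ∃ g : ℝ × ℝ → ℝ, ∀ v, g v = p * (v - x).2 - r * (v - x).1 := ⟨_, fun _ => rfl⟩
    have hs0 : ∀ v ∈ V, 0 ≤ s v := by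
      intro v hv
      have := hle v hv
      rw [hfe, hfe] at this
      rw [hs]; simp only [Prod.fst_sub, Prod.snd_sub]; linarith
    have hdet : ∀ v w, det2 (v - x) (w - x) * (p ^ 2 + r ^ 2) = s w * g v - s v * g w := by
      intro v w
      rw [hs, hs, hg, hg, det2]; ring
    have hsx : s x = 0 := by rw [hs]; simp
    have hgx : g x = 0 := by rw [hg]; simp
    by_cases hz : ∃ v ∈ V, v ≠ x ∧ s v = 0
    · obtain ⟨v, hv, hvx, hsv⟩ := hz
      obtain ⟨⟨w, hw, h1⟩, ⟨w', hw', h2⟩⟩ := h v hv hvx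
      have e1 := hdet v w
      have e2 := hdet v w'
      rw [hsv] at e1 e2
      have f1 := mul_pos h1 hpr
      have f2 := mul_neg_of_neg_of_pos h2 hpr
      have := hs0 w hw
      have := hs0 w' hw'
      rcases le_or_gt (g v) 0 with hgv | hgv <;> nlinarith
    · push Not at hz
      have hpos : ∀ v ∈ V, v ≠ x → 0 < s v := fun v hv hvx =>
        lt_of_le_of_ne (hs0 v hv) (hz v hv hvx).symm
      have hVne : (V.filter (· ≠ x)).Nonempty := by
        by_contra hemp
        rw [Finset.not_nonempty_iff_eq_empty, Finset.filter_eq_empty_iff] at hemp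
        push Not at hemp
        obtain ⟨y, hy⟩ := hne
        have hsub : convexHull ℝ (V : Set (ℝ × ℝ)) ⊆ {x} :=
          convexHull_min (fun v hv => hemp hv) (convex_singleton x)
        have : y = x := hsub (interior_subset hy)
        exact hx (this ▸ hy)
      obtain ⟨v, hv, hmax⟩ := Finset.exists_max_image _ (fun v => g v / s v) hVne
      rw [Finset.mem_filter] at hv
      obtain ⟨-, w, hw, h2⟩ := h v hv.1 hv.2
      have e2 := hdet v w
      have f2 := mul_neg_of_neg_of_pos h2 hpr
      by_cases hwx : w = x
      · rw [hwx, hsx, hgx] at e2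
        rw [hwx] at f2
        linarith
      · have := hmax w (Finset.mem_filter.mpr ⟨hw, hwx⟩)
        rw [div_le_div_iff₀ (hpos w hw hwx) (hpos v hv.1 hv.2)] at this
        linarith

lemma common_denom (V : Finset (ℝ × ℝ)) (hV : ∀ v ∈ V, ∃ a b : ℚ, v = ((a : ℝ), (b : ℝ))) :
    ∃ D : ℤ, 0 < D ∧ ∃ c : ℝ × ℝ → ℤ × ℤ, ∀ v ∈ V,
      (D : ℝ) * v.1 = (c v).1 ∧ (D : ℝ) * v.2 = (c v).2 := by
  have key : ∃ D : ℤ, 0 < D ∧ ∀ v ∈ V, ∃ c : ℤ × ℤ,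
      (D : ℝ) * v.1 = c.1 ∧ (D : ℝ) * v.2 = c.2 := by
    induction V using Finset.induction_on with
    | empty => exact ⟨1, one_pos, by simp⟩
    | insert v V _ ih =>
      obtain ⟨D, hD, hc⟩ := ih fun v hv => hV v (Finset.mem_insert_of_mem hv)
      obtain ⟨a, b, hab⟩ := hV v (Finset.mem_insert_self _ _)
      refine ⟨D * (a.den * b.den), by have := a.den_pos; have := b.den_pos; positivity, ?_⟩
      intro w hw
      rcases Finset.mem_insert.mp hw with rfl | hw
      · refine ⟨(D * b.den * a.num, D * a.den * b.num), ?_, ?_⟩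
        · have : (a : ℝ) * a.den = a.num := by exact_mod_cast Rat.mul_den_eq_num a
          rw [hab]; push_cast; rw [← this]; ring
        · have : (b : ℝ) * b.den = b.num := by exact_mod_cast Rat.mul_den_eq_num b
          rw [hab]; push_cast; rw [← this]; ring
      · obtain ⟨c, h1, h2⟩ := hc w hw
        refine ⟨(c.1 * (a.den * b.den), c.2 * (a.den * b.den)), ?_, ?_⟩
        · push_cast; rw [← h1]; ring
        · push_cast; rw [← h2]; ring
  obtain ⟨D, hD, h⟩ := key
  choose! c hc using h
  exact ⟨D, hD, c, hc⟩

/-- Linear forms on `ℤ × (ℤ × ℤ)`. -/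
def linf (α β γ : ℤ) : ℤ × (ℤ × ℤ) →+ ℤ :=
  α • AddMonoidHom.fst ℤ (ℤ × ℤ) +
    β • (AddMonoidHom.fst ℤ ℤ).comp (AddMonoidHom.snd ℤ (ℤ × ℤ)) +
    γ • (AddMonoidHom.snd ℤ ℤ).comp (AddMonoidHom.snd ℤ (ℤ × ℤ))

lemma linf_apply (α β γ t a b : ℤ) : linf α β γ (t, (a, b)) = α * t + β * a + γ * b := by
  simp [linf]

theorem dfn_interior (V : Finset (ℝ × ℝ)) (hV : ∀ v ∈ V, ∃ a b : ℚ, v = ((a : ℝ), (b : ℝ)))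
    (hne : (interior (convexHull ℝ (V : Set (ℝ × ℝ)))).Nonempty) :
    ∃ p : ℤ × (ℤ × ℤ) → Prop, Dfn p ∧ ∀ (t : ℤ) (z : ℤ × ℤ), 0 < t →
      (p (t, z) ↔ (((z.1 : ℝ), (z.2 : ℝ)) : ℝ × ℝ) ∈
        (t : ℝ) • interior (convexHull ℝ (V : Set (ℝ × ℝ)))) := by
  obtain ⟨D, hD, c, hc⟩ := common_denom V hV
  let K : ℝ × ℝ → ℝ × ℝ → (ℤ × (ℤ × ℤ) →+ ℤ) := fun v w =>
    linf ((c v).1 * (c w).2 - (c v).2 * (c w).1) (-D * ((c w).2 - (c v).2))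
      (-D * ((c v).1 - (c w).1))
  refine ⟨fun x => ∀ v ∈ V, (linf (c v).1 (-D) 0 x ≠ 0 ∨ linf (c v).2 0 (-D) x ≠ 0) →
    ((∃ w ∈ V, 0 < K v w x) ∧ (∃ w ∈ V, 0 < (-K v w) x)), ?_, ?_⟩
  · exact Dfn.all V fun v _ => ((Dfn.ne_zero _).or (Dfn.ne_zero _)).imp
      ((Dfn.ex V fun w _ => Dfn.pos _).and (Dfn.ex V fun w _ => Dfn.pos _))
  · rintro t ⟨z1, z2⟩ ht
    have htR : (0 : ℝ) < t := by exact_mod_cast ht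
    have hDR : (0 : ℝ) < D := by exact_mod_cast hD
    rw [Set.mem_smul_set_iff_inv_smul_mem₀ htR.ne', mem_interior_iff V hne]
    refine forall₂_congr fun v hv => ?_
    have hdet : ∀ w ∈ V, det2 (v - (t : ℝ)⁻¹ • ((z1 : ℝ), (z2 : ℝ)))
        (w - (t : ℝ)⁻¹ • ((z1 : ℝ), (z2 : ℝ))) * (D ^ 2 * t) = (K v w (t, (z1, z2)) : ℤ) := by
      intro w hw
      simp only [K, linf_apply]
      push_cast
      rw [← (hc v hv).1, ← (hc v hv).2, ← (hc w hw).1, ← (hc w hw).2]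
      simp only [det2, Prod.fst_sub, Prod.snd_sub, Prod.smul_fst, Prod.smul_snd, smul_eq_mul]
      field_simp
      ring
    have hpos : (0 : ℝ) < D ^ 2 * t := by positivity
    have h1 : (linf (c v).1 (-D) 0 (t, (z1, z2)) ≠ 0 ∨ linf (c v).2 0 (-D) (t, (z1, z2)) ≠ 0) ↔
        v ≠ (t : ℝ)⁻¹ • ((z1 : ℝ), (z2 : ℝ)) := by
      rw [← not_and_or, not_iff_not, linf_apply, linf_apply, Prod.ext_iff]
      simp only [Prod.smul_fst, Prod.smul_snd, smul_eq_mul]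
      have e1 : (c v).1 * t + -D * z1 + 0 * z2 = 0 ↔ v.1 = (t : ℝ)⁻¹ * z1 := by
        rw [← Int.cast_inj (α := ℝ)]
        push_cast
        rw [← (hc v hv).1, eq_inv_mul_iff_mul_eq₀ htR.ne', ← sub_eq_zero (b := (z1 : ℝ))]
        constructor
        · intro h
          exact (mul_eq_zero.mp (show (D : ℝ) * (t * v.1 - z1) = 0 by linarith)).resolve_left
            hDR.ne'
        · intro h
          linear_combination (D : ℝ) * h
      have e2 : (c v).2 * t + 0 * z1 + -D * z2 = 0 ↔ v.2 = (t : ℝ)⁻¹ * z2 := by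
        rw [← Int.cast_inj (α := ℝ)]
        push_cast
        rw [← (hc v hv).2, eq_inv_mul_iff_mul_eq₀ htR.ne', ← sub_eq_zero (b := (z2 : ℝ))]
        constructor
        · intro h
          exact (mul_eq_zero.mp (show (D : ℝ) * (t * v.2 - z2) = 0 by linarith)).resolve_left
            hDR.ne'
        · intro h
          linear_combination (D : ℝ) * h
      rw [e1, e2]
    have h2 : ∀ w ∈ V, (0 < K v w (t, (z1, z2)) ↔
        0 < det2 (v - (t : ℝ)⁻¹ • ((z1 : ℝ), (z2 : ℝ))) (w - (t : ℝ)⁻¹ • ((z1 : ℝ), (z2 : ℝ)))) := by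
      intro w hw
      rw [← Int.cast_pos (R := ℝ), ← hdet w hw, mul_pos_iff_of_pos_right hpos]
    have h3 : ∀ w ∈ V, (0 < (-K v w) (t, (z1, z2)) ↔
        det2 (v - (t : ℝ)⁻¹ • ((z1 : ℝ), (z2 : ℝ))) (w - (t : ℝ)⁻¹ • ((z1 : ℝ), (z2 : ℝ))) < 0) := by
      intro w hw
      rw [AddMonoidHom.neg_apply, ← Int.cast_pos (R := ℝ), Int.cast_neg, ← hdet w hw, ← neg_mul,
        mul_pos_iff_of_pos_right hpos, neg_pos]
    rw [h1]
    refine imp_congr Iff.rfl (and_congr ?_ ?_)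
    · exact exists_congr fun w => and_congr_right fun hw => h2 w hw
    · exact exists_congr fun w => and_congr_right fun hw => h3 w hw

end Geometry


/-! ### Subsets versus tuples -/

section Tuples

lemma tuples_card {α : Type*} (q : ℕ) (P : α → Prop) (r : α → α → Prop) (hr : ∀ a, ¬ r a a)
    (hfin : {a | P a}.Finite) :
    {z : Fin q → α | (∀ i, P (z i)) ∧ ∀ i j, i ≠ j → r (z i) (z j)}.ncard =
      Nat.factorial q * {S : Finset α | S.card = q ∧ (∀ z ∈ S, P z) ∧
        (∀ z ∈ S, ∀ w ∈ S, z ≠ w → r z w)}.ncard := by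
  classical
  set 𝒮 := {S : Finset α | S.card = q ∧ (∀ z ∈ S, P z) ∧
        (∀ z ∈ S, ∀ w ∈ S, z ≠ w → r z w)} with h𝒮
  set 𝒯 := {z : Fin q → α | (∀ i, P (z i)) ∧ ∀ i j, i ≠ j → r (z i) (z j)} with h𝒯
  have hSfin : 𝒮.Finite := by
    refine (hfin.toFinset.powerset.finite_toSet).subset fun S hS => ?_
    rw [Finset.mem_coe, Finset.mem_powerset]
    intro z hz
    rw [Set.Finite.mem_toFinset]
    exact hS.2.1 z hz
  have : Fintype 𝒮 := hSfin.fintype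
  let φ : (Σ S : 𝒮, (Fin q ≃ S.1)) → 𝒯 := fun x => ⟨fun i => (x.2 i).1, by
    refine ⟨fun i => x.1.2.2.1 _ (x.2 i).2, fun i j hij => x.1.2.2.2 _ (x.2 i).2 _ (x.2 j).2 ?_⟩
    intro h
    exact hij (x.2.injective (Subtype.ext h))⟩
  have hφ : Function.Bijective φ := by
    constructor
    · rintro ⟨⟨S, hS⟩, e⟩ ⟨⟨S', hS'⟩, e'⟩ h
      have h1 : ∀ i, (e i).1 = (e' i).1 := fun i => congrFun (congrArg Subtype.val h) i
      have hSS : S = S' := by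
        ext a
        constructor
        · intro ha
          have := h1 (e.symm ⟨a, ha⟩)
          rw [Equiv.apply_symm_apply] at this
          rw [show a = _ from this]
          exact (e' _).2
        · intro ha
          have := h1 (e'.symm ⟨a, ha⟩)
          rw [Equiv.apply_symm_apply] at this
          rw [show a = _ from this.symm]
          exact (e _).2
      subst hSS
      congr 1
      ext i
      exact h1 i
    · rintro ⟨z, hz1, hz2⟩
      have hinj : Function.Injective z := by
        intro i j hij
        by_contra hne
        have := hz2 i j hne
        rw [hij] at this
        exact hr _ this
      refine ⟨⟨⟨Finset.univ.image z, ?_, ?_, ?_⟩, Equiv.ofBijective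
        (fun i => ⟨z i, Finset.mem_image_of_mem z (Finset.mem_univ i)⟩) ⟨?_, ?_⟩⟩, ?_⟩
      · rw [Finset.card_image_of_injective _ hinj]; simp
      · intro a ha
        obtain ⟨i, -, rfl⟩ := Finset.mem_image.mp ha
        exact hz1 i
      · intro a ha b hb hab
        obtain ⟨i, -, rfl⟩ := Finset.mem_image.mp ha
        obtain ⟨j, -, rfl⟩ := Finset.mem_image.mp hb
        exact hz2 i j fun h => hab (by rw [h])
      · intro i j hij
        exact hinj (congrArg Subtype.val hij)
      · rintro ⟨a, ha⟩
        obtain ⟨i, -, rfl⟩ := Finset.mem_image.mp ha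
        exact ⟨i, rfl⟩
      · rfl
  rw [← Nat.card_coe_set_eq, ← Nat.card_coe_set_eq, ← Nat.card_congr (Equiv.ofBijective φ hφ),
    Nat.card_sigma]
  have hc : ∀ S : 𝒮, Nat.card (Fin q ≃ S.1) = Nat.factorial q := by
    intro S
    have e : Fin q ≃ S.1 := Fintype.equivOfCardEq (by simp [S.2.1])
    rw [Nat.card_eq_fintype_card, Fintype.card_equiv e, Fintype.card_fin]
  simp only [hc, Finset.sum_const, Finset.card_univ, smul_eq_mul]
  rw [mul_comm, Nat.card_eq_fintype_card]

end Tuples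

/-! ### Leading coefficients from asymptotics -/

open Filter Topology in
lemma lead_of_tendsto (P : Polynomial ℚ) (d : ℕ) (L : ℝ) (hL : 0 < L) (a : ℕ → ℕ)
    (ha : Tendsto a atTop atTop)
    (h : Tendsto (fun j => ((P.eval (a j : ℚ) : ℚ) : ℝ) / (a j : ℝ) ^ d) atTop (𝓝 L)) :
    P.degree = (d : WithBot ℕ) ∧ ((P.leadingCoeff : ℚ) : ℝ) = L := by
  set Q : Polynomial ℝ := P.map (algebraMap ℚ ℝ) with hQ
  have hdeg : Q.degree = P.degree := Polynomial.degree_map P (algebraMap ℚ ℝ)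
  have hlc : Q.leadingCoeff = (P.leadingCoeff : ℝ) := by
    simp [hQ]
  have haR : Tendsto (fun j => (a j : ℝ)) atTop atTop := tendsto_natCast_atTop_atTop.comp ha
  have h' : Tendsto ((fun x : ℝ => Q.eval x / (Polynomial.X ^ d : Polynomial ℝ).eval x) ∘
      (fun j => (a j : ℝ))) atTop (𝓝 L) := by
    convert h using 2 with j
    have : Q.eval ((a j : ℚ) : ℝ) = ((P.eval (a j : ℚ) : ℚ) : ℝ) := by
      rw [hQ, Polynomial.eval_map]
      exact Polynomial.eval₂_at_apply (algebraMap ℚ ℝ) (a j : ℚ)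
    simp only [Function.comp, Polynomial.eval_pow, Polynomial.eval_X]
    rw [← this]
    simp
  have hX : (Polynomial.X ^ d : Polynomial ℝ).degree = (d : WithBot ℕ) := Polynomial.degree_X_pow d
  rcases lt_trichotomy Q.degree (Polynomial.X ^ d : Polynomial ℝ).degree with hlt | heq | hgt
  · have := (Polynomial.div_tendsto_atTop_zero_of_degree_lt Q _ hlt).comp haR
    exact absurd (tendsto_nhds_unique h' this) hL.ne'
  · have := (Polynomial.div_tendsto_atTop_leadingCoeff_div_of_degree_eq Q _ heq).comp haR
    have e := tendsto_nhds_unique h' this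
    rw [Polynomial.leadingCoeff_X_pow, div_one, hlc] at e
    exact ⟨by rw [← hdeg, heq, hX], e.symm⟩
  · have := (Polynomial.abs_div_tendsto_atTop_atTop_of_degree_gt Q _ hgt
      (pow_ne_zero _ Polynomial.X_ne_zero)).comp haR
    have hcontra := not_tendsto_atTop_of_tendsto_nhds h'.abs
    exact absurd this hcontra


/-! ### Volume asymptotics -/

section Volume

open Filter Topology

/-- Flattening a tuple of planar points into a vector of coordinates. -/
def flat {R : Type*} {q : ℕ} (w : Fin q → R × R) : Fin q × Fin 2 → R :=
  fun i => if i.2 = 0 then (w i.1).1 else (w i.1).2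

lemma measurable_flat (q : ℕ) : Measurable (flat (R := ℝ) (q := q)) := by
  rw [measurable_pi_iff]
  rintro ⟨i, k⟩
  unfold flat
  by_cases h : k = 0
  · simp only [h, if_true]
    exact (measurable_pi_apply i).fst
  · simp only [h, if_false]
    exact (measurable_pi_apply i).snd

lemma map_flat (q : ℕ) : (volume : Measure (Fin q × Fin 2 → ℝ)) =
    (volume : Measure (Fin q → ℝ × ℝ)).map flat := by
  rw [volume_pi]
  refine Measure.pi_eq ?_
  intro s hs
  rw [Measure.map_apply (measurable_flat q) (MeasurableSet.univ_pi hs)]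
  have : (flat ⁻¹' (Set.univ.pi s) : Set (Fin q → ℝ × ℝ)) =
      Set.univ.pi fun i => s (i, 0) ×ˢ s (i, 1) := by
    ext w
    simp only [Set.mem_preimage, Set.mem_univ_pi, flat, Prod.forall, Fin.forall_fin_two,
      Set.mem_prod]
    simp
  rw [this, volume_pi_pi, Fintype.prod_prod_type]
  refine Finset.prod_congr rfl fun i _ => ?_
  rw [Fin.prod_univ_two, Measure.volume_eq_prod, Measure.prod_prod]

/-- Configurations with all points in `A`. -/
def confC (q : ℕ) (A : Set (ℝ × ℝ)) : Set (Fin q × Fin 2 → ℝ) :=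
  {x | ∀ i, (x (i, 0), x (i, 1)) ∈ A}

lemma isOpen_confC (q : ℕ) {A : Set (ℝ × ℝ)} (hA : IsOpen A) : IsOpen (confC q A) := by
  have : confC q A = ⋂ i, (fun x : Fin q × Fin 2 → ℝ => (x (i, 0), x (i, 1))) ⁻¹' A := by
    ext x; simp [confC]
  rw [this]
  exact isOpen_iInter_of_finite fun i => hA.preimage (by fun_prop)

lemma convex_confC (q : ℕ) {A : Set (ℝ × ℝ)} (hA : Convex ℝ A) : Convex ℝ (confC q A) := by
  intro x hx y hy a b ha hb hab i
  have := hA (hx i) (hy i) ha hb hab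
  simpa using this

lemma volume_confC (q : ℕ) {A : Set (ℝ × ℝ)} (hA : IsOpen A) :
    volume (confC q A) = volume A ^ q := by
  rw [map_flat, Measure.map_apply (measurable_flat q) (isOpen_confC q hA).measurableSet]
  have : (flat ⁻¹' (confC q A) : Set (Fin q → ℝ × ℝ)) = Set.univ.pi fun _ => A := by
    ext w
    simp [confC, flat]
  rw [this, volume_pi_pi]
  simp

lemma isBounded_confC (q : ℕ) {A : Set (ℝ × ℝ)} (hA : Bornology.IsBounded A) :
    Bornology.IsBounded (confC q A) := by
  obtain ⟨C, hC⟩ := hA.exists_norm_le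
  rw [isBounded_iff_forall_norm_le]
  refine ⟨max C 0, fun x hx => ?_⟩
  rw [pi_norm_le_iff_of_nonneg (le_max_right _ _)]
  rintro ⟨i, k⟩
  have h := hC _ (hx i)
  rw [Prod.norm_def, max_le_iff] at h
  fin_cases k
  · exact h.1.trans (le_max_left _ _)
  · exact h.2.trans (le_max_left _ _)

/-- The attack form. -/
def atk {q : ℕ} (i j : Fin q) (m : ℤ × ℤ) : (Fin q × Fin 2 → ℝ) →ₗ[ℝ] ℝ where
  toFun x := (x (i, 0) - x (j, 0)) * m.2 - (x (i, 1) - x (j, 1)) * m.1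
  map_add' x y := by simp only [Pi.add_apply]; ring
  map_smul' c x := by simp only [Pi.smul_apply, smul_eq_mul, RingHom.id_apply]; ring

lemma volume_atk {q : ℕ} {i j : Fin q} (hij : i ≠ j) {m : ℤ × ℤ} (hm : m ≠ 0) :
    volume {x | atk i j m x = 0} = 0 := by
  have : {x | atk i j m x = 0} = ((LinearMap.ker (atk i j m) : Submodule ℝ _) : Set _) := by
    ext x; simp
  rw [this]
  refine Measure.addHaar_submodule _ _ fun htop => hm ?_
  have h : ∀ x, atk i j m x = 0 := fun x => by
    have : x ∈ LinearMap.ker (atk i j m) := by rw [htop]; trivial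
    simpa using this
  have h0 := h (Pi.single (i, 0) 1)
  have h1 := h (Pi.single (i, 1) 1)
  simp [atk, hij.symm] at h0 h1
  exact Prod.ext h1 h0

/-- The nonattacking configurations. -/
def confN (q : ℕ) (M : Finset (ℤ × ℤ)) : Set (Fin q × Fin 2 → ℝ) :=
  {x | ∀ i j : Fin q, i ≠ j → ∀ m ∈ M, atk i j m x ≠ 0}

lemma isOpen_confN (q : ℕ) (M : Finset (ℤ × ℤ)) : IsOpen (confN q M) := by
  have : confN q M = ⋂ i : Fin q, ⋂ j : Fin q, ⋂ _ : i ≠ j, ⋂ m ∈ M, {x | atk i j m x ≠ 0} := by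
    ext x; simp [confN]
  rw [this]
  refine isOpen_iInter_of_finite fun i => isOpen_iInter_of_finite fun j =>
    isOpen_iInter_of_finite fun _ => isOpen_biInter_finset fun m _ => ?_
  exact isOpen_ne_fun (LinearMap.continuous_of_finiteDimensional _) continuous_const

lemma volume_confN_compl (q : ℕ) (M : Finset (ℤ × ℤ)) (hM : ∀ m ∈ M, m ≠ 0) :
    volume (confN q M)ᶜ = 0 := by
  have : (confN q M)ᶜ = ⋃ i : Fin q, ⋃ j : Fin q, ⋃ _ : i ≠ j, ⋃ m ∈ M, {x | atk i j m x = 0} := by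
    ext x; simp [confN]
  rw [this]
  refine measure_iUnion_null fun i => measure_iUnion_null fun j => measure_iUnion_null fun hij => ?_
  refine (measure_biUnion_null_iff (s := fun m => {x | atk i j m x = 0}) M.countable_toSet).2 ?_
  exact fun m hm => volume_atk hij (hM m hm)

/-- Lattice tuples. -/
def latT (q : ℕ) (A : Set (ℝ × ℝ)) (M : Finset (ℤ × ℤ)) (t : ℝ) : Set (Fin q → ℤ × ℤ) :=
  {z | (∀ i, (((z i).1 : ℝ), ((z i).2 : ℝ)) ∈ t • A) ∧
    ∀ i j, i ≠ j → ∀ m ∈ M, ((z i).1 - (z j).1) * m.2 - ((z i).2 - (z j).2) * m.1 ≠ 0}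

lemma card_latT (q : ℕ) (A : Set (ℝ × ℝ)) (M : Finset (ℤ × ℤ)) (n : ℕ) (hn : 0 < n) :
    Nat.card ↑((confC q A ∩ confN q M) ∩
      (n : ℝ)⁻¹ • (Submodule.span ℤ (Set.range (Pi.basisFun ℝ (Fin q × Fin 2))) :
        Set (Fin q × Fin 2 → ℝ))) = (latT q A M n).ncard := by
  have : NeZero n := ⟨hn.ne'⟩
  have hn0 : (n : ℝ) ≠ 0 := by positivity
  rw [Nat.card_coe_set_eq]
  symm
  have hkey : ∀ (z : Fin q → ℤ × ℤ) (x : Fin q × Fin 2 → ℝ),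
      (∀ i, (n : ℝ) * x (i, 0) = (z i).1 ∧ (n : ℝ) * x (i, 1) = (z i).2) →
      (z ∈ latT q A M n ↔ x ∈ confC q A ∩ confN q M) := by
    intro z x h
    unfold latT confC confN
    simp only [Set.mem_ofPred_eq, Set.mem_inter_iff]
    refine and_congr (forall_congr' fun i => ?_) (forall_congr' fun i => forall_congr' fun j =>
      forall_congr' fun hij => forall_congr' fun m => forall_congr' fun hm => ?_)
    · rw [Set.mem_smul_set_iff_inv_smul_mem₀ hn0, ← (h i).1, ← (h i).2]
      simp [hn0]
    · have : (n : ℝ) * atk i j m x =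
          ((((z i).1 - (z j).1) * m.2 - ((z i).2 - (z j).2) * m.1 : ℤ) : ℝ) := by
        push_cast
        rw [← (h i).1, ← (h i).2, ← (h j).1, ← (h j).2]
        simp only [atk, LinearMap.coe_mk, AddHom.coe_mk]
        ring
      rw [← not_iff_not, not_not, not_not, ← Int.cast_eq_zero (α := ℝ), ← this]
      simp [hn0]
  refine Set.ncard_congr (fun z _ => flat fun i => ((n : ℝ)⁻¹ * (z i).1, (n : ℝ)⁻¹ * (z i).2))
    ?_ ?_ ?_
  · intro z hz
    refine ⟨(hkey z _ fun i => ?_).1 hz, ?_⟩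
    · simp [flat, hn0]
    · have := (BoxIntegral.unitPartition.mem_smul_span_iff (n := n)
        (v := flat fun i => ((n : ℝ)⁻¹ * (z i).1, (n : ℝ)⁻¹ * (z i).2))).2 ?_
      · exact this
      · rintro ⟨i, k⟩
        fin_cases k
        · exact ⟨(z i).1, by simp [flat, hn0]⟩
        · exact ⟨(z i).2, by simp [flat, hn0]⟩
  · intro z w _ _ h
    funext i
    have h0 := congrFun h (i, 0)
    have h1 := congrFun h (i, 1)
    simp [flat, hn0] at h0 h1
    exact Prod.ext h0 h1
  · rintro x ⟨hx, hx2⟩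
    have := (BoxIntegral.unitPartition.mem_smul_span_iff (n := n) (v := x)).1 hx2
    choose y hy using this
    simp only [algebraMap_int_eq, eq_intCast] at hy
    refine ⟨fun i => (y (i, 0), y (i, 1)), (hkey _ x fun i => ⟨(hy _).symm, (hy _).symm⟩).2 hx, ?_⟩
    funext ⟨i, k⟩
    fin_cases k
    · simp [flat, hy, hn0]
    · simp [flat, hy, hn0]

theorem tendsto_latT (q : ℕ) (A : Set (ℝ × ℝ)) (hA : IsOpen A) (hAc : Convex ℝ A)
    (hAb : Bornology.IsBounded A) (M : Finset (ℤ × ℤ)) (hM : ∀ m ∈ M, m ≠ 0) :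
    Tendsto (fun n : ℕ => ((latT q A M n).ncard : ℝ) / (n : ℝ) ^ (2 * q)) atTop
      (𝓝 ((volume A).toReal ^ q)) := by
  have hN0 := volume_confN_compl q M hM
  have hfr : volume (frontier (confC q A ∩ confN q M)) = 0 := by
    refine measure_mono_null (frontier_inter_subset _ _) (measure_union_null ?_ ?_)
    · exact measure_mono_null Set.inter_subset_left
        ((convex_confC q hAc).addHaar_frontier volume)
    · refine measure_mono_null Set.inter_subset_right (measure_mono_null ?_ hN0)
      rw [(isOpen_confN q M).frontier_eq]
      exact fun x hx => hx.2
  have h := tendsto_card_div_pow_atTop_volume (confC q A ∩ confN q M)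
    ((isBounded_confC q hAb).subset Set.inter_subset_left)
    ((isOpen_confC q hA).inter (isOpen_confN q M)).measurableSet hfr
  have hvol : volume.real (confC q A ∩ confN q M) = (volume A).toReal ^ q := by
    rw [Measure.real, measure_inter_conull hN0, volume_confC q hA, ENNReal.toReal_pow]
  rw [hvol] at h
  refine h.congr' ?_
  filter_upwards [eventually_gt_atTop 0] with n hn
  rw [card_latT q A M n hn]
  simp [mul_comm]

end Volume


/-! ### The counting function -/

section Final

open Filter Topology

/-- Projection to a single point. -/
def projP {q : ℕ} (i : Fin q) : ℤ × (Fin q → ℤ × ℤ) →+ ℤ × (ℤ × ℤ) :=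
  AddMonoidHom.mk' (fun x => (x.1, x.2 i)) (fun _ _ => rfl)

/-- Integral attack form. -/
def atkZ {q : ℕ} (i j : Fin q) (m : ℤ × ℤ) : ℤ × (Fin q → ℤ × ℤ) →+ ℤ :=
  AddMonoidHom.mk'
    (fun x => ((x.2 i).1 - (x.2 j).1) * m.2 - ((x.2 i).2 - (x.2 j).2) * m.1)
    (fun x y => by simp only [Prod.snd_add, Pi.add_apply, Prod.fst_add]; ring)

lemma exists_box {A : Set (ℝ × ℝ)} (hA : Bornology.IsBounded A) :
    ∃ R : ℕ, ∀ x ∈ A, |x.1| < R ∧ |x.2| < R := by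
  obtain ⟨C, hC⟩ := hA.exists_norm_le
  obtain ⟨R, hR⟩ := exists_nat_gt C
  refine ⟨R, fun x hx => ?_⟩
  have h := hC x hx
  rw [Prod.norm_def, max_le_iff] at h
  exact ⟨h.1.trans_lt hR, h.2.trans_lt hR⟩

lemma mem_box {A : Set (ℝ × ℝ)} {R : ℕ} (hR : ∀ x ∈ A, |x.1| < R ∧ |x.2| < R) {t : ℤ}
    (ht : 0 < t) {z : ℤ × ℤ} (hz : ((z.1 : ℝ), (z.2 : ℝ)) ∈ (t : ℝ) • A) :
    z ∈ Finset.Ico (-(R * t)) (R * t) ×ˢ Finset.Ico (-(R * t)) (R * t) := by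
  have ht' : (0 : ℝ) < t := by exact_mod_cast ht
  obtain ⟨x, hx, hxz⟩ := hz
  obtain ⟨h1, h2⟩ := hR x hx
  have e1 : (t : ℝ) * x.1 = z.1 := congrArg Prod.fst hxz
  have e2 : (t : ℝ) * x.2 = z.2 := congrArg Prod.snd hxz
  rw [abs_lt] at h1 h2
  rw [Finset.mem_product, Finset.mem_Ico, Finset.mem_Ico]
  have a1 : (-(R * t) : ℝ) < z.1 := by rw [← e1]; nlinarith
  have a2 : (z.1 : ℝ) < R * t := by rw [← e1]; nlinarith
  have a3 : (-(R * t) : ℝ) < z.2 := by rw [← e2]; nlinarith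
  have a4 : (z.2 : ℝ) < R * t := by rw [← e2]; nlinarith
  norm_cast at a1 a2 a3 a4
  exact ⟨⟨a1.le, a2⟩, a3.le, a4⟩

lemma latT_qp (q : ℕ) (V : Finset (ℝ × ℝ))
    (hV : ∀ v ∈ V, ∃ a b : ℚ, v = ((a : ℝ), (b : ℝ)))
    (hne : (interior (convexHull ℝ (V : Set (ℝ × ℝ)))).Nonempty)
    (hbd : Bornology.IsBounded (interior (convexHull ℝ (V : Set (ℝ × ℝ)))))
    (M : Finset (ℤ × ℤ)) :
    ∃ τ, QP τ ∧ ∀ n : ℕ, 0 < n →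
      ((latT q (interior (convexHull ℝ (V : Set (ℝ × ℝ)))) M n).ncard : ℚ) = τ n := by
  classical
  obtain ⟨p, hp, hpz⟩ := dfn_interior V hV hne
  obtain ⟨R, hR⟩ := exists_box hbd
  set A := interior (convexHull ℝ (V : Set (ℝ × ℝ)))
  have hQ : Dfn (fun x : ℤ × (Fin q → ℤ × ℤ) =>
      (∀ i ∈ Finset.univ, p (projP i x)) ∧
      ∀ i ∈ Finset.univ, ∀ j ∈ Finset.univ, i ≠ j → ∀ m ∈ M, atkZ i j m x ≠ 0) := by
    refine Dfn.and (Dfn.all _ fun i _ => hp.comp _) (Dfn.all _ fun i _ => Dfn.all _ fun j _ =>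
      Dfn.imp (Dfn.const _) (Dfn.all _ fun m _ => Dfn.ne_zero _))
  obtain ⟨τ, hτ, hF⟩ := PQ.qp (PQ.sum_bx q (AddMonoidHom.mulLeft (R : ℤ)) hQ)
  refine ⟨τ, hτ, fun n hn => ?_⟩
  have hn' : (0 : ℤ) < n := by exact_mod_cast hn
  rw [← hF n hn']
  have hset : latT q A M n = ((bx q (R * n)).filter fun z =>
      (∀ i ∈ Finset.univ, p (projP i ((n : ℤ), z))) ∧
      ∀ i ∈ Finset.univ, ∀ j ∈ Finset.univ, i ≠ j → ∀ m ∈ M, atkZ i j m ((n : ℤ), z) ≠ 0 :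
        Finset _) := by
    ext z
    rw [Finset.coe_filter]
    simp only [latT, Set.mem_ofPred_eq, projP, atkZ, AddMonoidHom.mk'_apply, Finset.mem_univ,
      forall_true_left, hpz _ _ hn', Int.cast_natCast]
    constructor
    · rintro ⟨h1, h2⟩
      refine ⟨?_, h1, h2⟩
      rw [bx, Fintype.mem_piFinset]
      intro i
      exact mem_box hR hn' (by simpa using h1 i)
    · rintro ⟨_, h1, h2⟩
      exact ⟨h1, h2⟩
  rw [hset, Set.ncard_coe_finset]
  simp only [AddMonoidHom.coe_mulLeft]
  rw [Finset.card_filter]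
  push_cast
  refine Finset.sum_congr rfl fun z _ => ?_
  congr

theorem main_count (q : ℕ) (M : Finset (ℤ × ℤ)) (hMne : M.Nonempty) (hM : ∀ m ∈ M, m ≠ 0)
    (V : Finset (ℝ × ℝ)) (hV : ∀ v ∈ V, ∃ a b : ℚ, v = ((a : ℝ), (b : ℝ)))
    (B : Set (ℝ × ℝ)) (hB : B = convexHull ℝ (V : Set (ℝ × ℝ)))
    (hBint : (interior B).Nonempty)
    (u : ℕ → ℕ)
    (hu : ∀ n : ℕ, u n = Set.ncard {S : Finset (ℤ × ℤ) |
      S.card = q ∧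
      (∀ z ∈ S, (((z.1 : ℝ), (z.2 : ℝ)) : ℝ × ℝ) ∈ ((n : ℝ) + 1) • interior B) ∧
      (∀ z ∈ S, ∀ w ∈ S, z ≠ w → ∀ m ∈ M,
        (z.1 - w.1) * m.2 - (z.2 - w.2) * m.1 ≠ 0)}) :
    ∃ p : ℕ, 0 < p ∧ ∃ f : ℕ → Polynomial ℚ,
      (∀ k < p, (f k).degree = ((2 * q : ℕ) : WithBot ℕ) ∧
        ((f k).leadingCoeff : ℝ) = (volume B).toReal ^ q / (Nat.factorial q : ℝ)) ∧
      (∀ n : ℕ, (u n : ℚ) = (f (n % p)).eval (n : ℚ)) := by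
  have hBc : Convex ℝ B := hB ▸ convex_convexHull ℝ _
  have hBb : Bornology.IsBounded B := by
    rw [hB, isBounded_convexHull]
    exact V.finite_toSet.isBounded
  have hAb : Bornology.IsBounded (interior B) := hBb.subset interior_subset
  have hvol : volume (interior B) = volume B :=
    measure_congr (interior_ae_eq_of_null_frontier (hBc.addHaar_frontier volume))
  have hpos : 0 < (volume B).toReal ^ q := by
    refine pow_pos (ENNReal.toReal_pos ?_ hBb.measure_lt_top.ne) _
    rw [← hvol]
    exact (isOpen_interior.measure_pos volume hBint).ne'
  have hlim := tendsto_latT q (interior B) isOpen_interior hBc.interior hAb M hM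
  rw [hvol] at hlim
  obtain ⟨τ, ⟨N, hN, P, hP⟩, hτ⟩ : ∃ τ, QP τ ∧ ∀ n : ℕ, 0 < n →
      ((latT q (interior B) M n).ncard : ℚ) = τ n := by
    subst hB
    exact latT_qp q V hV hBint hAb M
  obtain ⟨p, rfl⟩ : ∃ p : ℕ, N = p := ⟨N.toNat, by omega⟩
  have hp : 0 < p := by exact_mod_cast hN
  have hlead : ∀ r : ℕ, r < p → (P r).degree = ((2 * q : ℕ) : WithBot ℕ) ∧
      ((P r).leadingCoeff : ℝ) = (volume B).toReal ^ q := by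
    intro r hr
    have hmono : Tendsto (fun j : ℕ => r + p * (j + 1)) atTop atTop := by
      refine tendsto_atTop_mono (fun j => ?_) tendsto_id
      simp only [id]
      nlinarith
    refine lead_of_tendsto (P r) (2 * q) _ hpos _ hmono ?_
    refine (hlim.comp hmono).congr fun j => ?_
    simp only [Function.comp]
    congr 1
    have h1 := hτ (r + p * (j + 1)) (by positivity)
    rw [hP] at h1
    have h2 : ((r + p * (j + 1) : ℕ) : ℤ) % p = r := by
      have : (r + p * (j + 1)) % p = r := by
        rw [Nat.add_mul_mod_self_left, Nat.mod_eq_of_lt hr]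
      exact_mod_cast this
    rw [h2] at h1
    have h3 := congrArg (fun x : ℚ => (x : ℝ)) h1
    simp only [Rat.cast_natCast, Int.cast_natCast] at h3
    exact h3
  have hcount : ∀ n : ℕ, (u n : ℚ) =
      (1 / (Nat.factorial q : ℚ)) * (P (((n + 1) % p : ℕ) : ℤ)).eval ((n : ℚ) + 1) := by
    intro n
    obtain ⟨R, hR⟩ := exists_box hAb
    have hn1 : (0 : ℤ) < (n : ℤ) + 1 := by positivity
    have ht := tuples_card q
      (fun z : ℤ × ℤ => (((z.1 : ℝ), (z.2 : ℝ)) : ℝ × ℝ) ∈ ((n : ℝ) + 1) • interior B)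
      (fun z w => ∀ m ∈ M, (z.1 - w.1) * m.2 - (z.2 - w.2) * m.1 ≠ 0)
      (fun a h => by obtain ⟨m, hm⟩ := hMne; exact h m hm (by ring))
      ((Finset.finite_toSet _).subset fun z hz =>
        Finset.mem_coe.2 (mem_box hR hn1 (by push_cast; exact hz)))
    rw [← hu n] at ht
    have h1 := hτ (n + 1) (Nat.succ_pos n)
    have h2 : (latT q (interior B) M ((n + 1 : ℕ) : ℝ)).ncard = Nat.factorial q * u n := by
      rw [← ht, latT]
      push_cast
      rfl
    rw [h2, hP] at h1
    push_cast at h1 ⊢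
    rw [← h1]
    have : (Nat.factorial q : ℚ) ≠ 0 := by exact_mod_cast Nat.factorial_ne_zero q
    field_simp
  refine ⟨p, hp, fun k => Polynomial.C (1 / (Nat.factorial q : ℚ)) *
    (P (((k + 1) % p : ℕ) : ℤ)).comp (Polynomial.X + Polynomial.C 1), ?_, ?_⟩
  · intro k _
    obtain ⟨h1, h2⟩ := hlead ((k + 1) % p) (Nat.mod_lt _ hp)
    have hf : (1 / (Nat.factorial q : ℚ)) ≠ 0 := by
      have : (Nat.factorial q : ℚ) ≠ 0 := by exact_mod_cast Nat.factorial_ne_zero q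
      positivity
    constructor
    · rw [Polynomial.degree_C_mul hf, ← Polynomial.taylor_apply, Polynomial.degree_taylor, h1]
    · rw [Polynomial.leadingCoeff_mul, Polynomial.leadingCoeff_C, ← Polynomial.taylor_apply,
        Polynomial.leadingCoeff_taylor]
      rw [Rat.cast_mul, h2]
      push_cast
      ring
  · intro n
    rw [hcount n]
    simp [Polynomial.eval_comp, Nat.add_mod]

end Final

end RiderCount

/-- For each positive integer `q`, the counting function `n ↦ u_P(q;n)` is a
quasipolynomial in `n` of degree `2q` with leading coefficient `(vol B)^q / q!`. -/
theorem stmt_0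
    (M : Finset (ℤ × ℤ)) (hMne : M.Nonempty)
    (hMmove : ∀ m ∈ M, m ≠ 0 ∧ Int.gcd m.1 m.2 = 1)
    (hMpar : ∀ m ∈ M, ∀ m' ∈ M, m ≠ m' → m.1 * m'.2 - m.2 * m'.1 ≠ 0)
    (V : Finset (ℝ × ℝ)) (hV : ∀ v ∈ V, ∃ a b : ℚ, v = ((a : ℝ), (b : ℝ)))
    (B : Set (ℝ × ℝ)) (hB : B = convexHull ℝ (V : Set (ℝ × ℝ)))
    (hBint : (interior B).Nonempty)
    (q : ℕ) (hq : 0 < q)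
    (u : ℕ → ℕ)
    (hu : ∀ n : ℕ, u n = Set.ncard {S : Finset (ℤ × ℤ) |
      S.card = q ∧
      (∀ z ∈ S, (((z.1 : ℝ), (z.2 : ℝ)) : ℝ × ℝ) ∈ ((n : ℝ) + 1) • interior B) ∧
      (∀ z ∈ S, ∀ w ∈ S, z ≠ w → ∀ m ∈ M,
        (z.1 - w.1) * m.2 - (z.2 - w.2) * m.1 ≠ 0)}) :
    ∃ p : ℕ, 0 < p ∧ ∃ f : ℕ → Polynomial ℚ,
      (∀ k < p, (f k).degree = ((2 * q : ℕ) : WithBot ℕ) ∧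
        ((f k).leadingCoeff : ℝ) = (volume B).toReal ^ q / (Nat.factorial q : ℝ)) ∧
      (∀ n : ℕ, (u n : ℚ) = (f (n % p)).eval (n : ℚ)) := by
  exact RiderCount.main_count q M hMne (fun m hm => (hMmove m hm).1) V hV B hB hBint u hu
end

section
/- For every i ∈ ℕ there exist a positive integer P_i and polynomials g_0, …, g_{P_i−1} with real coefficients, each of degree exactly 2i, with the following property: for every integer q with 2q ≥ i there exist a positive integer p divisible by P_i and polynomials f_0, …, f_{p−1} with rational coefficients such that o_P(q;n) = f_{n mod p}(n) for all integers n ≥ 0, and for every k ∈ {0, …, p−1} the coefficient of n^{2q−i} in f_k equals (vol B)^q · g_{k mod P_i}(q), where vol B is the Lebesgue area of B. (When vol B = 1 this says that the coefficient q!·γ_i of n^{2q−i} in each constituent of o_P(q;n) is a polynomial in q of degree 2i, varying periodically with n with a period independent of q.) -/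
namespace CT
open Polynomial

/-- generators of the algebra of homogeneous piecewise quasipolynomials -/
def QGen (G : Type) [AddCommGroup G] : Set (G → ℚ) :=
  {f | (∃ l : G →+ ℤ, f = fun y => (l y : ℚ)) ∨
       (∃ l : G →+ ℤ, f = fun y => if 0 < l y then 1 else 0) ∨
       (∃ (l : G →+ ℤ) (m r : ℤ), 0 < m ∧ f = fun y => if l y % m = r then 1 else 0)}

def Q (G : Type) [AddCommGroup G] : Subalgebra ℚ (G → ℚ) := Algebra.adjoin ℚ (QGen G)

section basics
variable {G : Type} [AddCommGroup G]

lemma Q_lin (l : G →+ ℤ) : (fun y => (l y : ℚ)) ∈ Q G :=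
  Algebra.subset_adjoin (Or.inl ⟨l, rfl⟩)
lemma Q_pos (l : G →+ ℤ) : (fun y => if 0 < l y then (1:ℚ) else 0) ∈ Q G :=
  Algebra.subset_adjoin (Or.inr (Or.inl ⟨l, rfl⟩))
lemma Q_mod (l : G →+ ℤ) (m r : ℤ) (hm : 0 < m) :
    (fun y => if l y % m = r then (1:ℚ) else 0) ∈ Q G :=
  Algebra.subset_adjoin (Or.inr (Or.inr ⟨l, m, r, hm, rfl⟩))
lemma Q_const (c : ℚ) : (fun _ : G => c) ∈ Q G := (Q G).algebraMap_mem c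
lemma Q_add {f g : G → ℚ} (hf : f ∈ Q G) (hg : g ∈ Q G) : (fun y => f y + g y) ∈ Q G :=
  (Q G).add_mem hf hg
lemma Q_mul {f g : G → ℚ} (hf : f ∈ Q G) (hg : g ∈ Q G) : (fun y => f y * g y) ∈ Q G :=
  (Q G).mul_mem hf hg
lemma Q_sub {f g : G → ℚ} (hf : f ∈ Q G) (hg : g ∈ Q G) : (fun y => f y - g y) ∈ Q G :=
  (Q G).sub_mem hf hg
lemma Q_sum {α : Type} (s : Finset α) {f : α → G → ℚ} (hf : ∀ a ∈ s, f a ∈ Q G) :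
    (fun y => ∑ a ∈ s, f a y) ∈ Q G := by
  have := (Q G).sum_mem hf
  convert this using 1
  ext y; simp

lemma Q_per (l : G →+ ℤ) (m : ℤ) (hm : 0 < m) (φ : ℤ → ℚ) (hφ : ∀ x, φ x = φ (x % m)) :
    (fun y => φ (l y)) ∈ Q G := by
  have : (fun y => φ (l y)) =
      fun y => ∑ r ∈ Finset.Ico 0 m, φ r * (if l y % m = r then 1 else 0) := by
    ext y
    rw [Finset.sum_eq_single (l y % m)]
    · rw [hφ]; simp
    · intro b _ hb; rw [if_neg (Ne.symm hb)]; simp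
    · intro h; exfalso; apply h; simp [Int.emod_nonneg _ hm.ne', Int.emod_lt_of_pos _ hm]
  rw [this]
  exact Q_sum _ fun r _ => Q_mul (Q_const _) (Q_mod l m r hm)

lemma Q_floor (l : G →+ ℤ) (c : ℤ) (e : ℤ) (hc : 0 < c) :
    (fun y => (((l y - e) / c : ℤ) : ℚ)) ∈ Q G := by
  have h1 : (fun y => (((l y - e) / c : ℤ) : ℚ)) =
      fun y => (1 / (c:ℚ)) * (((l y : ℚ) - e) - ((fun x : ℤ => (((x - e) % c : ℤ) : ℚ)) (l y))) := by
    ext y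
    have h := Int.emod_add_mul_ediv (l y - e) c
    have hc' : (c:ℚ) ≠ 0 := by exact_mod_cast hc.ne'
    field_simp
    have : ((l y - e : ℤ) : ℚ) = ((l y - e) % c : ℤ) + c * ((l y - e) / c : ℤ) := by
      exact_mod_cast h.symm
    push_cast at this
    rw [this]; ring
  rw [h1]
  refine Q_mul (Q_const _) (Q_sub (Q_sub (Q_lin l) (Q_const _))
    (Q_per l c hc (fun x : ℤ => (((x - e) % c : ℤ) : ℚ)) ?_))
  intro x
  simp [Int.sub_emod]

lemma Q_comp {G' : Type} [AddCommGroup G'] (φ : G →+ G') {f : G' → ℚ} (hf : f ∈ Q G') :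
    (fun y => f (φ y)) ∈ Q G := by
  induction hf using Algebra.adjoin_induction with
  | mem f hf =>
    rcases hf with ⟨l, rfl⟩ | ⟨l, rfl⟩ | ⟨l, m, r, hm, rfl⟩
    · exact Q_lin (l.comp φ)
    · exact Q_pos (l.comp φ)
    · exact Q_mod (l.comp φ) m r hm
  | algebraMap r => exact Q_const r
  | add f g _ _ h1 h2 => exact Q_add h1 h2
  | mul f g _ _ h1 h2 => exact Q_mul h1 h2

lemma Q_eval (p : ℚ[X]) {f : G → ℚ} (hf : f ∈ Q G) : (fun y => p.eval (f y)) ∈ Q G := by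
  induction p using Polynomial.induction_on' with
  | add p q h1 h2 => simpa using Q_add h1 h2
  | monomial n a =>
    simp only [eval_monomial]
    exact Q_mul (Q_const _) ((Q G).pow_mem hf n)
end basics

/-- one-variable quasipolynomials on `ℤ` -/
def W (H : ℤ → ℚ) : Prop :=
  ∃ m : ℤ, 0 < m ∧ ∃ p : ℤ → ℚ[X], (∀ s, p s = p (s % m)) ∧ ∀ s, H s = (p s).eval (s : ℚ)

lemma per_mul {α : Type} {p : ℤ → α} {m : ℤ} (h : ∀ s, p s = p (s % m)) (k : ℤ) :
    ∀ s, p s = p (s % (m * k)) := by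
  intro s; rw [h s, h (s % (m*k)), Int.emod_emod_of_dvd _ (Dvd.intro _ rfl)]

lemma W_mul {H K : ℤ → ℚ} (hH : W H) (hK : W K) : W (fun s => H s * K s) := by
  obtain ⟨m, hm, p, hp, h⟩ := hH
  obtain ⟨m', hm', p', hp', h'⟩ := hK
  refine ⟨m * m', by positivity, fun s => p s * p' s, fun s => ?_, fun s => by simp [h, h']⟩
  have h1 := per_mul hp m' s
  have h2 := per_mul hp' m s
  rw [mul_comm m' m] at h2
  simp only [← h1, ← h2]

lemma W_add {H K : ℤ → ℚ} (hH : W H) (hK : W K) : W (fun s => H s + K s) := by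
  obtain ⟨m, hm, p, hp, h⟩ := hH
  obtain ⟨m', hm', p', hp', h'⟩ := hK
  refine ⟨m * m', by positivity, fun s => p s + p' s, fun s => ?_, fun s => by simp [h, h']⟩
  have h1 := per_mul hp m' s
  have h2 := per_mul hp' m s
  rw [mul_comm m' m] at h2
  simp only [← h1, ← h2]

lemma W_const (c : ℚ) : W (fun _ => c) := ⟨1, one_pos, fun _ => C c, by simp, by simp⟩
lemma W_id : W (fun s => (s:ℚ)) := ⟨1, one_pos, fun _ => X, by simp, by simp⟩
lemma W_mod (m r : ℤ) (hm : 0 < m) : W (fun s => if s % m = r then 1 else 0) :=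
  ⟨m, hm, fun s => if s % m = r then 1 else 0, by simp, by intro s; simp only []; split_ifs <;> simp⟩
lemma W_sum {α : Type} (t : Finset α) {f : α → ℤ → ℚ} (hf : ∀ a ∈ t, W (f a)) :
    W (fun s => ∑ a ∈ t, f a s) := by
  classical
  induction t using Finset.induction_on with
  | empty => simpa using W_const 0
  | insert a t ha ih =>
    simp only [Finset.sum_insert ha]
    exact W_add (hf a (by simp)) (ih fun b hb => hf b (by simp [hb]))
lemma W_shift {H : ℤ → ℚ} (hH : W H) (j : ℤ) : W (fun s => H (s + j)) := by
  obtain ⟨m, hm, p, hp, h⟩ := hH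
  refine ⟨m, hm, fun s => (p (s + j)).comp (X + C (j:ℚ)), fun s => ?_, fun s => by simp [h]⟩
  simp only []
  rw [hp (s + j), hp (s % m + j)]; simp

lemma poly_anti (m : ℚ) (hm : m ≠ 0) (p : ℚ[X]) :
    ∃ P : ℚ[X], ∀ x, P.eval (x + m) - P.eval x = p.eval x := by
  induction p using Polynomial.induction_on' with
  | add p q h1 h2 =>
    obtain ⟨P, hP⟩ := h1
    obtain ⟨R, hR⟩ := h2
    exact ⟨P + R, fun x => by simp only [eval_add]; linarith [hP x, hR x]⟩
  | monomial n a =>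
    refine ⟨C (a * m ^ n / (n+1)) * (Polynomial.bernoulli (n+1)).comp (C (1/m) * X), fun x => ?_⟩
    have h := congrArg (eval (x / m)) (Polynomial.bernoulli_comp_one_add_X (n+1))
    simp only [eval_comp, eval_add, eval_mul, eval_C, eval_X, eval_one, eval_monomial, eval_smul,
      eval_pow, Nat.add_sub_cancel] at h ⊢
    have e1 : 1 / m * (x + m) = 1 + x / m := by field_simp; ring
    have e2 : 1 / m * x = x / m := by field_simp
    rw [e1, e2, h]
    have : (n:ℚ) + 1 ≠ 0 := by positivity
    rw [div_pow]
    simp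
    field_simp
    ring

lemma W_anti {F : ℤ → ℚ} (hF : W F) : ∃ H, W H ∧ ∀ s, H (s+1) - H s = F s := by
  obtain ⟨m, hm, p, hp, h⟩ := hF
  choose A hA using poly_anti (m:ℚ) (by exact_mod_cast hm.ne')
  have hK : W (fun s => (A (p s)).eval (s:ℚ)) :=
    ⟨m, hm, fun s => A (p s), fun s => by simp only [← hp s], fun s => rfl⟩
  lift m to ℕ using hm.le
  refine ⟨fun s => ∑ j ∈ Finset.range m, (fun s => (A (p s)).eval (s:ℚ)) (s + (j:ℤ)),
    W_sum _ fun j _ => W_shift hK j, fun s => ?_⟩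
  have e : ∀ f : ℤ → ℚ, (∑ j ∈ Finset.range m, f (s + 1 + (j:ℤ))) - ∑ j ∈ Finset.range m, f (s + (j:ℤ))
      = f (s + m) - f s := by
    intro f
    have := Finset.sum_range_sub (fun j : ℕ => f (s + (j:ℤ))) m
    simp only [Nat.cast_zero, add_zero] at this
    rw [← this, Finset.sum_sub_distrib]
    congr 1
    refine Finset.sum_congr rfl fun j _ => ?_
    congr 1; push_cast; ring
  have e' := e (fun s => (A (p s)).eval (s:ℚ))
  refine Eq.trans e' ?_
  have : p (s + m) = p s := by rw [hp (s+m), hp s]; simp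
  simp only [this, h]
  have := hA (p s) s
  push_cast; exact_mod_cast this

lemma Q_W_floor {G : Type} [AddCommGroup G] {H : ℤ → ℚ} (hH : W H) (l : G →+ ℤ) (e c : ℤ)
    (hc : 0 < c) : (fun y => H ((l y - e) / c + 1)) ∈ Q G := by
  obtain ⟨m, hm, p, hp, h⟩ := hH
  have key : (fun y => H ((l y - e) / c + 1)) = fun y => ∑ r ∈ Finset.Ico 0 m,
      (fun x : ℤ => if ((x - e) / c + 1) % m = r then (1:ℚ) else 0) (l y) *
        (p r).eval ((((l y - e) / c : ℤ) : ℚ) + 1) := by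
    ext y
    rw [Finset.sum_eq_single (((l y - e) / c + 1) % m)]
    · simp only [if_true, one_mul, h, ← hp]; push_cast; rfl
    · intro b _ hb; simp [Ne.symm hb]
    · intro h; exfalso; apply h; simp [Int.emod_nonneg _ hm.ne', Int.emod_lt_of_pos _ hm]
  rw [key]
  refine Q_sum _ fun r _ => Q_mul (Q_per l (c * m) (by positivity)
    (fun x : ℤ => if ((x - e) / c + 1) % m = r then (1:ℚ) else 0) ?_)
    (Q_eval _ (Q_add (Q_floor l c e hc) (Q_const 1)))
  intro x
  have h1 := Int.emod_add_mul_ediv x (c * m)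
  have : (x - e) / c = (x % (c * m) - e) / c + m * (x / (c * m)) := by
    rw [← Int.add_mul_ediv_left _ _ hc.ne']
    congr 1
    linarith
  rw [this]
  congr 2
  rw [show (x % (c * m) - e) / c + m * (x / (c * m)) + 1 = (x % (c * m) - e) / c + 1 + m * (x / (c * m)) by ring]
  simp

end CT
namespace CT
open Polynomial

section sumout
variable {G : Type} [AddCommGroup G]

/-- threshold indicators in the last variable -/
def Thr (I : G × ℤ → ℚ) : Prop :=
  (I = fun _ => 1) ∨ ∃ (b : G →+ ℤ) (c e : ℤ), 0 < c ∧ (e = 0 ∨ e = 1) ∧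
    I = fun z => if b z.1 - e < c * z.2 then 1 else 0

def NSet (G : Type) [AddCommGroup G] : Set (G × ℤ → ℚ) :=
  {F | ∃ h ∈ Q G, ∃ I, Thr I ∧ ∃ H, W H ∧ F = fun z => h z.1 * I z * H z.2}

def N (G : Type) [AddCommGroup G] : Submodule ℚ (G × ℤ → ℚ) := Submodule.span ℚ (NSet G)

lemma N_mem {h : G → ℚ} (hh : h ∈ Q G) {I : G × ℤ → ℚ} (hI : Thr I) {H : ℤ → ℚ} (hH : W H) :
    (fun z => h z.1 * I z * H z.2) ∈ N G :=
  Submodule.subset_span ⟨h, hh, I, hI, H, hH, rfl⟩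

lemma N_mem_h {h : G → ℚ} (hh : h ∈ Q G) : (fun z : G × ℤ => h z.1) ∈ N G := by
  simpa using N_mem hh (Or.inl rfl) (W_const 1)

lemma Q_lt (b b' : G →+ ℤ) : (fun y => if b y < b' y then (1:ℚ) else 0) ∈ Q G := by
  simpa using Q_pos (b' - b)

lemma Q_le (b b' : G →+ ℤ) : (fun y => if b y ≤ b' y then (1:ℚ) else 0) ∈ Q G := by
  have := Q_sub (Q_const 1) (Q_lt b' b)
  convert this using 2 with y
  split_ifs <;> first | (exfalso; omega) | norm_num

lemma Thr_mul {I J : G × ℤ → ℚ} (hI : Thr I) (hJ : Thr J) :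
    ∃ h ∈ Q G, ∀ z, I z * J z = h z.1 * I z + (1 - h z.1) * J z := by
  rcases hI with rfl | ⟨b, c, e, hc, he, rfl⟩
  · exact ⟨_, Q_const 0, by simp⟩
  rcases hJ with rfl | ⟨b', c', e', hc', he', rfl⟩
  · exact ⟨_, Q_const 1, by simp⟩
  -- `h = 1` when `I` implies `J`
  by_cases hee : e ≤ e'
  · refine ⟨_, Q_le (c • b') (c' • b), fun ⟨y, s⟩ => ?_⟩
    simp only [AddMonoidHom.coe_smul, Pi.smul_apply, smul_eq_mul]
    by_cases h : c * b' y ≤ c' * b y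
    · have : b y - e < c * s → b' y - e' < c' * s := by
        intro h1
        have h2 : c' * (b y - e) < c' * (c * s) := by nlinarith
        by_contra h3
        push Not at h3
        have h4 : c * (c' * s) ≤ c * (b' y - e') := by nlinarith
        rcases he with rfl | rfl <;> rcases he' with rfl | rfl
        · nlinarith
        · nlinarith
        · omega
        · have h5 : b y ≤ c * s := by linarith
          have h6 : c' * s + 1 ≤ b' y := by linarith
          nlinarith
      simp only [h, if_true]
      split_ifs <;> first | (exfalso; tauto) | norm_num
    · have : b' y - e' < c' * s → b y - e < c * s := by
        intro h1
        by_contra h3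
        push Not at h3 h
        rcases he with rfl | rfl <;> rcases he' with rfl | rfl
        · nlinarith
        · have h5 : b' y ≤ c' * s := by linarith
          nlinarith
        · omega
        · have h5 : b' y ≤ c' * s := by linarith
          have h6 : c * s + 1 ≤ b y := by linarith
          nlinarith
      simp only [h, if_false]
      split_ifs <;> first | (exfalso; tauto) | norm_num
  · have h1 : e = 1 := by omega
    have h2 : e' = 0 := by omega
    subst h1 h2
    refine ⟨_, Q_lt (c • b') (c' • b), fun ⟨y, s⟩ => ?_⟩
    simp only [AddMonoidHom.coe_smul, Pi.smul_apply, smul_eq_mul]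
    by_cases h : c * b' y < c' * b y
    · have : b y - 1 < c * s → b' y - 0 < c' * s := by
        intro h1
        have h5 : b y ≤ c * s := by linarith
        by_contra h3
        nlinarith
      simp only [h, if_true]
      split_ifs <;> first | (exfalso; tauto) | norm_num
    · have : b' y - 0 < c' * s → b y - 1 < c * s := by
        intro h1
        by_contra h3
        have h5 : c * s + 1 ≤ b y := by linarith
        nlinarith
      simp only [h, if_false]
      split_ifs <;> first | (exfalso; tauto) | norm_num

lemma N_mul {F F' : G × ℤ → ℚ} (hF : F ∈ N G) (hF' : F' ∈ N G) : F * F' ∈ N G := by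
  have : N G * N G ≤ N G := by
    unfold N
    rw [Submodule.span_mul_span, Submodule.span_le]
    rintro _ ⟨_, ⟨h, hh, I, hI, H, hH, rfl⟩, _, ⟨h', hh', J, hJ, H', hH', rfl⟩, rfl⟩
    obtain ⟨k, hk, hkk⟩ := Thr_mul hI hJ
    have e1 := N_mem (Q_mul (Q_mul hh hh') hk) hI (W_mul hH hH')
    have e2 := N_mem (Q_mul (Q_mul hh hh') (Q_sub (Q_const 1) hk)) hJ (W_mul hH hH')
    have := (N G).add_mem e1 e2
    refine (congrArg (· ∈ N G) ?_).mpr this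
    ext z
    simp only [Pi.mul_apply, Pi.add_apply]
    linear_combination h z.1 * h' z.1 * H z.2 * H' z.2 * hkk z
  exact this (Submodule.mul_mem_mul hF hF')

lemma hom_prod (l : G × ℤ →+ ℤ) : ∃ (a : G →+ ℤ) (c : ℤ), ∀ y s, l (y, s) = a y + c * s := by
  refine ⟨l.comp (AddMonoidHom.inl G ℤ), l (0, 1), fun y s => ?_⟩
  have h1 : (y, s) = (y, 0) + s • ((0 : G), (1:ℤ)) := by simp
  rw [h1, map_add, map_zsmul]; simp [mul_comm]

lemma Q_le_N {F : G × ℤ → ℚ} (hF : F ∈ Q (G × ℤ)) : F ∈ N G := by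
  induction hF using Algebra.adjoin_induction with
  | mem f hf =>
    rcases hf with ⟨l, rfl⟩ | ⟨l, rfl⟩ | ⟨l, m, r, hm, rfl⟩
    · obtain ⟨a, c, h⟩ := hom_prod l
      have e1 := N_mem (Q_lin a) (Or.inl rfl) (W_const 1)
      have e2 := N_mem (G := G) (Q_const c) (Or.inl rfl) W_id
      convert (N G).add_mem e1 e2 using 1
      ext ⟨y, s⟩
      simp [h]
    · obtain ⟨a, c, h⟩ := hom_prod l
      rcases lt_trichotomy c 0 with hc | rfl | hc
      · have e1 := N_mem (G := G) (Q_const 1) (Or.inl rfl) (W_const 1)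
        have e2 := N_mem (G := G) (Q_const 1) (Or.inr ⟨a, -c, 1, by omega, Or.inr rfl, rfl⟩) (W_const 1)
        convert (N G).sub_mem e1 e2 using 1
        ext ⟨y, s⟩
        simp only [h, Pi.sub_apply]
        split_ifs <;> first | (exfalso; linarith) | norm_num
      · have := N_mem_h (Q_pos a)
        simpa [h] using this
      · have e2 := N_mem (G := G) (Q_const 1) (Or.inr ⟨-a, c, 0, hc, Or.inl rfl, rfl⟩) (W_const 1)
        convert e2 using 1
        ext ⟨y, s⟩
        simp only [h, AddMonoidHom.neg_apply]
        split_ifs <;> first | (exfalso; linarith) | (norm_num; linarith)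
    · obtain ⟨a, c, h⟩ := hom_prod l
      have : (fun z => if l z % m = r then (1:ℚ) else 0) = ∑ ρ ∈ Finset.Ico 0 m,
          fun z : G × ℤ => (fun y => (fun x : ℤ => if (x + c * ρ) % m = r then (1:ℚ) else 0) (a y)) z.1
            * 1 * (if z.2 % m = ρ then 1 else 0) := by
        ext ⟨y, s⟩
        rw [Finset.sum_apply, Finset.sum_eq_single (s % m)]
        · simp [h, Int.add_emod, Int.mul_emod]
        · intro b _ hb; simp [Ne.symm hb]
        · intro h; exfalso; apply h; simp [Int.emod_nonneg _ hm.ne', Int.emod_lt_of_pos _ hm]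
      rw [this]
      refine (N G).sum_mem fun ρ _ => N_mem (I := fun _ => 1)
        (Q_per a m hm (fun x : ℤ => if (x + c * ρ) % m = r then (1:ℚ) else 0) ?_)
        (Or.inl rfl) (W_mod m ρ hm)
      intro x; simp
  | algebraMap r => exact N_mem_h (Q_const r)
  | add f g _ _ h1 h2 => exact (N G).add_mem h1 h2
  | mul f g _ _ h1 h2 => exact N_mul h1 h2

lemma Q_W_snd {H : ℤ → ℚ} (hH : W H) : (fun z : G × ℤ => H z.2) ∈ Q (G × ℤ) := by
  have := Q_W_floor hH (AddMonoidHom.snd G ℤ) 1 1 one_pos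
  simpa using this

lemma Q_anti {F : G × ℤ → ℚ} (hF : F ∈ N G) :
    ∃ H ∈ Q (G × ℤ), ∀ y s, H (y, s + 1) - H (y, s) = F (y, s) := by
  induction hF using Submodule.span_induction with
  | mem F hF =>
    obtain ⟨h, hh, I, hI, H, hH, rfl⟩ := hF
    obtain ⟨K, hK, hKH⟩ := W_anti hH
    have hh' : (fun z : G × ℤ => h z.1) ∈ Q (G × ℤ) := Q_comp (AddMonoidHom.fst G ℤ) hh
    rcases hI with rfl | ⟨b, c, e, hc, he, rfl⟩
    · refine ⟨_, Q_mul hh' (Q_W_snd hK), fun y s => ?_⟩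
      simp only [mul_one]
      linear_combination h y * hKH s
    · have hL : (fun z : G × ℤ => K ((b z.1 - e) / c + 1)) ∈ Q (G × ℤ) :=
        Q_comp (AddMonoidHom.fst G ℤ) (Q_W_floor hK b e c hc)
      have hI : (fun z : G × ℤ => if b z.1 - e < c * z.2 then (1:ℚ) else 0) ∈ Q (G × ℤ) := by
        rcases he with rfl | rfl
        · have := Q_lt (b.comp (AddMonoidHom.fst G ℤ)) (c • AddMonoidHom.snd G ℤ)
          convert this using 3 with z
          simp
        · have := Q_le (b.comp (AddMonoidHom.fst G ℤ)) (c • AddMonoidHom.snd G ℤ)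
          convert this using 3 with z
          simp
      refine ⟨_, Q_mul hh' (Q_mul hI (Q_sub (Q_W_snd hK) hL)), fun y s => ?_⟩
      simp only []
      by_cases h1 : b y - e < c * s
      · have h2 : b y - e < c * (s + 1) := by nlinarith
        rw [if_pos h1, if_pos h2]
        linear_combination h y * hKH s
      · rw [if_neg h1]
        by_cases h2 : b y - e < c * (s + 1)
        · have : (b y - e) / c = s := by
            apply le_antisymm
            · have : (b y - e) / c < s + 1 := Int.ediv_lt_of_lt_mul hc (by linarith)
              omega
            · exact (Int.le_ediv_iff_mul_le hc).2 (by linarith)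
          rw [if_pos h2, this]; ring
        · rw [if_neg h2]; ring
  | zero => exact ⟨0, (Q _).zero_mem, by simp⟩
  | add F F' _ _ h1 h2 =>
    obtain ⟨H, hH, h⟩ := h1
    obtain ⟨H', hH', h'⟩ := h2
    exact ⟨_, Q_add hH hH', fun y s => by simp only [Pi.add_apply]; linarith [h y s, h' y s]⟩
  | smul a F _ h1 =>
    obtain ⟨H, hH, h⟩ := h1
    exact ⟨_, Q_mul (Q_const a) hH, fun y s => by
      simp only [Pi.smul_apply, smul_eq_mul]; linear_combination a * (h y s)⟩

lemma sum_Ico_tele (H : ℤ → ℚ) (a b : ℤ) (hab : a ≤ b) :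
    ∑ s ∈ Finset.Ico a b, (H (s+1) - H s) = H b - H a := by
  induction b, hab using Int.leInduction with
  | base => simp
  | succ n hn ih =>
    have : Finset.Ico a (n+1) = insert n (Finset.Ico a n) := by
      ext x; simp; omega
    rw [this, Finset.sum_insert (by simp), ih]; ring

theorem Q_sum_out {F : G × ℤ → ℚ} (hF : F ∈ Q (G × ℤ)) (α β : G →+ ℤ) :
    (fun y => ∑ s ∈ Finset.Ico (α y) (β y), F (y, s)) ∈ Q G := by
  obtain ⟨H, hH, h⟩ := Q_anti (Q_le_N hF)
  have e : ∀ γ : G →+ ℤ, (fun y => H (y, γ y)) ∈ Q G := fun γ =>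
    Q_comp ((AddMonoidHom.id G).prod γ) hH
  convert Q_mul (Q_le α β) (Q_sub (e β) (e α)) using 2 with y
  split_ifs with hab
  · simp_rw [← h]
    rw [one_mul, sum_Ico_tele (fun s => H (y, s)) _ _ hab]
  · rw [Finset.Ico_eq_empty (by omega)]; simp

/-- Summing out a tuple of planar lattice points from a box. -/
theorem Q_sum_tuple (q : ℕ) : ∀ {G : Type} [AddCommGroup G] {F : G × (Fin q → ℤ × ℤ) → ℚ}
    (_ : F ∈ Q (G × (Fin q → ℤ × ℤ))) (α β : G →+ ℤ),
    (fun y => ∑ z ∈ Fintype.piFinset (fun _ : Fin q =>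
      Finset.Ico (α y) (β y) ×ˢ Finset.Ico (α y) (β y)), F (y, z)) ∈ Q G := by
  induction q with
  | zero =>
    intro G _ F hF α β
    have := Q_comp ((AddMonoidHom.id G).prod (0 : G →+ (Fin 0 → ℤ × ℤ))) hF
    convert this using 2 with y
    rw [Fintype.piFinset_of_isEmpty, Finset.univ_unique, Finset.sum_singleton]
    congr 2
    exact Subsingleton.elim _ _
  | succ q ih =>
    intro G _ F hF α β
    -- the map `((y, a), b), z ↦ (y, cons (a,b) z)`
    let φ : (((G × ℤ) × ℤ) × (Fin q → ℤ × ℤ)) →+ G × (Fin (q+1) → ℤ × ℤ) :=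
      { toFun := fun w => (w.1.1.1, Fin.cons (w.1.1.2, w.1.2) w.2)
        map_zero' := by
          ext i
          · rfl
          · refine Fin.cases ?_ (fun i => ?_) i <;> simp
          · refine Fin.cases ?_ (fun i => ?_) i <;> simp
        map_add' := by
          intro u v
          refine Prod.ext rfl ?_
          funext i
          refine Fin.cases ?_ (fun i => ?_) i <;> simp }
    have h1 := Q_comp φ hF
    let p2 : (G × ℤ) × ℤ →+ G := (AddMonoidHom.fst G ℤ).comp (AddMonoidHom.fst (G × ℤ) ℤ)
    let p1 : G × ℤ →+ G := AddMonoidHom.fst G ℤ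
    have h2 := ih h1 (α.comp p2) (β.comp p2)
    have h3 := Q_sum_out h2 (α.comp p1) (β.comp p1)
    have h4 := Q_sum_out h3 α β
    convert h4 using 2 with y
    simp only [AddMonoidHom.comp_apply, AddMonoidHom.coe_mk, ZeroHom.coe_mk, p1, p2, φ,
      AddMonoidHom.coe_fst]
    rw [← Finset.sum_product', ← Finset.sum_product']
    refine Finset.sum_bij' (fun z _ => (z 0, Fin.tail z)) (fun w _ => Fin.cons w.1 w.2) ?_ ?_ ?_ ?_ ?_
    · intro z hz
      simp only [Fintype.mem_piFinset] at hz
      simp only [Finset.mem_product, Fintype.mem_piFinset]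
      refine ⟨?_, fun i => ?_⟩
      · simpa using hz 0
      · simpa [Fin.tail] using hz i.succ
    · intro w hw
      simp only [Finset.mem_product, Fintype.mem_piFinset] at hw ⊢
      intro i
      refine Fin.cases ?_ (fun i => ?_) i
      · simpa using hw.1
      · simpa using hw.2 i
    · intro z _; simp
    · intro w _; simp
    · intro z _; simp
end sumout
end CT
namespace CT
open Polynomial

section dfn
variable {G : Type} [AddCommGroup G]
open Classical in
/-- definable predicates -/
def Dq (p : G → Prop) : Prop := (fun y => if p y then (1:ℚ) else 0) ∈ Q G

lemma Dq_congr {p p' : G → Prop} (h : ∀ y, p y ↔ p' y) (hp : Dq p) : Dq p' := by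
  have : p = p' := by ext y; exact h y
  exact this ▸ hp
lemma Dq_not {p : G → Prop} (hp : Dq p) : Dq (fun y => ¬ p y) := by
  classical
  have := Q_sub (Q_const 1) hp
  unfold Dq
  convert this using 2 with y
  by_cases h : p y <;> simp [h]
lemma Dq_and {p r : G → Prop} (hp : Dq p) (hr : Dq r) : Dq (fun y => p y ∧ r y) := by
  classical
  have := Q_mul hp hr
  unfold Dq
  convert this using 2 with y
  by_cases h : p y <;> by_cases h' : r y <;> simp [h, h']
lemma Dq_or {p r : G → Prop} (hp : Dq p) (hr : Dq r) : Dq (fun y => p y ∨ r y) :=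
  Dq_congr (fun y => by tauto) (Dq_not (Dq_and (Dq_not hp) (Dq_not hr)))
lemma Dq_true : Dq (fun _ : G => True) := by
  unfold Dq; simpa using Q_const (G := G) 1
lemma Dq_imp_const (c : Prop) {p : G → Prop} (hp : c → Dq p) : Dq (fun y => c → p y) := by
  by_cases h : c
  · exact Dq_congr (fun y => by tauto) (hp h)
  · exact Dq_congr (fun y => by tauto) (Dq_true)
lemma Dq_all {α : Type*} (s : Finset α) {p : α → G → Prop} (hp : ∀ a ∈ s, Dq (p a)) :
    Dq (fun y => ∀ a ∈ s, p a y) := by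
  classical
  induction s using Finset.induction_on with
  | empty => exact Dq_congr (fun y => by simp) Dq_true
  | insert a s ha ih =>
    refine Dq_congr (fun y => ?_) (Dq_and (hp a (by simp)) (ih fun b hb => hp b (by simp [hb])))
    simp
lemma Dq_all_fin {α : Type*} [Fintype α] {p : α → G → Prop} (hp : ∀ a, Dq (p a)) :
    Dq (fun y => ∀ a, p a y) :=
  Dq_congr (fun y => by simp) (Dq_all Finset.univ (fun a _ => hp a))
lemma Dq_ex {α : Type*} (s : Finset α) {p : α → G → Prop} (hp : ∀ a ∈ s, Dq (p a)) :
    Dq (fun y => ∃ a ∈ s, p a y) :=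
  Dq_congr (fun y => by simp) (Dq_not (Dq_all s (fun a ha => Dq_not (hp a ha))))
lemma Dq_pos (l : G →+ ℤ) : Dq (fun y => 0 < l y) := by
  have := Q_pos l
  unfold Dq
  convert this
lemma Dq_le0 (l : G →+ ℤ) : Dq (fun y => l y ≤ 0) :=
  Dq_congr (fun y => by simp) (Dq_not (Dq_pos l))
lemma Dq_ne0 (l : G →+ ℤ) : Dq (fun y => l y ≠ 0) :=
  Dq_congr (fun y => by simp; omega) (Dq_or (Dq_pos l) (Dq_pos (-l)))
lemma Dq_comp {G' : Type} [AddCommGroup G'] (φ : G →+ G') {p : G' → Prop} (hp : Dq p) :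
    Dq (fun y => p (φ y)) := Q_comp φ hp
end dfn

lemma Q_Z {f : ℤ → ℚ} (hf : f ∈ Q ℤ) : ∃ H, W H ∧ ∀ t, 1 ≤ t → f t = H t := by
  induction hf using Algebra.adjoin_induction with
  | mem f hf =>
    have hl : ∀ (l : ℤ →+ ℤ) t, l t = t * l 1 := fun l t => by
      have := map_zsmul l t 1
      simpa using this
    rcases hf with ⟨l, rfl⟩ | ⟨l, rfl⟩ | ⟨l, m, r, hm, rfl⟩
    · exact ⟨_, W_mul W_id (W_const (l 1)), fun t _ => by simp only []; rw [hl]; push_cast; rfl⟩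
    · refine ⟨_, W_const (if 0 < l 1 then 1 else 0), fun t ht => ?_⟩
      simp only []; rw [hl]
      have : 0 < t * l 1 ↔ 0 < l 1 := by
        constructor
        · intro h; exact pos_of_mul_pos_right h (by omega)
        · intro h; positivity
      simp [this]
    · refine ⟨_, ⟨m, hm, fun t => if l t % m = r then 1 else 0, fun s => ?_, fun s => rfl⟩,
        fun t _ => ?_⟩
      · simp only []; rw [hl, hl l (s % m)]; simp [Int.mul_emod]
      · simp only []; split_ifs <;> simp
  | algebraMap r => exact ⟨_, W_const r, fun t _ => rfl⟩
  | add f g _ _ h1 h2 =>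
    obtain ⟨H, hH, h⟩ := h1
    obtain ⟨H', hH', h'⟩ := h2
    exact ⟨_, W_add hH hH', fun t ht => by simp [h t ht, h' t ht]⟩
  | mul f g _ _ h1 h2 =>
    obtain ⟨H, hH, h⟩ := h1
    obtain ⟨H', hH', h'⟩ := h2
    exact ⟨_, W_mul hH hH', fun t ht => by simp [h t ht, h' t ht]⟩

/-- quasipolynomial sequences -/
def QP (a : ℕ → ℚ) (m : ℕ) (p : ℕ → ℚ[X]) : Prop :=
  0 < m ∧ (∀ n, p (n + m) = p n) ∧ ∀ n, a n = (p n).eval (n : ℚ)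

lemma QP_of_Q {f : ℤ → ℚ} (hf : f ∈ Q ℤ) : ∃ m p, QP (fun n => f ((n:ℤ) + 1)) m p := by
  obtain ⟨H, hH, h⟩ := Q_Z hf
  obtain ⟨m, hm, p, hp, h'⟩ := W_shift hH 1
  refine ⟨m.toNat, fun n => p n, by omega, fun n => ?_, fun n => ?_⟩
  · simp only []
    push_cast
    rw [Int.toNat_of_nonneg hm.le, hp ((n:ℤ) + m), hp n]; simp
  · simp only []
    rw [h _ (by omega)]; exact_mod_cast h' n

def det (u v : ℝ × ℝ) : ℝ := u.1 * v.2 - u.2 * v.1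

lemma not_mem_interior_iff (V : Finset (ℝ × ℝ)) (B : Set (ℝ × ℝ))
    (hB : B = convexHull ℝ (V : Set (ℝ × ℝ))) (hBint : (interior B).Nonempty) (x : ℝ × ℝ) :
    x ∉ interior B ↔ ∃ w ∈ V, w ≠ x ∧ ((∀ v ∈ V, det (w - x) (v - x) ≤ 0) ∨
      (∀ v ∈ V, - det (w - x) (v - x) ≤ 0)) := by
  have hconv : Convex ℝ B := hB ▸ convex_convexHull ℝ _
  have hVB : ∀ v ∈ V, v ∈ B := fun v hv => hB ▸ subset_convexHull ℝ _ hv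
  constructor
  · intro hx
    obtain ⟨f, hf⟩ := geometric_hahn_banach_open_point hconv.interior isOpen_interior hx
    have hfB : ∀ b ∈ B, f b ≤ f x := by
      intro b hb
      have h1 : b ∈ closure (interior B) := by
        rw [hconv.closure_interior_eq_closure_of_nonempty_interior hBint]
        exact subset_closure hb
      have h2 : closure (interior B) ⊆ {y | f y ≤ f x} :=
        closure_minimal (fun a ha => (hf a ha).le) (isClosed_le f.continuous continuous_const)
      exact h2 h1
    obtain ⟨a, ha⟩ := hBint
    have hfax := hf a ha
    set α := f (1, 0)
    set β := f (0, 1)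
    have hfe : ∀ u : ℝ × ℝ, f u = α * u.1 + β * u.2 := by
      intro u
      have : u = u.1 • ((1:ℝ), (0:ℝ)) + u.2 • ((0:ℝ), (1:ℝ)) := by ext <;> simp
      conv_lhs => rw [this]
      rw [map_add, map_smul, map_smul]; simp [α, β]; ring
    have hpos : 0 < α ^ 2 + β ^ 2 := by
      by_contra h
      have h1 : α = 0 := by nlinarith [sq_nonneg α, sq_nonneg β]
      have h2 : β = 0 := by nlinarith [sq_nonneg α, sq_nonneg β]
      rw [hfe, hfe x, h1, h2] at hfax
      simp at hfax
    have hne : (V.filter (· ≠ x)).Nonempty := by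
      by_contra h
      rw [Finset.not_nonempty_iff_eq_empty, Finset.filter_eq_empty_iff] at h
      push Not at h
      have h1 : B ⊆ {x} := by
        rw [hB]
        exact convexHull_min (fun v hv => h hv) (convex_singleton x)
      have := h1 (interior_subset ha)
      simp only [Set.mem_singleton_iff] at this
      rw [this] at hfax
      exact lt_irrefl _ hfax
    let h : ℝ × ℝ → ℝ := fun u => -β * u.1 + α * u.2
    have hid : ∀ u v, (α^2+β^2) * det u v = f u * h v - h u * f v := by
      intro u v; rw [hfe, hfe]; simp only [h, det]; ring
    have hfV : ∀ v ∈ V, f (v - x) ≤ 0 := fun v hv => by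
      rw [map_sub]; linarith [hfB v (hVB v hv)]
    by_cases hc : ∃ w ∈ V, w ≠ x ∧ f (w - x) = 0
    · obtain ⟨w, hw, hwx, hw0⟩ := hc
      refine ⟨w, hw, hwx, ?_⟩
      rcases le_total 0 (h (w - x)) with h1 | h1
      · right
        intro v hv
        have := hid (w - x) (v - x)
        rw [hw0] at this
        have h2 := hfV v hv
        by_contra h3
        push Not at h3
        nlinarith [mul_nonneg h1 (neg_nonneg.2 h2)]
      · left
        intro v hv
        have := hid (w - x) (v - x)
        rw [hw0] at this
        have h2 := hfV v hv
        by_contra h3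
        push Not at h3
        nlinarith [mul_nonneg (neg_nonneg.2 h1) (neg_nonneg.2 h2)]
    · push Not at hc
      obtain ⟨w, hw, hmax⟩ := Finset.exists_max_image _ (fun v => h (v - x) / f (v - x)) hne
      rw [Finset.mem_filter] at hw
      refine ⟨w, hw.1, hw.2, Or.inl fun v hv => ?_⟩
      by_cases hvx : v = x
      · simp [hvx, det]
      have h1 : f (v - x) < 0 := lt_of_le_of_ne (hfV v hv) (hc v hv hvx)
      have h2 : f (w - x) < 0 := lt_of_le_of_ne (hfV w hw.1) (hc w hw.1 hw.2)
      have h3 := hmax v (Finset.mem_filter.2 ⟨hv, hvx⟩)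
      rw [← neg_div_neg_eq (h (v - x)), ← neg_div_neg_eq (h (w - x)),
        div_le_div_iff₀ (neg_pos.2 h1) (neg_pos.2 h2)] at h3
      have := hid (w - x) (v - x)
      by_contra h4
      push Not at h4
      nlinarith
  · rintro ⟨w, hw, hwx, hcase⟩ hx
    obtain ⟨ε, hε, hv⟩ : ∃ ε : ℝ, ε ^ 2 = 1 ∧ ∀ v ∈ V, ε * det (w - x) (v - x) ≤ 0 := by
      rcases hcase with h | h
      · exact ⟨1, by norm_num, by simpa using h⟩
      · exact ⟨-1, by norm_num, by simpa using h⟩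
    have hBf : ∀ b ∈ B, ε * det (w - x) (b - x) ≤ 0 := by
      have hc : Convex ℝ {b : ℝ × ℝ | ε * det (w - x) (b - x) ≤ 0} := by
        intro a ha b hb s t hs ht hst
        simp only [Set.mem_ofPred_eq] at ha hb ⊢
        have : det (w - x) (s • a + t • b - x) = s * det (w - x) (a - x) + t * det (w-x) (b-x) := by
          have hs' : s = 1 - t := by linarith
          subst hs'
          simp [det]; ring
        rw [this]
        nlinarith [mul_nonneg hs (neg_nonneg.2 ha), mul_nonneg ht (neg_nonneg.2 hb)]
      intro b hb
      rw [hB] at hb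
      exact convexHull_min (fun v h => hv v h) hc hb
    -- move in the bad direction
    let u : ℝ × ℝ := (ε * -(w - x).2, ε * (w - x).1)
    have hcont : Filter.Tendsto (fun δ : ℝ => x + δ • u) (nhdsWithin 0 (Set.Ioi 0)) (nhds x) := by
      have : Continuous (fun δ : ℝ => x + δ • u) := by fun_prop
      have := this.tendsto 0
      simp only [zero_smul, add_zero] at this
      exact this.mono_left nhdsWithin_le_nhds
    have hev := hcont.eventually (mem_interior_iff_mem_nhds.1 hx)
    obtain ⟨δ, hδB, hδ⟩ := (hev.and self_mem_nhdsWithin).exists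
    have := hBf _ hδB
    have e : ε * det (w - x) (x + δ • u - x) = δ * ((w-x).1^2 + (w-x).2^2) := by
      simp [det, u]
      linear_combination δ * ((w.1-x.1)^2 + (w.2-x.2)^2) * hε
    rw [e] at this
    have hδ' : 0 < δ := hδ
    have h0 : (w-x).1^2 + (w-x).2^2 ≤ 0 := by
      by_contra h; push Not at h; nlinarith [mul_pos hδ' h]
    apply hwx
    have h1 : (w-x).1 = 0 := by nlinarith [sq_nonneg (w-x).1, sq_nonneg (w-x).2]
    have h2 : (w-x).2 = 0 := by nlinarith [sq_nonneg (w-x).1, sq_nonneg (w-x).2]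
    exact Prod.ext (sub_eq_zero.1 h1) (sub_eq_zero.1 h2)
end CT
namespace CT
open Polynomial Pointwise

def lin3 (a b c : ℤ) : ℤ × (ℤ × ℤ) →+ ℤ where
  toFun y := a * y.1 + b * y.2.1 + c * y.2.2
  map_zero' := by simp
  map_add' := by intro x y; simp; ring

/-- lattice point as a real point -/
def rp (z : ℤ × ℤ) : ℝ × ℝ := ((z.1 : ℝ), (z.2 : ℝ))

lemma common_denom (V : Finset (ℝ × ℝ)) (hV : ∀ v ∈ V, ∃ a b : ℚ, v = ((a : ℝ), (b : ℝ))) :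
    ∃ D : ℤ, 0 < D ∧ ∀ v ∈ V, ∃ a b : ℤ, (D:ℝ) * v.1 = a ∧ (D:ℝ) * v.2 = b := by
  classical
  induction V using Finset.induction_on with
  | empty => exact ⟨1, one_pos, by simp⟩
  | insert v V hv ih =>
    obtain ⟨D, hD, h⟩ := ih (fun v hv => hV v (by simp [hv]))
    obtain ⟨a, b, rfl⟩ := hV v (by simp)
    refine ⟨D * (a.den * b.den), by have := a.den_pos; have := b.den_pos; positivity, ?_⟩
    intro w hw
    rcases Finset.mem_insert.1 hw with rfl | hw
    · refine ⟨D * a.num * b.den, D * a.den * b.num, ?_, ?_⟩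
      · have : (a.den : ℝ) * a = a.num := by exact_mod_cast Rat.den_mul_eq_num a
        push_cast; linear_combination (D:ℝ) * b.den * this
      · have : (b.den : ℝ) * b = b.num := by exact_mod_cast Rat.den_mul_eq_num b
        push_cast; linear_combination (D:ℝ) * a.den * this
    · obtain ⟨x, y, hx, hy⟩ := h w hw
      refine ⟨x * (a.den * b.den), y * (a.den * b.den), ?_, ?_⟩
      · push_cast; rw [← hx]; ring
      · push_cast; rw [← hy]; ring

lemma board_def (V : Finset (ℝ × ℝ)) (hV : ∀ v ∈ V, ∃ a b : ℚ, v = ((a : ℝ), (b : ℝ)))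
    (B : Set (ℝ × ℝ)) (hB : B = convexHull ℝ (V : Set (ℝ × ℝ)))
    (hBint : (interior B).Nonempty) :
    ∃ S : ℤ × (ℤ × ℤ) → Prop, Dq S ∧
      ∀ t : ℤ, 1 ≤ t → ∀ z, S (t, z) ↔ rp z ∈ (t:ℝ) • interior B := by
  obtain ⟨D, hD, hDV⟩ := common_denom V hV
  choose! a b ha hb using hDV
  let L : ℝ × ℝ → ℝ × ℝ → (ℤ × (ℤ × ℤ) →+ ℤ) := fun w v =>
    lin3 (a w * b v - b w * a v) (D * b w - D * b v) (D * a v - D * a w)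
  refine ⟨fun y => ¬ ∃ w ∈ V, (lin3 (a w) (-D) 0 y ≠ 0 ∨ lin3 (b w) 0 (-D) y ≠ 0) ∧
    ((∀ v ∈ V, L w v y ≤ 0) ∨ (∀ v ∈ V, (-(L w v)) y ≤ 0)), ?_, ?_⟩
  · exact Dq_not (Dq_ex _ fun w _ => Dq_and (Dq_or (Dq_ne0 _) (Dq_ne0 _))
      (Dq_or (Dq_all _ fun v _ => Dq_le0 _) (Dq_all _ fun v _ => Dq_le0 _)))
  · intro t ht z
    have ht' : (0:ℝ) < t := by exact_mod_cast (by omega : 0 < t)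
    have hD' : (0:ℝ) < D := by exact_mod_cast hD
    rw [Set.mem_smul_set_iff_inv_smul_mem₀ ht'.ne', ← not_iff_not, not_not,
      not_mem_interior_iff V B hB hBint]
    refine exists_congr fun w => and_congr_right fun hw => ?_
    have hL : ∀ v ∈ V, ((L w v (t, z) : ℤ) : ℝ) =
        (D:ℝ)^2 * t * det (w - (t:ℝ)⁻¹ • rp z) (v - (t:ℝ)⁻¹ • rp z) := by
      intro v hv
      simp only [L, lin3, AddMonoidHom.coe_mk, ZeroHom.coe_mk, det, rp]
      push_cast
      rw [← ha w hw, ← hb w hw, ← ha v hv, ← hb v hv]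
      simp
      field_simp
      ring
    have hDt : 0 < (D:ℝ)^2 * t := by positivity
    refine and_congr ?_ (or_congr (forall₂_congr fun v hv => ?_) (forall₂_congr fun v hv => ?_))
    · rw [← not_iff_not]
      push Not
      simp only [lin3, AddMonoidHom.coe_mk, ZeroHom.coe_mk]
      have h1 : (a w * t + -D * z.1 + 0 * z.2 = 0) ↔ w.1 = (t:ℝ)⁻¹ * z.1 := by
        rw [← @Int.cast_inj ℝ]; push_cast; rw [← ha w hw]
        constructor
        · intro h; field_simp
          have : (D:ℝ) * (w.1 * t - z.1) = 0 := by linarith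
          rcases mul_eq_zero.1 this with h | h
          · exact absurd h hD'.ne'
          · linarith
        · intro h; rw [h]; field_simp; ring
      have h2 : (b w * t + 0 * z.1 + -D * z.2 = 0) ↔ w.2 = (t:ℝ)⁻¹ * z.2 := by
        rw [← @Int.cast_inj ℝ]; push_cast; rw [← hb w hw]
        constructor
        · intro h; field_simp
          have : (D:ℝ) * (w.2 * t - z.2) = 0 := by linarith
          rcases mul_eq_zero.1 this with h | h
          · exact absurd h hD'.ne'
          · linarith
        · intro h; rw [h]; field_simp; ring
      rw [h1, h2, Prod.ext_iff]
      simp [rp]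
    · rw [← @Int.cast_le ℝ, hL v hv, Int.cast_zero]
      constructor
      · intro h; by_contra h'; push Not at h'; nlinarith [mul_pos hDt h']
      · intro h; exact mul_nonpos_of_nonneg_of_nonpos hDt.le h
    · rw [← @Int.cast_le ℝ, AddMonoidHom.neg_apply, Int.cast_neg, hL v hv, Int.cast_zero]
      constructor
      · intro h; by_contra h'; push Not at h'; nlinarith [mul_pos hDt h']
      · intro h; have := mul_nonpos_of_nonneg_of_nonpos hDt.le h; linarith

lemma board_bdd (V : Finset (ℝ × ℝ))
    (B : Set (ℝ × ℝ)) (hB : B = convexHull ℝ (V : Set (ℝ × ℝ))) :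
    ∃ K : ℕ, 0 < K ∧ ∀ t : ℤ, 1 ≤ t → ∀ z : ℤ × ℤ, rp z ∈ (t:ℝ) • interior B →
      z ∈ Finset.Ico (-(K * t)) (K * t) ×ˢ Finset.Ico (-(K * t)) (K * t) := by
  have hbd : Bornology.IsBounded B := by
    rw [hB]; exact (isBounded_convexHull).2 V.finite_toSet.isBounded
  obtain ⟨R, hR⟩ := hbd.exists_norm_le
  obtain ⟨K, hK⟩ := exists_nat_gt (max R 0)
  refine ⟨K, by have := (le_max_right R 0).trans_lt hK; exact_mod_cast this, fun t ht z hz => ?_⟩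
  have ht' : (0:ℝ) < t := by exact_mod_cast (by omega : 0 < t)
  obtain ⟨x, hx, hxz⟩ := hz
  have h1 := (hR x (interior_subset hx)).trans_lt ((le_max_left R 0).trans_lt hK)
  simp only at hxz
  rw [Prod.norm_def, max_lt_iff, Real.norm_eq_abs, Real.norm_eq_abs, abs_lt, abs_lt] at h1
  have e1 : (t:ℝ) * x.1 = z.1 := congrArg Prod.fst hxz
  have e2 : (t:ℝ) * x.2 = z.2 := congrArg Prod.snd hxz
  have f1 : (-(K * t) : ℝ) < z.1 := by nlinarith
  have f2 : (z.1 : ℝ) < K * t := by nlinarith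
  have f3 : (-(K * t) : ℝ) < z.2 := by nlinarith
  have f4 : (z.2 : ℝ) < K * t := by nlinarith
  have f1' : -(K * t) < z.1 := by exact_mod_cast f1
  have f2' : z.1 < K * t := by exact_mod_cast f2
  have f3' : -(K * t) < z.2 := by exact_mod_cast f3
  have f4' : z.2 < K * t := by exact_mod_cast f4
  simp only [Finset.mem_product, Finset.mem_Ico]
  omega

def att (M : Finset (ℤ × ℤ)) (z w : ℤ × ℤ) : Prop :=
  ∃ m ∈ M, (w.1 - z.1) * m.2 - (w.2 - z.2) * m.1 = 0

/-- nonattacking configurations indexed by `ι` -/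
def conf (M : Finset (ℤ × ℤ)) (E : Finset (ℤ × ℤ)) (ι : Type) : Set (ι → ℤ × ℤ) :=
  {z | (∀ i, z i ∈ E) ∧ ∀ i j, i ≠ j → ¬ att M (z i) (z j)}

/-- the lattice points of the board exist as a finset -/
lemma exists_E (V : Finset (ℝ × ℝ))
    (B : Set (ℝ × ℝ)) (hB : B = convexHull ℝ (V : Set (ℝ × ℝ))) :
    ∃ E : ℕ → Finset (ℤ × ℤ), ∀ n z, z ∈ E n ↔ rp z ∈ ((n:ℝ) + 1) • interior B := by
  classical
  obtain ⟨K, hK, h⟩ := board_bdd V B hB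
  refine ⟨fun n => (Finset.Ico (-(K * ((n:ℤ)+1))) (K * ((n:ℤ)+1)) ×ˢ
    Finset.Ico (-(K * ((n:ℤ)+1))) (K * ((n:ℤ)+1))).filter
      fun z => rp z ∈ ((n:ℝ) + 1) • interior B, fun n z => ?_⟩
  rw [Finset.mem_filter, and_iff_right_iff_imp]
  intro hz
  exact h (n+1) (by omega) z (by push_cast; exact hz)

theorem conf_QP (M : Finset (ℤ × ℤ))
    (V : Finset (ℝ × ℝ)) (hV : ∀ v ∈ V, ∃ a b : ℚ, v = ((a : ℝ), (b : ℝ)))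
    (B : Set (ℝ × ℝ)) (hB : B = convexHull ℝ (V : Set (ℝ × ℝ)))
    (hBint : (interior B).Nonempty)
    (E : ℕ → Finset (ℤ × ℤ)) (hE : ∀ n z, z ∈ E n ↔ rp z ∈ ((n:ℝ) + 1) • interior B) (q : ℕ) :
    ∃ m p, QP (fun n => ((conf M (E n) (Fin q)).ncard : ℚ)) m p := by
  classical
  obtain ⟨S, hS, hS'⟩ := board_def V hV B hB hBint
  obtain ⟨K, hK, hbd⟩ := board_bdd V B hB
  let G := ℤ × (Fin q → ℤ × ℤ)
  let ev : Fin q → (G →+ ℤ × ℤ) := fun i =>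
    (Pi.evalAddMonoidHom (fun _ => ℤ × ℤ) i).comp (AddMonoidHom.snd ℤ _)
  let ev' : Fin q → (G →+ ℤ × (ℤ × ℤ)) := fun i => (AddMonoidHom.fst ℤ _).prod (ev i)
  let lm : ℤ × ℤ → (ℤ × ℤ →+ ℤ) := fun m =>
    { toFun := fun d => d.1 * m.2 - d.2 * m.1
      map_zero' := by simp
      map_add' := by intro x y; simp; ring }
  have hD : Dq (fun y : G => (∀ i, S (ev' i y)) ∧ ∀ i j, i ≠ j →
      ∀ m ∈ M, (lm m).comp (ev j - ev i) y ≠ 0) :=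
    Dq_and (Dq_all_fin fun i => Dq_comp (ev' i) hS)
      (Dq_all_fin fun i => Dq_all_fin fun j => Dq_imp_const _ fun _ => Dq_all _ fun m _ => Dq_ne0 _)
  have hsum := Q_sum_tuple q hD (-((K:ℤ) • AddMonoidHom.id ℤ)) ((K:ℤ) • AddMonoidHom.id ℤ)
  obtain ⟨m, p, hp⟩ := QP_of_Q hsum
  refine ⟨m, p, hp.1, hp.2.1, fun n => ?_⟩
  rw [← hp.2.2 n]
  simp only [AddMonoidHom.neg_apply, AddMonoidHom.coe_smul, Pi.smul_apply, AddMonoidHom.id_apply,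
    smul_eq_mul]
  let P : (Fin q → ℤ × ℤ) → Prop := fun x => (∀ i, S (ev' i ((n:ℤ)+1, x))) ∧
    ∀ i j, i ≠ j → ∀ m ∈ M, (lm m).comp (ev j - ev i) ((n:ℤ)+1, x) ≠ 0
  trans (((Fintype.piFinset fun _ : Fin q => Finset.Ico (-((K:ℤ) * ((n:ℤ) + 1))) ((K:ℤ) * ((n:ℤ) + 1)) ×ˢ
    Finset.Ico (-((K:ℤ) * ((n:ℤ) + 1))) ((K:ℤ) * ((n:ℤ) + 1))).filter P).card : ℚ)
  swap
  · rw [← Finset.sum_boole]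
    exact Finset.sum_congr rfl fun z _ => by congr
  rw [← Set.ncard_coe_finset]
  congr 2
  ext z
  have hn : ((( (n:ℤ) + 1 : ℤ)) : ℝ) = (n:ℝ) + 1 := by push_cast; rfl
  have hmem : ∀ i, S (ev' i ((n:ℤ)+1, z)) ↔ z i ∈ E n := by
    intro i
    rw [hE, ← hn, ← hS' _ (by omega)]
    rfl
  simp only [conf, Set.mem_ofPred_eq, Finset.coe_filter, Fintype.mem_piFinset, hmem, P]
  constructor
  · rintro ⟨h1, h2⟩
    refine ⟨fun i => ?_, h1, fun i j hij m hm h => h2 i j hij ⟨m, hm, h⟩⟩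
    exact hbd (n+1) (by omega) _ (by rw [hn]; exact (hE n _).1 (h1 i))
  · rintro ⟨_, h1, h2⟩
    exact ⟨h1, fun i j hij ⟨m, hm, h⟩ => h2 i j hij m hm h⟩
end CT
namespace CT
open Classical

lemma att_symm {M : Finset (ℤ × ℤ)} {z w : ℤ × ℤ} (h : att M z w) : att M w z := by
  obtain ⟨m, hm, h⟩ := h
  exact ⟨m, hm, by linarith⟩

/-- attack graph of a configuration -/
def Gz (M : Finset (ℤ × ℤ)) {ι : Type} (z : ι → ℤ × ℤ) : SimpleGraph ι where
  Adj i j := i ≠ j ∧ att M (z i) (z j)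
  symm := ⟨fun _ _ h => ⟨h.1.symm, att_symm h.2⟩⟩
  loopless := ⟨fun _ h => h.1 rfl⟩

section graph
variable {ι : Type} [Fintype ι]

def Ind (G : SimpleGraph ι) (S : Finset ι) : Prop := ∀ i ∈ S, ∀ j ∈ S, ¬ G.Adj i j

noncomputable def Iw (G : SimpleGraph ι) (U : Finset ι) : ℤ :=
  ∑ S ∈ U.powerset, if Ind G S then (-1) ^ S.card else 0

noncomputable def wt (G : SimpleGraph ι) : ℤ :=
  ∑ S ∈ (Finset.univ : Finset ι).powerset, (-1) ^ (Fintype.card ι - S.card) * if Ind G S then 1 else 0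

lemma wt_eq (G : SimpleGraph ι) : wt G = (-1) ^ Fintype.card ι * Iw G Finset.univ := by
  unfold wt Iw
  rw [Finset.mul_sum]
  refine Finset.sum_congr rfl fun S _ => ?_
  have h : S.card ≤ Fintype.card ι := Finset.card_le_univ S
  split_ifs
  · obtain ⟨k, hk⟩ := Nat.exists_eq_add_of_le h
    rw [hk, Nat.add_sub_cancel_left, pow_add]
    have : ((-1:ℤ)^S.card) * (-1)^S.card = 1 := by rw [← mul_pow]; simp
    linear_combination (-((-1:ℤ)^k)) * this
  · simp

lemma wt_abs (G : SimpleGraph ι) : |wt G| ≤ 2 ^ Fintype.card ι := by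
  unfold wt
  refine (Finset.abs_sum_le_sum_abs _ _).trans ?_
  have : ∀ S ∈ (Finset.univ : Finset ι).powerset,
      |(-1:ℤ) ^ (Fintype.card ι - S.card) * if Ind G S then 1 else 0| ≤ 1 := by
    intro S _
    rw [abs_mul, abs_pow]; split_ifs <;> simp
  refine (Finset.sum_le_card_nsmul _ _ _ this).trans ?_
  simp

lemma Ind_insert (G : SimpleGraph ι) (v : ι) (S : Finset ι) :
    Ind G (insert v S) ↔ Ind G S ∧ ∀ u ∈ S, ¬ G.Adj v u := by
  unfold Ind
  constructor
  · intro h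
    exact ⟨fun i hi j hj => h i (by simp [hi]) j (by simp [hj]), fun u hu => h v (by simp) u (by simp [hu])⟩
  · rintro ⟨h1, h2⟩ i hi j hj
    rcases Finset.mem_insert.1 hi with rfl | hi' <;> rcases Finset.mem_insert.1 hj with rfl | hj'
    · exact G.irrefl
    · exact h2 j hj'
    · exact fun h => h2 i hi' h.symm
    · exact h1 i hi' j hj'

lemma Iw_insert (G : SimpleGraph ι) (v : ι) (U : Finset ι) (hv : v ∉ U) :
    Iw G (insert v U) = ∑ S ∈ U.powerset, ((if Ind G S then (-1:ℤ) ^ S.card else 0) -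
      if Ind G S ∧ ∀ u ∈ S, ¬ G.Adj v u then (-1:ℤ) ^ S.card else 0) := by
  unfold Iw
  rw [Finset.sum_powerset_insert hv, ← Finset.sum_add_distrib]
  refine Finset.sum_congr rfl fun S hS => ?_
  have hvS : v ∉ S := fun h => hv (Finset.mem_powerset.1 hS h)
  rw [Finset.card_insert_of_notMem hvS, sub_eq_add_neg]
  congr 1
  simp only [Ind_insert]
  split_ifs <;> ring

lemma wt_isolated (G : SimpleGraph ι) (v : ι) (hv : ∀ u, ¬ G.Adj v u) : wt G = 0 := by
  rw [wt_eq, ← Finset.insert_erase (Finset.mem_univ v), Iw_insert _ _ _ (Finset.notMem_erase _ _)]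
  simp [hv]

lemma Iw_matching (G : SimpleGraph ι) (hG : ∀ v, ∃! u, G.Adj v u) (k : ℕ) :
    ∀ U : Finset ι, U.card = k → (∀ v ∈ U, ∀ u, G.Adj v u → u ∈ U) →
      ∃ i, U.card = 2 * i ∧ Iw G U = (-1) ^ i := by
  induction k using Nat.strong_induction_on with
  | _ k ih =>
    intro U hU hcl
    rcases U.eq_empty_or_nonempty with rfl | ⟨v, hv⟩
    · exact ⟨0, by simp, by simp [Iw, Ind]⟩
    obtain ⟨u, hu, huu⟩ := hG v
    simp only at huu
    have hvu : v ≠ u := hu.ne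
    have huU : u ∈ U := hcl v hv u hu
    have hnu : ∀ x, G.Adj u x → x = v := fun x hx => (hG u).unique hx hu.symm
    set U' := (U.erase v).erase u with hU'
    have h1 : U = insert v (insert u U') := by
      rw [hU', Finset.insert_erase (Finset.mem_erase.2 ⟨hvu.symm, huU⟩), Finset.insert_erase hv]
    have hu' : u ∉ U' := by simp [hU']
    have hv' : v ∉ insert u U' := by simp [hU', hvu]
    have hv'' : v ∉ U' := by simp [hU']
    have hc : U.card = U'.card + 2 := by
      rw [h1, Finset.card_insert_of_notMem hv', Finset.card_insert_of_notMem hu']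
    obtain ⟨i, hi, hI⟩ := ih U'.card (by omega) U' rfl (by
      intro x hx y hxy
      have hxU : x ∈ U := Finset.mem_of_mem_erase (Finset.mem_of_mem_erase hx)
      have hyU := hcl x hxU y hxy
      simp only [hU', Finset.mem_erase]
      refine ⟨?_, ?_, hyU⟩
      · rintro rfl; exact hv'' (hnu x hxy.symm ▸ hx)
      · rintro rfl; exact hu' (huu x hxy.symm ▸ hx))
    refine ⟨i + 1, by omega, ?_⟩
    rw [h1, Iw_insert _ _ _ hv', Finset.sum_powerset_insert hu', pow_succ, ← hI, Iw,
      ← Finset.sum_add_distrib, Finset.sum_mul]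
    refine Finset.sum_congr rfl fun S hS => ?_
    have hSU := Finset.mem_powerset.1 hS
    have huS : u ∉ S := fun h => hu' (hSU h)
    have e1 : ∀ x ∈ S, ¬ G.Adj v x := fun x hx h => huS (huu x h ▸ hx)
    have e2 : ∀ x ∈ S, ¬ G.Adj u x := fun x hx h => hv'' (hSU (hnu x h ▸ hx))
    have e1' : (Ind G S ∧ ∀ x ∈ S, ¬ G.Adj v x) ↔ Ind G S := ⟨And.left, fun h => ⟨h, e1⟩⟩
    have e2' : Ind G (insert u S) ↔ Ind G S :=
      (Ind_insert G u S).trans ⟨And.left, fun h => ⟨h, e2⟩⟩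
    have e3 : ¬ (Ind G (insert u S) ∧ ∀ x ∈ insert u S, ¬ G.Adj v x) :=
      fun h => h.2 u (by simp) hu
    rw [Finset.card_insert_of_notMem huS, if_neg e3]
    simp only [e1', e2']
    split_ifs <;> ring

lemma wt_matching (G : SimpleGraph ι) (hG : ∀ v, ∃! u, G.Adj v u) (i : ℕ)
    (hi : Fintype.card ι = 2 * i) : wt G = (-1) ^ i := by
  obtain ⟨j, hj, h⟩ := Iw_matching G hG _ Finset.univ rfl (by simp)
  rw [wt_eq, h, hi]
  rw [Finset.card_univ] at hj
  have : i = j := by omega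
  subst this
  simp

/-- the number of components -/
noncomputable def nc (G : SimpleGraph ι) : ℕ := Fintype.card G.ConnectedComponent

lemma fiber_two (G : SimpleGraph ι) (hG : ∀ v, ∃ u, G.Adj v u) (c : G.ConnectedComponent) :
    2 ≤ (Finset.univ.filter fun v => G.connectedComponentMk v = c).card := by
  obtain ⟨v, rfl⟩ := c.exists_rep
  obtain ⟨u, hu⟩ := hG v
  rw [← Finset.card_pair hu.ne]
  refine Finset.card_le_card ?_
  intro x hx
  simp only [Finset.mem_insert, Finset.mem_singleton] at hx
  simp only [Finset.mem_filter, Finset.mem_univ, true_and]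
  rcases hx with rfl | rfl
  · rfl
  · exact (SimpleGraph.ConnectedComponent.sound hu.reachable).symm

lemma card_fiber (G : SimpleGraph ι) : Fintype.card ι =
    ∑ c : G.ConnectedComponent, (Finset.univ.filter fun v => G.connectedComponentMk v = c).card := by
  rw [← Finset.card_univ]
  exact Finset.card_eq_sum_card_fiberwise (fun x _ => Finset.mem_univ _)

lemma nc_le (G : SimpleGraph ι) (hG : ∀ v, ∃ u, G.Adj v u) : 2 * nc G ≤ Fintype.card ι := by
  rw [card_fiber G]
  have := Finset.card_nsmul_le_sum Finset.univ _ 2 (fun c _ => fiber_two G hG c)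
  simp only [smul_eq_mul, Finset.card_univ] at this
  unfold nc
  linarith

lemma nc_lt (G : SimpleGraph ι) (hG : ∀ v, ∃ u, G.Adj v u) (h : ¬ ∀ v, ∃! u, G.Adj v u) :
    2 * nc G < Fintype.card ι := by
  push Not at h
  obtain ⟨v, hv⟩ := h
  obtain ⟨u, hu⟩ := hG v
  have : ∃ u', G.Adj v u' ∧ u' ≠ u := by
    by_contra hcon
    push Not at hcon
    exact hv ⟨u, hu, hcon⟩
  obtain ⟨u', hu', hne⟩ := this
  have h3 : 2 < (Finset.univ.filter fun x => G.connectedComponentMk x = G.connectedComponentMk v).card := by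
    have : ({v, u, u'} : Finset ι).card = 3 := by
      rw [Finset.card_eq_three]
      exact ⟨v, u, u', hu.ne, hu'.ne, hne.symm, rfl⟩
    have h2 : ({v, u, u'} : Finset ι) ⊆
        Finset.univ.filter fun x => G.connectedComponentMk x = G.connectedComponentMk v := by
      intro x hx
      simp only [Finset.mem_insert, Finset.mem_singleton] at hx
      simp only [Finset.mem_filter, Finset.mem_univ, true_and]
      rcases hx with rfl | rfl | rfl
      · rfl
      · exact (SimpleGraph.ConnectedComponent.sound hu.reachable).symm
      · exact (SimpleGraph.ConnectedComponent.sound hu'.reachable).symm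
    have := Finset.card_le_card h2
    omega
  rw [card_fiber G]
  have := Finset.sum_lt_sum (s := Finset.univ) (f := fun _ : G.ConnectedComponent => 2)
    (fun c _ => fiber_two G hG c) ⟨_, Finset.mem_univ _, h3⟩
  simp only [Finset.sum_const, smul_eq_mul, Finset.card_univ] at this
  unfold nc
  linarith

lemma walk_step {G : SimpleGraph ι} : ∀ {a b : ι} (w : G.Walk a b), w.length = G.dist a b → a ≠ b →
    ∃ u, G.Adj a u ∧ G.dist u b < G.dist a b := by
  intro a b w hw hab
  cases w with
  | nil => exact absurd rfl hab
  | cons h w' =>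
    refine ⟨_, h, ?_⟩
    rw [← hw, SimpleGraph.Walk.length_cons]
    exact Nat.lt_succ_of_le (SimpleGraph.dist_le w')

lemma exists_roots (G : SimpleGraph ι) : ∃ (R : Finset ι) (p : ι → ι), R.card ≤ nc G ∧
    (∃ d : ι → ℕ, ∀ v, v ∉ R → d (p v) < d v) ∧ ∀ v, v ∉ R → G.Adj v (p v) := by
  let root : ι → ι := fun v => (G.connectedComponentMk v).out
  have hroot : ∀ v, G.Reachable v (root v) := fun v => by
    apply SimpleGraph.ConnectedComponent.exact
    exact (Quot.out_eq (G.connectedComponentMk v)).symm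
  have hstep : ∀ v, root v ≠ v → ∃ u, G.Adj v u ∧ G.dist u (root u) < G.dist v (root v) := by
    intro v hv
    obtain ⟨w, hw⟩ := (hroot v).exists_walk_length_eq_dist
    obtain ⟨u, hu, hlt⟩ := walk_step w hw (Ne.symm hv)
    refine ⟨u, hu, ?_⟩
    have : root u = root v := by
      simp only [root, SimpleGraph.ConnectedComponent.sound hu.reachable]
    rw [this]
    exact hlt
  let p : ι → ι := fun v => if h : root v ≠ v then (hstep v h).choose else v
  refine ⟨Finset.univ.image (fun c : G.ConnectedComponent => c.out), p, ?_, ⟨fun v => G.dist v (root v), ?_⟩, ?_⟩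
  · exact Finset.card_image_le
  · intro v hv
    have : root v ≠ v := fun h => hv (Finset.mem_image.2 ⟨_, Finset.mem_univ _, h⟩)
    simp only [p, this, ne_eq, not_false_eq_true, dif_pos]
    exact (hstep v this).choose_spec.2
  · intro v hv
    have : root v ≠ v := fun h => hv (Finset.mem_image.2 ⟨_, Finset.mem_univ _, h⟩)
    simp only [p, this, ne_eq, not_false_eq_true, dif_pos]
    exact (hstep v this).choose_spec.1
end graph

section count

noncomputable def piE (ι : Type) [Fintype ι] (E : Finset (ℤ × ℤ)) : Finset (ι → ℤ × ℤ) :=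
  Fintype.piFinset fun _ : ι => E

noncomputable def Kc (ι : Type) [Fintype ι] : ℕ := Fintype.card (Finset ι × (ι → ι))

lemma mem_piE {ι : Type} [Fintype ι] {E : Finset (ℤ × ℤ)} {z : ι → ℤ × ℤ} :
    z ∈ piE ι E ↔ ∀ i, z i ∈ E := Fintype.mem_piFinset

lemma card_piE {ι : Type} [Fintype ι] {E : Finset (ℤ × ℤ)} :
    (piE ι E).card = E.card ^ Fintype.card ι := by
  simp [piE, Fintype.card_piFinset]

variable {ι : Type} [Fintype ι] (M E Δ : Finset (ℤ × ℤ))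

lemma count_tree (hΔ : ∀ z ∈ E, ∀ w ∈ E, att M z w → z - w ∈ Δ) (R : Finset ι) (p : ι → ι)
    (d : ι → ℕ) (hd : ∀ v, v ∉ R → d (p v) < d v) :
    ((piE ι E).filter
      fun z => ∀ v, v ∉ R → att M (z v) (z (p v))).card ≤
      E.card ^ R.card * Δ.card ^ (Fintype.card ι - R.card) := by
  have hcard : (Fintype.piFinset fun v : ι => if v ∈ R then E else Δ).card =
      E.card ^ R.card * Δ.card ^ (Fintype.card ι - R.card) := by
    rw [Fintype.card_piFinset]
    simp_rw [apply_ite Finset.card]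
    rw [Finset.prod_ite]
    simp only [Finset.prod_const]
    congr 2
    · congr 1; ext; simp
    · rw [← Finset.card_compl]; congr 1; ext; simp
  rw [← hcard]
  refine Finset.card_le_card_of_injOn (fun z v => if v ∈ R then z v else z v - z (p v)) ?_ ?_
  · intro z hz
    simp only [Finset.coe_filter, Set.mem_ofPred_eq, mem_piE] at hz
    simp only [Finset.mem_coe, Fintype.mem_piFinset]
    intro v
    by_cases hv : v ∈ R
    · simp [hv, hz.1 v]
    · simp only [hv, if_false]
      exact hΔ _ (hz.1 v) _ (hz.1 _) (hz.2 v hv)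
  · intro z _ z' _ h
    funext v
    have key : ∀ k v, d v = k → z v = z' v := by
      intro k
      induction k using Nat.strong_induction_on with
      | _ k ih =>
        intro v hv
        have h1 := congrFun h v
        simp only at h1
        by_cases hvR : v ∈ R
        · simpa [hvR] using h1
        · simp only [hvR, if_false] at h1
          rw [ih _ (hv ▸ hd v hvR) (p v) rfl] at h1
          simpa using h1
    exact key _ v rfl

lemma count_nc (A t : ℕ) (hE : E.card ≤ A * t ^ 2) (hΔc : Δ.card ≤ A * t) (ht : 1 ≤ t)
    (hΔ : ∀ z ∈ E, ∀ w ∈ E, att M z w → z - w ∈ Δ) (r s : ℕ) :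
    ((piE ι E).filter fun z => nc (Gz M z) + s ≤ r).card * t ^ s ≤
      (Kc ι * A ^ Fintype.card ι) * t ^ (Fintype.card ι + r) := by
  by_cases hsr : r < s
  · rw [Finset.filter_false_of_mem]
    · simp
    · intro z _; omega
  push Not at hsr
  let good : Finset (Finset ι × (ι → ι)) := Finset.univ.filter fun x =>
    x.1.card + s ≤ r ∧ ∃ d : ι → ℕ, ∀ v, v ∉ x.1 → d (x.2 v) < d v
  have hsub : ((piE ι E).filter fun z => nc (Gz M z) + s ≤ r) ⊆
      good.biUnion fun x => (piE ι E).filter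
        fun z => ∀ v, v ∉ x.1 → att M (z v) (z (x.2 v)) := by
    intro z hz
    rw [Finset.mem_filter] at hz
    obtain ⟨R, p, hR, hd, hp⟩ := exists_roots (Gz M z)
    refine Finset.mem_biUnion.2 ⟨(R, p), ?_, ?_⟩
    · simp only [good, Finset.mem_filter, Finset.mem_univ, true_and]
      exact ⟨by omega, hd⟩
    · exact Finset.mem_filter.2 ⟨hz.1, fun v hv => (hp v hv).2⟩
  have hone : ∀ x ∈ good, ((piE ι E).filter
        fun z => ∀ v, v ∉ x.1 → att M (z v) (z (x.2 v))).card ≤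
        A ^ Fintype.card ι * t ^ (Fintype.card ι + r - s) := by
    intro x hx
    simp only [good, Finset.mem_filter, Finset.mem_univ, true_and] at hx
    obtain ⟨h1, d, hd⟩ := hx
    refine (count_tree M E Δ hΔ x.1 x.2 d hd).trans ?_
    have hc : x.1.card ≤ Fintype.card ι := Finset.card_le_univ _
    calc E.card ^ x.1.card * Δ.card ^ (Fintype.card ι - x.1.card)
        ≤ (A * t^2) ^ x.1.card * (A * t) ^ (Fintype.card ι - x.1.card) := by gcongr
      _ = A ^ (x.1.card + (Fintype.card ι - x.1.card)) * t ^ (2 * x.1.card + (Fintype.card ι - x.1.card)) := by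
          rw [mul_pow, mul_pow, pow_add, pow_add, pow_mul]; ring
      _ ≤ _ := by
          rw [Nat.add_sub_cancel' hc]
          gcongr
          omega
  have h1 := (Finset.card_le_card hsub).trans (Finset.card_biUnion_le_card_mul _ _ _ hone)
  have h2 : good.card ≤ Kc ι := Finset.card_le_univ _
  calc _ ≤ (good.card * (A ^ Fintype.card ι * t ^ (Fintype.card ι + r - s))) * t ^ s := by gcongr
    _ = good.card * A ^ Fintype.card ι * t ^ (Fintype.card ι + r - s + s) := by rw [pow_add]; ring
    _ ≤ _ := by
      rw [Nat.sub_add_cancel (by omega)]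
      gcongr
end count
end CT
namespace CT
open Classical

noncomputable def oc (M E : Finset (ℤ × ℤ)) (k : ℕ) : ℕ := (conf M E (Fin k)).ncard

noncomputable def cc (M E : Finset (ℤ × ℤ)) (k : ℕ) : ℤ :=
  ∑ j ∈ Finset.range (k + 1), (k.choose j : ℤ) * ((-1) ^ (k - j) * ((E.card : ℤ) ^ (k - j) * oc M E j))

section
variable {ι : Type} [Fintype ι] (M E Δ : Finset (ℤ × ℤ))

lemma conf_card : (conf M E ι).ncard = oc M E (Fintype.card ι) := by
  let e := Fintype.equivFin ι
  have : conf M E ι = (fun z : Fin (Fintype.card ι) → ℤ × ℤ => z ∘ e) '' conf M E (Fin (Fintype.card ι)) := by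
    ext z
    constructor
    · intro h
      refine ⟨z ∘ e.symm, ⟨fun i => h.1 _, fun i j hij => h.2 _ _ (by simpa using hij)⟩, ?_⟩
      funext i; simp
    · rintro ⟨w, h, rfl⟩
      exact ⟨fun i => h.1 _, fun i j hij => h.2 _ _ (by simpa using hij)⟩
  rw [this, Set.ncard_image_of_injective]
  · rfl
  · exact e.surjective.injective_comp_right

lemma part_card (S : Finset ι) :
    ((piE ι E).filter fun z => Ind (Gz M z) S).card =
      E.card ^ (Fintype.card ι - S.card) * oc M E S.card := by
  have h1 : oc M E S.card = (conf M E {x // x ∈ S}).ncard := by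
    rw [conf_card]; simp
  have h2 : E.card ^ (Fintype.card ι - S.card) =
      (piE {x // ¬ x ∈ S} E : Set ({x // ¬ x ∈ S} → ℤ × ℤ)).ncard := by
    rw [Set.ncard_coe_finset, card_piE]
    congr 1
    rw [Fintype.card_subtype_compl]; simp
  rw [h1, h2, mul_comm, ← Set.ncard_prod, ← Set.ncard_coe_finset,
    ← Set.ncard_image_of_injective _ (Equiv.piEquivPiSubtypeProd (fun i => i ∈ S) (fun _ => ℤ × ℤ)).injective]
  congr 1
  ext ⟨a, b⟩
  rw [Set.mem_image_equiv, Finset.mem_coe, Finset.mem_filter]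
  simp only [Finset.mem_filter, Set.mem_ofPred_eq, Set.mem_prod, Finset.mem_coe, mem_piE, conf, Ind, Gz]
  constructor
  · rintro ⟨h, h'⟩
    refine ⟨⟨fun i => ?_, fun i j hij hatt => ?_⟩, fun i => ?_⟩
    · simpa [Equiv.piEquivPiSubtypeProd, i.2] using h i
    · refine h' i i.2 j j.2 ⟨fun hh => hij (Subtype.ext hh), ?_⟩
      simpa [Equiv.piEquivPiSubtypeProd, i.2, j.2] using hatt
    · simpa [Equiv.piEquivPiSubtypeProd, i.2] using h i
  · rintro ⟨⟨h1, h2⟩, h3⟩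
    refine ⟨fun i => ?_, fun i hi j hj hij => ?_⟩
    · by_cases hi : i ∈ S
      · simpa [Equiv.piEquivPiSubtypeProd, hi] using h1 ⟨i, hi⟩
      · simpa [Equiv.piEquivPiSubtypeProd, hi] using h3 ⟨i, hi⟩
    · refine h2 ⟨i, hi⟩ ⟨j, hj⟩ (fun hh => hij.1 (Subtype.mk.inj hh)) ?_
      simpa [Equiv.piEquivPiSubtypeProd, hi, hj] using hij.2

lemma cc_eq : cc M E (Fintype.card ι) = ∑ z ∈ piE ι E, wt (Gz M z) := by
  unfold wt
  rw [Finset.sum_comm]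
  have : ∀ S ∈ (Finset.univ : Finset ι).powerset,
      (∑ z ∈ piE ι E, (-1 : ℤ) ^ (Fintype.card ι - S.card) *
        if Ind (Gz M z) S then 1 else 0) =
      (fun j => (-1 : ℤ) ^ (Fintype.card ι - j) * ((E.card : ℤ) ^ (Fintype.card ι - j) * oc M E j)) S.card := by
    intro S _
    rw [← Finset.mul_sum, Finset.sum_boole]
    simp only [part_card]
    push_cast
    rfl
  rw [Finset.sum_congr rfl this, Finset.sum_powerset_apply_card (fun j => (-1 : ℤ) ^ (Fintype.card ι - j) *
    ((E.card : ℤ) ^ (Fintype.card ι - j) * oc M E j))]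
  simp [cc, Finset.card_univ]

lemma cc_abs (κ A t : ℕ) (hE : E.card ≤ A * t ^ 2) (hΔc : Δ.card ≤ A * t) (ht : 1 ≤ t)
    (hΔ : ∀ z ∈ E, ∀ w ∈ E, att M z w → z - w ∈ Δ) :
    |cc M E κ| ≤ ((2 ^ κ * (Kc (Fin κ) * A ^ κ) : ℕ) : ℤ)
      * (t : ℤ) ^ (κ + κ / 2) := by
  have h0 := cc_eq (ι := Fin κ) M E
  rw [Fintype.card_fin] at h0
  rw [h0]
  refine (Finset.abs_sum_le_sum_abs _ _).trans ?_
  have h1 : ∀ z ∈ piE (Fin κ) E, |wt (Gz M z)| ≤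
      2 ^ κ * if nc (Gz M z) + 0 ≤ κ / 2 then 1 else 0 := by
    intro z _
    split_ifs with h
    · simpa using wt_abs (Gz M z)
    · by_cases hv : ∀ v, ∃ u, (Gz M z).Adj v u
      · exfalso
        have := nc_le _ hv
        rw [Fintype.card_fin] at this
        omega
      · push Not at hv
        obtain ⟨v, hv⟩ := hv
        simp [wt_isolated _ v hv]
  refine (Finset.sum_le_sum h1).trans ?_
  rw [← Finset.mul_sum, Finset.sum_boole]
  have := count_nc (ι := Fin κ) M E Δ A t hE hΔc ht hΔ (κ / 2) 0
  rw [pow_zero, mul_one, Fintype.card_fin] at this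
  have h3 : (((piE (Fin κ) E).filter fun z => nc (Gz M z) + 0 ≤ κ / 2).card : ℤ) ≤
    ((Kc (Fin κ) * A ^ κ : ℕ) : ℤ) * (t : ℤ) ^ (κ + κ / 2) := by
    exact_mod_cast this
  push_cast at h3 ⊢
  rw [mul_assoc]
  gcongr

/-- attacking pairs -/
noncomputable def ap : Finset ((ℤ × ℤ) × (ℤ × ℤ)) := (E ×ˢ E).filter fun x => att M x.1 x.2

lemma cc_lower (i A t : ℕ) (hE : E.card ≤ A * t ^ 2) (hΔc : Δ.card ≤ A * t) (ht : 1 ≤ t)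
    (hΔ : ∀ z ∈ E, ∀ w ∈ E, att M z w → z - w ∈ Δ) :
    ((ap M E).card : ℤ) ^ i * t - (((2 ^ (2 * i) + 1) * (Kc (Fin i × Bool) * A ^ (2 * i)) : ℕ) : ℤ) * (t : ℤ) ^ (3 * i)
      ≤ ((-1) ^ i * cc M E (2 * i)) * t := by
  have hcard : Fintype.card (Fin i × Bool) = 2 * i := by simp [mul_comm]
  have h0 := cc_eq (ι := Fin i × Bool) M E
  rw [hcard] at h0
  have h1 : ∀ z ∈ piE (Fin i × Bool) E,
      ((if ∀ j, att M (z (j, false)) (z (j, true)) then 1 else 0) : ℤ) -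
        (2 ^ (2 * i) + 1) * (if nc (Gz M z) + 1 ≤ i then 1 else 0) ≤ (-1) ^ i * wt (Gz M z) := by
    intro z _
    by_cases hv : ∀ v, ∃ u, (Gz M z).Adj v u
    · by_cases hm : ∀ v, ∃! u, (Gz M z).Adj v u
      · rw [wt_matching _ hm i hcard, ← mul_pow]
        have : (0:ℤ) ≤ (2 ^ (2 * i) + 1) * (if nc (Gz M z) + 1 ≤ i then 1 else 0) := by positivity
        have h2 : ((if ∀ j, att M (z (j, false)) (z (j, true)) then 1 else 0) : ℤ) ≤ 1 := by
          split_ifs <;> simp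
        rw [neg_mul_neg, one_mul, one_pow]
        linarith
      · have := nc_lt _ hv hm
        rw [hcard] at this
        rw [if_pos (show nc (Gz M z) + 1 ≤ i by omega)]
        have h2 : ((if ∀ j, att M (z (j, false)) (z (j, true)) then 1 else 0) : ℤ) ≤ 1 := by
          split_ifs <;> simp
        have h3 : |(-1) ^ i * wt (Gz M z)| ≤ 2 ^ (2 * i) := by
          rw [abs_mul, abs_pow]; simpa [hcard] using wt_abs (Gz M z)
        have := (abs_le.1 h3).1
        linarith
    · push Not at hv
      obtain ⟨⟨j, b⟩, hv⟩ := hv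
      rw [wt_isolated _ _ hv, if_neg]
      · have : (0:ℤ) ≤ (2 ^ (2 * i) + 1) * (if nc (Gz M z) + 1 ≤ i then 1 else 0) := by positivity
        linarith
      · intro h
        cases b
        · exact hv (j, true) ⟨by simp, h j⟩
        · exact hv (j, false) ⟨by simp, att_symm (h j)⟩
  have h2 := Finset.sum_le_sum h1
  rw [← Finset.mul_sum, ← h0, Finset.sum_sub_distrib, ← Finset.mul_sum, Finset.sum_boole,
    Finset.sum_boole] at h2
  have h3 : (ap M E).card ^ i ≤ ((piE (Fin i × Bool) E).filter
      fun z => ∀ j, att M (z (j, false)) (z (j, true))).card := by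
    have : (Fintype.piFinset fun _ : Fin i => ap M E).card = (ap M E).card ^ i := by simp
    rw [← this]
    refine Finset.card_le_card_of_injOn (fun f x => if x.2 then (f x.1).2 else (f x.1).1) ?_ ?_
    · intro f hf
      simp only [Finset.mem_coe, Fintype.mem_piFinset, ap, Finset.mem_filter, Finset.mem_product] at hf
      simp only [Finset.mem_coe, Finset.mem_filter, mem_piE]
      refine ⟨fun x => ?_, fun j => ?_⟩
      · split_ifs
        · exact (hf x.1).1.2
        · exact (hf x.1).1.1
      · simpa using (hf j).2
    · intro f _ g _ h
      funext j
      refine Prod.ext ?_ ?_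
      · simpa using congrFun h (j, false)
      · simpa using congrFun h (j, true)
  have h4 := count_nc (ι := Fin i × Bool) M E Δ A t hE hΔc ht hΔ i 1
  rw [pow_one, hcard, show 2 * i + i = 3 * i by ring] at h4
  have h3' : ((ap M E).card : ℤ) ^ i ≤ (((piE (Fin i × Bool) E).filter
      fun z => ∀ j, att M (z (j, false)) (z (j, true))).card : ℤ) := by exact_mod_cast h3
  have h4' : (((piE (Fin i × Bool) E).filter
      fun z => nc (Gz M z) + 1 ≤ i).card : ℤ) * t ≤ ((Kc (Fin i × Bool) * A ^ (2 * i) : ℕ) : ℤ) * (t : ℤ) ^ (3 * i) := by exact_mod_cast h4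
  rw [Nat.cast_mul, mul_assoc]
  have ht' : (0:ℤ) ≤ t := by positivity
  have h5 := mul_le_mul_of_nonneg_right h2 ht'
  have h6 := mul_le_mul_of_nonneg_right h3' ht'
  have h7 := mul_le_mul_of_nonneg_left h4' (show (0:ℤ) ≤ ((2 ^ (2 * i) + 1 : ℕ) : ℤ) by positivity)
  push_cast at h5 h6 h7 ⊢
  linarith

end

/-- bound on attacked differences -/
lemma delta_bound (M : Finset (ℤ × ℤ)) (hM0 : ∀ m ∈ M, m ≠ 0) (K : ℕ) (hK : 0 < K) :
    ∃ A : ℕ, ∀ t : ℕ, 1 ≤ t → ∀ E : Finset (ℤ × ℤ),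
      (∀ z ∈ E, z ∈ Finset.Ico (-((K:ℤ) * t)) (K * t) ×ˢ Finset.Ico (-((K:ℤ) * t)) (K * t)) →
      E.card ≤ A * t ^ 2 ∧ ∃ Δ : Finset (ℤ × ℤ), Δ.card ≤ A * t ∧
        ∀ z ∈ E, ∀ w ∈ E, att M z w → z - w ∈ Δ := by
  refine ⟨4 * K ^ 2 + 5 * K * M.card, fun t ht E hE => ⟨?_, ?_⟩⟩
  · have : E ⊆ Finset.Ico (-((K:ℤ) * t)) (K * t) ×ˢ Finset.Ico (-((K:ℤ) * t)) (K * t) := hE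
    have h := Finset.card_le_card this
    rw [Finset.card_product, Int.card_Ico] at h
    have h2 : ((K:ℤ) * t - -((K:ℤ) * t)).toNat = 2 * K * t := by
      have : (K:ℤ) * t - -((K:ℤ) * t) = ((2 * K * t : ℕ) : ℤ) := by push_cast; ring
      rw [this, Int.toNat_natCast]
    rw [h2] at h
    nlinarith [Nat.zero_le (5 * K * M.card * t ^ 2)]
  · let J : Finset ℤ := Finset.Icc (-((2 * K * t : ℕ) : ℤ)) (2 * K * t : ℕ)
    have hJ : J.card = 4 * K * t + 1 := by
      simp only [J, Int.card_Icc]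
      have : (4 * K * t : ℕ) = 2 * (2 * K * t) := by ring
      omega
    refine ⟨M.biUnion fun m => (J ×ˢ J).filter fun d => d.1 * m.2 - d.2 * m.1 = 0, ?_, ?_⟩
    · have : ∀ m ∈ M, ((J ×ˢ J).filter fun d => d.1 * m.2 - d.2 * m.1 = 0).card ≤ J.card := by
        intro m hm
        by_cases h1 : m.1 = 0
        · have h2 : m.2 ≠ 0 := fun h => hM0 m hm (Prod.ext h1 h)
          refine Finset.card_le_card_of_injOn Prod.snd ?_ ?_
          · intro d hd
            simp only [Finset.coe_filter, Finset.mem_product, Set.mem_ofPred_eq] at hd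
            exact hd.1.2
          · intro d hd d' hd' h
            simp only [Finset.coe_filter, Finset.mem_product, Set.mem_ofPred_eq, h1, mul_zero, sub_zero,
              mul_eq_zero, h2, or_false] at hd hd'
            exact Prod.ext (hd.2.trans hd'.2.symm) h
        · refine Finset.card_le_card_of_injOn Prod.fst ?_ ?_
          · intro d hd
            simp only [Finset.coe_filter, Finset.mem_product, Set.mem_ofPred_eq] at hd
            exact hd.1.1
          · intro d hd d' hd' h
            simp only [Finset.coe_filter, Finset.mem_product, Set.mem_ofPred_eq] at hd hd'
            refine Prod.ext h (mul_right_cancel₀ h1 ?_)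
            have e1 := hd.2
            have e2 := hd'.2
            rw [h] at e1
            linarith
      refine (Finset.card_biUnion_le_card_mul _ _ _ this).trans ?_
      rw [hJ]
      have : 4 * K * t + 1 ≤ 5 * K * t := by nlinarith [Nat.mul_le_mul hK ht]
      calc M.card * (4 * K * t + 1) ≤ M.card * (5 * K * t) := by gcongr
        _ ≤ _ := by nlinarith [Nat.zero_le (4 * K ^ 2 * t)]
    · rintro z hz w hw ⟨m, hm, h⟩
      refine Finset.mem_biUnion.2 ⟨m, hm, Finset.mem_filter.2 ⟨?_, ?_⟩⟩
      · have hz' := hE z hz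
        have hw' := hE w hw
        simp only [Finset.mem_product, Finset.mem_Ico] at hz' hw'
        simp only [J, Finset.mem_product, Finset.mem_Icc, Prod.fst_sub, Prod.snd_sub]
        push_cast
        refine ⟨⟨?_, ?_⟩, ?_, ?_⟩ <;> linarith [hz'.1.1, hz'.1.2, hz'.2.1, hz'.2.2, hw'.1.1, hw'.1.2, hw'.2.1, hw'.2.2]
      · simp only [Prod.fst_sub, Prod.snd_sub]
        linarith
end CT
namespace CT
open Classical Pointwise

lemma ap_lower (M : Finset (ℤ × ℤ)) (hMne : M.Nonempty) (hM0 : ∀ m ∈ M, m ≠ 0)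
    (B : Set (ℝ × ℝ)) (hBint : (interior B).Nonempty)
    (E : ℕ → Finset (ℤ × ℤ)) (hE : ∀ n z, z ∈ E n ↔ rp z ∈ ((n:ℝ) + 1) • interior B) :
    ∃ c : ℝ, 0 < c ∧ ∃ n0 : ℕ, ∀ n, n0 ≤ n → c * ((n:ℝ) + 1) ^ 3 ≤ ((ap M (E n)).card : ℝ) := by
  obtain ⟨m, hm⟩ := hMne
  obtain ⟨x0, hx0⟩ := hBint
  obtain ⟨δ, hδ, hball⟩ := Metric.isOpen_iff.1 isOpen_interior x0 hx0
  set L : ℝ := |(m.1:ℝ)| + |(m.2:ℝ)| + 2 with hL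
  have hL2 : 2 ≤ L := by have := abs_nonneg (m.1:ℝ); have := abs_nonneg (m.2:ℝ); linarith
  refine ⟨(δ / (4 * L)) ^ 3, by positivity, ⌈4 * L / δ⌉₊, fun n hn => ?_⟩
  set t : ℝ := (n:ℝ) + 1 with ht
  have htL : 4 * L ≤ t * δ := by
    have h1 : 4 * L / δ ≤ n := (Nat.le_ceil _).trans (by exact_mod_cast hn)
    rw [div_le_iff₀ hδ] at h1
    nlinarith
  have htpos : 0 < t := by positivity
  set k : ℕ := ⌊t * δ / (2 * L)⌋₊ with hk
  have hk1 : (k:ℝ) * L ≤ t * δ / 2 := by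
    have := Nat.floor_le (show 0 ≤ t * δ / (2 * L) by positivity)
    rw [← hk, le_div_iff₀ (by positivity)] at this
    linarith
  have hk2 : t * (δ / (4 * L)) ≤ k := by
    have h1 := Nat.lt_floor_add_one (t * δ / (2 * L))
    rw [← hk] at h1
    have h2 : t * δ / (2 * L) = 2 * (t * (δ / (4 * L))) := by field_simp; norm_num
    have h3 : 1 ≤ t * (δ / (4 * L)) := by
      rw [← mul_div_assoc, le_div_iff₀ (by positivity)]; linarith
    linarith
  -- membership criterion
  have hmem : ∀ z : ℤ × ℤ, |(z.1:ℝ) - t * x0.1| < t * δ → |(z.2:ℝ) - t * x0.2| < t * δ → z ∈ E n := by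
    intro z h1 h2
    rw [hE]
    refine ⟨t⁻¹ • rp z, hball ?_, ?_⟩
    · rw [Metric.mem_ball, Prod.dist_eq, max_lt_iff]
      simp only [rp, Prod.smul_fst, Prod.smul_snd, smul_eq_mul, Real.dist_eq]
      constructor
      · have : t⁻¹ * (z.1:ℝ) - x0.1 = t⁻¹ * ((z.1:ℝ) - t * x0.1) := by field_simp
        rw [this, abs_mul, abs_of_pos (inv_pos.2 htpos), inv_mul_lt_iff₀ htpos]
        exact h1
      · have : t⁻¹ * (z.2:ℝ) - x0.2 = t⁻¹ * ((z.2:ℝ) - t * x0.2) := by field_simp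
        rw [this, abs_mul, abs_of_pos (inv_pos.2 htpos), inv_mul_lt_iff₀ htpos]
        exact h2
    · simp only
      rw [smul_smul, mul_inv_cancel₀ htpos.ne', one_smul]
  have hest : ∀ (x : ℝ) (a c : ℕ) (μ : ℤ), a < k → c < k → |(μ:ℝ)| + 2 ≤ L →
      |((⌊t * x⌋ + a + c * μ : ℤ) : ℝ) - t * x| < t * δ := by
    intro x a c μ ha hc hμ
    have ha' : (a:ℝ) ≤ k := by exact_mod_cast ha.le
    have hc' : (c:ℝ) ≤ k := by exact_mod_cast hc.le
    have h1 := Int.floor_le (t * x)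
    have h2 := Int.lt_floor_add_one (t * x)
    have h3 : |(c:ℝ) * μ| ≤ k * (L - 2) := by
      rw [abs_mul, abs_of_nonneg (Nat.cast_nonneg c)]
      exact mul_le_mul hc' (by linarith) (abs_nonneg _) (Nat.cast_nonneg _)
    have h4 := abs_le.1 h3
    have : (0:ℝ) ≤ a := Nat.cast_nonneg _
    push_cast
    rw [abs_lt]
    constructor <;> nlinarith [h4.1, h4.2]
  have hcard : k ^ 3 ≤ (ap M (E n)).card := by
    have : (Finset.range k ×ˢ Finset.range k ×ˢ Finset.range k).card = k ^ 3 := by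
      simp [Finset.card_product]; ring
    rw [← this]
    refine Finset.card_le_card_of_injOn (fun x => ((⌊t * x0.1⌋ + (x.1:ℤ), ⌊t * x0.2⌋ + (x.2.1:ℤ)),
      (⌊t * x0.1⌋ + (x.1:ℤ) + (x.2.2:ℤ) * m.1, ⌊t * x0.2⌋ + (x.2.1:ℤ) + (x.2.2:ℤ) * m.2))) ?_ ?_
    · rintro ⟨a, b, c⟩ h
      simp only [Finset.mem_coe, Finset.mem_product, Finset.mem_range] at h
      obtain ⟨ha, hb, hc⟩ := h
      simp only [Finset.mem_coe, ap, Finset.mem_filter, Finset.mem_product]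
      have l1 : |(m.1:ℝ)| + 2 ≤ L := by have := abs_nonneg (m.2:ℝ); linarith
      have l2 : |(m.2:ℝ)| + 2 ≤ L := by have := abs_nonneg (m.1:ℝ); linarith
      refine ⟨⟨hmem _ ?_ ?_, hmem _ ?_ ?_⟩, m, hm, ?_⟩
      · simpa using hest x0.1 a 0 m.1 ha (by omega) l1
      · simpa using hest x0.2 b 0 m.2 hb (by omega) l2
      · exact hest x0.1 a c m.1 ha hc l1
      · exact hest x0.2 b c m.2 hb hc l2
      · simp only; ring
    · rintro ⟨a, b, c⟩ _ ⟨a', b', c'⟩ _ h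
      simp only [Prod.mk.injEq, add_right_inj, Nat.cast_inj] at h
      obtain ⟨⟨h1, h2⟩, h3, h4⟩ := h
      subst h1; subst h2
      simp only [add_right_inj, mul_eq_mul_right_iff, Nat.cast_inj] at h3 h4
      rcases h3 with h3 | h3
      · rw [h3]
      · rcases h4 with h4 | h4
        · rw [h4]
        · exact absurd (Prod.ext h3 h4) (hM0 m hm)
  calc (δ / (4 * L)) ^ 3 * t ^ 3 = (t * (δ / (4 * L))) ^ 3 := by ring
    _ ≤ (k:ℝ) ^ 3 := by gcongr
    _ ≤ _ := by exact_mod_cast hcard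
end CT
namespace CT
open Classical Pointwise MeasureTheory Filter Topology

lemma area (V : Finset (ℝ × ℝ)) (B : Set (ℝ × ℝ)) (hB : B = convexHull ℝ (V : Set (ℝ × ℝ)))
    (E : ℕ → Finset (ℤ × ℤ)) (hE : ∀ n z, z ∈ E n ↔ rp z ∈ ((n:ℝ) + 1) • interior B) :
    Tendsto (fun n : ℕ => ((E n).card : ℝ) / ((n:ℝ) + 1) ^ 2) atTop (𝓝 ((volume B).toReal)) := by
  let e := ContinuousLinearEquiv.finTwoArrow ℝ ℝ
  have hmp : MeasurePreserving e volume volume := volume_preserving_finTwoArrow ℝ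
  have hconv : Convex ℝ B := hB ▸ convex_convexHull ℝ _
  have hbd : Bornology.IsBounded B := by
    rw [hB]; exact isBounded_convexHull.2 V.finite_toSet.isBounded
  set s : Set (Fin 2 → ℝ) := e ⁻¹' interior B with hs
  have hsm : MeasurableSet s := (isOpen_interior.preimage e.continuous).measurableSet
  have hsb : Bornology.IsBounded s := by
    have h1 := e.symm.lipschitz.isBounded_image (hbd.subset interior_subset)
    rwa [ContinuousLinearEquiv.image_symm_eq_preimage] at h1
  have hsf : volume (frontier s) = 0 := by
    apply Convex.addHaar_frontier
    exact hconv.interior.linear_preimage e.toLinearEquiv.toLinearMap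
  have hvol : volume.real s = (volume B).toReal := by
    rw [measureReal_def, hs, hmp.measure_preimage isOpen_interior.measurableSet.nullMeasurableSet]
    congr 1
    have h0 : volume (frontier B) = 0 := hconv.addHaar_frontier _
    exact measure_interior_of_null_frontier h0
  have key := tendsto_card_div_pow_atTop_volume s hsb hsm hsf
  rw [hvol] at key
  have key2 := key.comp (tendsto_add_atTop_nat 1)
  refine key2.congr fun n => ?_
  simp only [Function.comp, Fintype.card_fin]
  push_cast
  congr 2
  have htp : (0:ℝ) < (n:ℝ) + 1 := by positivity
  set t : ℝ := (n:ℝ) + 1 with ht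
  let φ : ℤ × ℤ → (Fin 2 → ℝ) := fun z => t⁻¹ • ![(z.1:ℝ), (z.2:ℝ)]
  have hφ : Function.Injective φ := by
    intro z w h
    have h' : ![(z.1:ℝ), (z.2:ℝ)] = ![(w.1:ℝ), (w.2:ℝ)] :=
      (smul_right_injective _ (inv_ne_zero htp.ne')) h
    have h0 := congrFun h' 0
    have h1 := congrFun h' 1
    simp at h0 h1
    exact Prod.ext h0 h1
  rw [Nat.card_coe_set_eq, ← Set.ncard_coe_finset (E n), ← Set.ncard_image_of_injective _ hφ]
  congr 1
  ext v
  simp only [Set.mem_inter_iff, Set.mem_image, Finset.mem_coe]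
  have hin : ∀ z : ℤ × ℤ, φ z ∈ s ↔ z ∈ E n := by
    intro z
    rw [hE, Set.mem_smul_set_iff_inv_smul_mem₀ htp.ne', hs, Set.mem_preimage]
    have : e (φ z) = t⁻¹ • rp z := by
      simp [e, φ, rp]
    rw [this]
  constructor
  · rintro ⟨h1, h2⟩
    obtain ⟨x, hx, rfl⟩ := h2
    rw [SetLike.mem_coe, Submodule.mem_span_range_iff_exists_fun] at hx
    obtain ⟨c, rfl⟩ := hx
    have : φ (c 0, c 1) = t⁻¹ • ∑ i, c i • (Pi.basisFun ℝ (Fin 2)) i := by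
      simp only [φ]
      congr 1
      funext j
      fin_cases j <;> simp [Fin.sum_univ_two, Pi.single_apply]
    refine ⟨(c 0, c 1), ?_, this⟩
    rw [← hin, this]
    exact h1
  · rintro ⟨z, hz, rfl⟩
    refine ⟨(hin z).2 hz, Set.smul_mem_smul_set ?_⟩
    rw [SetLike.mem_coe, Submodule.mem_span_range_iff_exists_fun]
    refine ⟨![z.1, z.2], ?_⟩
    funext j
    fin_cases j <;> simp [Fin.sum_univ_two, Pi.single_apply]

lemma area_pos (V : Finset (ℝ × ℝ)) (B : Set (ℝ × ℝ)) (hB : B = convexHull ℝ (V : Set (ℝ × ℝ)))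
    (hBint : (interior B).Nonempty) : 0 < (volume B).toReal := by
  have hbd : Bornology.IsBounded B := by
    rw [hB]; exact isBounded_convexHull.2 V.finite_toSet.isBounded
  refine ENNReal.toReal_pos ?_ hbd.measure_lt_top.ne
  exact ((isOpen_interior.measure_pos volume hBint).trans_le (measure_mono interior_subset)).ne'
end CT
namespace CT
open Polynomial

noncomputable def binP (l : ℕ) : ℚ[X] := C ((l.factorial : ℚ)⁻¹) * descPochhammer ℚ l

lemma binP_eval (l M : ℕ) : (binP l).eval (M : ℚ) = (M.choose l : ℚ) := by
  rw [binP, eval_mul, eval_C, descPochhammer_eval_eq_descFactorial, Nat.descFactorial_eq_factorial_mul_choose]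
  push_cast
  have : (l.factorial : ℚ) ≠ 0 := by exact_mod_cast l.factorial_ne_zero
  field_simp

lemma binP_natDegree (l : ℕ) : (binP l).natDegree ≤ l := by
  refine (natDegree_C_mul_le _ _).trans ?_
  rw [descPochhammer_natDegree]

lemma binP_coeff (l : ℕ) : (binP l).coeff l ≠ 0 := by
  rw [binP, coeff_C_mul]
  have h1 : (l.factorial : ℚ)⁻¹ ≠ 0 := inv_ne_zero (by exact_mod_cast l.factorial_ne_zero)
  have h2 : (descPochhammer ℚ l).coeff l = 1 := by
    have := (monic_descPochhammer ℚ l).coeff_natDegree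
    rwa [descPochhammer_natDegree] at this
  rw [h2, mul_one]; exact h1

lemma pow_coeff (Nt : ℚ[X]) (A : ℚ) (hA : A ≠ 0) (h0 : Nt.coeff 0 = A) (r : ℕ) :
    ∃ h : ℚ[X], h.natDegree ≤ r ∧ ∀ M : ℕ, (Nt ^ M).coeff r = A ^ M * h.eval (M : ℚ) := by
  set W : ℚ[X] := C A⁻¹ * divX Nt with hW
  have hN : Nt = C A * (1 + X * W) := by
    rw [mul_add, mul_one, hW]
    have : C A * (X * (C A⁻¹ * divX Nt)) = (C A * C A⁻¹) * (divX Nt * X) := by ring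
    rw [this, ← C_mul, mul_inv_cancel₀ hA, C_1, one_mul, add_comm, ← h0]
    exact (divX_mul_X_add Nt).symm
  refine ⟨∑ l ∈ Finset.range (r + 1), C (((X * W) ^ l).coeff r) * binP l, ?_, fun M => ?_⟩
  · refine natDegree_sum_le_of_forall_le _ _ fun l hl => ?_
    refine (natDegree_C_mul_le _ _).trans ((binP_natDegree l).trans ?_)
    have := Finset.mem_range.1 hl
    omega
  · rw [hN, mul_pow, ← C_pow, coeff_C_mul, eval_finsetSum, add_comm (1 : ℚ[X]), add_pow, finset_sum_coeff]
    congr 1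
    simp only [eval_mul, eval_C, binP_eval, one_pow, mul_one]
    have e1 : ∀ l, ((X * W) ^ l * (M.choose l : ℚ[X])).coeff r = ((X * W) ^ l).coeff r * (M.choose l : ℚ) := by
      intro l
      rw [← C_eq_natCast, coeff_mul_C]
    simp only [e1]
    have s1 : Finset.range (M + 1) ⊆ Finset.range (M + r + 1) := Finset.range_subset_range.2 (by omega)
    have s2 : Finset.range (r + 1) ⊆ Finset.range (M + r + 1) := Finset.range_subset_range.2 (by omega)
    rw [Finset.sum_subset s1, Finset.sum_subset s2]
    · intro l _ hl
      rw [Finset.mem_range] at hl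
      rw [mul_pow, coeff_X_pow_mul', if_neg (by omega), zero_mul]
    · intro l _ hl
      rw [Finset.mem_range] at hl
      rw [Nat.choose_eq_zero_of_lt (by omega)]; simp

lemma reflect_pow (f : ℚ[X]) (F : ℕ) (hf : f.natDegree ≤ F) (M : ℕ) :
    reflect (F * M) (f ^ M) = (reflect F f) ^ M := by
  induction M with
  | zero => simp [reflect_one]
  | succ M ih =>
    rw [pow_succ, pow_succ, mul_add, mul_one, reflect_mul _ _ _ hf, ih]
    exact (natDegree_pow_le).trans (by rw [mul_comm]; gcongr)

lemma core (i : ℕ) (N : ℚ[X]) (A : ℚ) (hA : A ≠ 0) (hN : N.natDegree ≤ 2) (hN2 : N.coeff 2 = A)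
    (c : ℕ → ℚ[X]) (hc : ∀ κ, (c κ).natDegree ≤ κ + κ / 2) (hci : (c (2 * i)).coeff (3 * i) ≠ 0) :
    ∃ g : ℚ[X], g.degree = ((2 * i : ℕ) : WithBot ℕ) ∧
      ∀ c' : ℕ → ℚ[X], (∀ κ, (c' κ).natDegree ≤ κ + κ / 2) → (∀ κ ≤ 2 * i, c' κ = c κ) →
      ∀ q : ℕ, i ≤ 2 * q →
        (∑ κ ∈ Finset.range (q + 1), C (q.choose κ : ℚ) * (N ^ (q - κ) * c' κ)).coeff (2 * q - i) =
          A ^ q * g.eval (q : ℚ) := by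
  set Nt := reflect 2 N with hNt
  have hNt0 : Nt.coeff 0 = A := by
    rw [hNt, coeff_reflect, revAt_le (by norm_num)]; exact hN2
  choose h hdeg hh using fun r => pow_coeff Nt A hA hNt0 r
  have hh0 : h 0 = 1 := by
    have h1 := eq_C_of_natDegree_le_zero (hdeg 0)
    have h2 := hh 0 0
    rw [h1] at h2
    simp at h2
    rw [h1, ← h2, C_1]
  -- reflected coefficients
  have hrefl : ∀ (c' : ℕ → ℚ[X]), (∀ κ, (c' κ).natDegree ≤ κ + κ / 2) → ∀ κ j, 2 * j < κ →
      (reflect (2 * κ) (c' κ)).coeff j = 0 := by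
    intro c' hc' κ j hj
    rw [coeff_reflect, revAt_le (by omega)]
    apply coeff_eq_zero_of_natDegree_lt
    have := hc' κ
    omega
  let ch : ℕ → ℕ → ℚ := fun κ j => (reflect (2 * κ) (c κ)).coeff j
  have hch : ∀ κ j, 2 * j < κ → ch κ j = 0 := hrefl c hc
  let T : ℕ → ℕ × ℕ → ℚ[X] := fun κ x =>
    C (A⁻¹ ^ κ * ch κ x.1) * (binP κ * (h x.2).comp (X - C (κ : ℚ)))
  have hcomp : ∀ κ r, ((h r).comp (X - C (κ : ℚ))).natDegree ≤ r := by
    intro κ r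
    rw [natDegree_comp, natDegree_X_sub_C, mul_one]; exact hdeg r
  have hTdeg : ∀ κ x, x ∈ Finset.HasAntidiagonal.antidiagonal i → (T κ x).natDegree ≤ 2 * i ∧
      ((κ, x) ≠ (2 * i, (i, 0)) → (T κ x).coeff (2 * i) = 0) := by
    rintro κ ⟨j, r⟩ hx
    rw [Finset.HasAntidiagonal.mem_antidiagonal] at hx
    simp only at hx
    by_cases hj : 2 * j < κ
    · simp [T, hch κ j hj]
    push Not at hj
    have hd : (T κ (j, r)).natDegree ≤ κ + r := by
      refine (natDegree_C_mul_le _ _).trans (natDegree_mul_le.trans ?_)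
      exact add_le_add (binP_natDegree κ) (hcomp κ r)
    refine ⟨by omega, fun hne => coeff_eq_zero_of_natDegree_lt ?_⟩
    simp only [ne_eq, Prod.mk.injEq] at hne
    omega
  refine ⟨∑ κ ∈ Finset.range (2 * i + 1), ∑ x ∈ Finset.HasAntidiagonal.antidiagonal i, T κ x, ?_, ?_⟩
  · apply degree_eq_of_le_of_coeff_ne_zero
    · apply natDegree_le_iff_degree_le.1
      refine natDegree_sum_le_of_forall_le _ _ fun κ _ => natDegree_sum_le_of_forall_le _ _ fun x hx => ?_
      exact (hTdeg κ x hx).1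
    · rw [finset_sum_coeff, Finset.sum_eq_single (2 * i), finset_sum_coeff, Finset.sum_eq_single (i, 0)]
      · simp only [T, hh0, one_comp, mul_one, coeff_C_mul]
        refine mul_ne_zero (mul_ne_zero (pow_ne_zero _ (inv_ne_zero hA)) ?_) (binP_coeff _)
        simp only [ch]
        rw [coeff_reflect, revAt_le (by omega)]
        convert hci using 2
        omega
      · intro x hx hne
        exact (hTdeg _ x hx).2 (fun hh => hne (Prod.mk.inj hh).2)
      · intro hn; exact absurd (by simp) hn
      · intro κ _ hne
        rw [finset_sum_coeff]
        exact Finset.sum_eq_zero fun x hx => (hTdeg _ x hx).2 (fun hh => hne (Prod.mk.inj hh).1)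
      · intro hn; exact absurd (by simp) hn
  · intro c' hc' hcc q hq
    rw [finset_sum_coeff, eval_finsetSum, Finset.mul_sum]
    let U : ℕ → ℚ := fun κ => (q.choose κ : ℚ) * (Nt ^ (q - κ) * reflect (2 * κ) (c' κ)).coeff i
    have hU : ∀ κ ∈ Finset.range (q + 1), (C (q.choose κ : ℚ) * (N ^ (q - κ) * c' κ)).coeff (2 * q - i) = U κ := by
      intro κ hκ
      rw [Finset.mem_range] at hκ
      simp only [U]
      rw [coeff_C_mul, hNt, ← reflect_pow N 2 hN, ← reflect_mul, coeff_reflect]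
      · congr 2
        rw [revAt_le (by omega)]; omega
      · exact natDegree_pow_le.trans (by rw [mul_comm]; gcongr)
      · exact (hc' κ).trans (by omega)
    rw [Finset.sum_congr rfl hU]
    have s1 : Finset.range (q + 1) ⊆ Finset.range (q + 2 * i + 1) := Finset.range_subset_range.2 (by omega)
    have s2 : Finset.range (2 * i + 1) ⊆ Finset.range (q + 2 * i + 1) := Finset.range_subset_range.2 (by omega)
    rw [Finset.sum_subset s1, ← Finset.sum_subset s2]
    · refine Finset.sum_congr rfl fun κ hκ => ?_
      rw [Finset.mem_range] at hκ
      simp only [U, T]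
      rw [hcc κ (by omega)]
      by_cases hκq : κ ≤ q
      · rw [eval_finsetSum, coeff_mul, ← Finset.Nat.sum_antidiagonal_swap, Finset.mul_sum, Finset.mul_sum]
        refine Finset.sum_congr rfl fun x _ => ?_
        simp only [Prod.fst_swap, Prod.snd_swap, eval_mul, eval_C, binP_eval, eval_comp, eval_sub, eval_X, hh, ch]
        rw [← Nat.cast_sub hκq]
        have : A ^ q = A ^ (q - κ) * A ^ κ := by rw [← pow_add, Nat.sub_add_cancel hκq]
        rw [this, inv_pow]
        have : A ^ κ ≠ 0 := pow_ne_zero _ hA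
        field_simp
      · rw [Nat.choose_eq_zero_of_lt (by omega)]
        simp [eval_finsetSum, binP_eval, Nat.choose_eq_zero_of_lt (show q < κ by omega)]
    · intro κ _ hκ
      rw [Finset.mem_range] at hκ
      change (q.choose κ : ℚ) * (Nt ^ (q - κ) * reflect (2 * κ) (c' κ)).coeff i = 0
      rw [coeff_mul, Finset.sum_eq_zero, mul_zero]
      intro x hx
      rw [Finset.HasAntidiagonal.mem_antidiagonal] at hx
      rw [hrefl c' hc' κ x.2 (by omega), mul_zero]
    · intro κ _ hκ
      rw [Finset.mem_range] at hκ
      change (q.choose κ : ℚ) * (Nt ^ (q - κ) * reflect (2 * κ) (c' κ)).coeff i = 0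
      rw [Nat.choose_eq_zero_of_lt (by omega)]; simp
end CT
namespace CT
open Polynomial Filter Topology

lemma QP.mul_period {a m p} (h : QP a m p) (k : ℕ) (hk : 0 < k) : QP a (m * k) p := by
  refine ⟨Nat.mul_pos h.1 hk, ?_, h.2.2⟩
  clear hk
  induction k with
  | zero => simp
  | succ k ih => intro n; rw [mul_add, mul_one, ← add_assoc, h.2.1, ih]

lemma QP.of_dvd {a m p} (h : QP a m p) {k : ℕ} (hk : 0 < k) (hd : m ∣ k) : QP a k p := by
  obtain ⟨l, rfl⟩ := hd
  exact h.mul_period l (Nat.pos_of_mul_pos_left hk)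

lemma QP.mod {a m p} (h : QP a m p) (n : ℕ) : p (n % m) = p n := by
  conv_rhs => rw [← Nat.mod_add_div n m]
  rcases Nat.eq_zero_or_pos (n / m) with h0 | h0
  · simp [h0]
  · exact ((h.mul_period _ h0).2.1 _).symm

lemma QP_const (x : ℚ) : QP (fun _ => x) 1 (fun _ => C x) := ⟨one_pos, fun _ => rfl, by simp⟩

lemma QP.add {a b m m' p p'} (h : QP a m p) (h' : QP b m' p') :
    QP (fun n => a n + b n) (m * m') (fun n => p n + p' n) := by
  have h1 := h.mul_period m' h'.1
  have h2 := h'.mul_period m h.1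
  rw [mul_comm] at h2
  exact ⟨h1.1, fun n => by simp only [h1.2.1, h2.2.1], fun n => by simp [h.2.2, h'.2.2]⟩

lemma QP.mul {a b m m' p p'} (h : QP a m p) (h' : QP b m' p') :
    QP (fun n => a n * b n) (m * m') (fun n => p n * p' n) := by
  have h1 := h.mul_period m' h'.1
  have h2 := h'.mul_period m h.1
  rw [mul_comm] at h2
  exact ⟨h1.1, fun n => by simp only [h1.2.1, h2.2.1], fun n => by simp [h.2.2, h'.2.2]⟩

lemma QP_pow {a m p} (h : QP a m p) (k : ℕ) : QP (fun n => a n ^ k) m (fun n => p n ^ k) :=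
  ⟨h.1, fun n => by simp only [h.2.1], fun n => by simp [h.2.2]⟩

lemma QP_sum {ι : Type} (s : Finset ι) (a : ι → ℕ → ℚ) (h : ∀ i ∈ s, ∃ m p, QP (a i) m p) :
    ∃ m p, QP (fun n => ∑ i ∈ s, a i n) m p := by
  classical
  induction s using Finset.induction_on with
  | empty => exact ⟨1, _, by simpa using QP_const 0⟩
  | insert i s hi ih =>
    obtain ⟨m, p, h1⟩ := ih fun j hj => h j (Finset.mem_insert_of_mem hj)
    obtain ⟨m', p', h2⟩ := h i (Finset.mem_insert_self _ _)
    refine ⟨m' * m, fun n => p' n + p n, ?_⟩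
    have := h2.add h1
    simpa only [Finset.sum_insert hi] using this

lemma seq_tendsto (m k : ℕ) (hm : 0 < m) : Tendsto (fun j : ℕ => k + m * j) atTop atTop :=
  tendsto_atTop_mono (fun j => by simp only [id]; nlinarith [Nat.mul_le_mul_right j hm]) tendsto_id

lemma QP.seq {a m p} (h : QP a m p) (k j : ℕ) : p (k + m * j) = p k := by
  rcases Nat.eq_zero_or_pos j with h0 | h0
  · simp [h0]
  · exact (h.mul_period _ h0).2.1 _

lemma den_deg (d : ℕ) : ((X + 1 : ℝ[X]) ^ d).natDegree = d ∧ ((X + 1 : ℝ[X]) ^ d).leadingCoeff = 1 := by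
  have hm : ((X + C 1 : ℝ[X]) ^ d).Monic := (monic_X_add_C 1).pow d
  rw [C_1] at hm
  refine ⟨?_, hm⟩
  rw [← C_1, natDegree_pow, natDegree_X_add_C, mul_one]

lemma real_eval {a m p} (h : QP a m p) (k j : ℕ) :
    ((p k).map (algebraMap ℚ ℝ)).eval ((k + m * j : ℕ) : ℝ) = (a (k + m * j) : ℝ) := by
  rw [eval_natCast_map, h.2.2 (k + m * j), h.seq]
  simp

lemma QP_deg {a m p} (h : QP a m p) (d : ℕ) (C0 : ℝ)
    (hb : ∀ n : ℕ, |(a n : ℝ)| ≤ C0 * ((n:ℝ) + 1) ^ d) (k : ℕ) : (p k).natDegree ≤ d := by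
  by_contra hcon
  push Not at hcon
  set P := (p k).map (algebraMap ℚ ℝ) with hP
  have hdP : P.natDegree = (p k).natDegree := natDegree_map _
  have hlt : ((X + 1 : ℝ[X]) ^ d).degree < P.degree := by
    apply degree_lt_degree
    rw [(den_deg d).1, hdP]; exact hcon
  have hQ : ((X + 1 : ℝ[X]) ^ d) ≠ 0 := by
    intro h0
    have := (den_deg d).2
    rw [h0] at this; simp at this
  have ht := abs_div_tendsto_atTop_atTop_of_degree_gt P ((X + 1 : ℝ[X]) ^ d) hlt hQ
  have ht2 := ht.comp ((tendsto_natCast_atTop_atTop (R := ℝ)).comp (seq_tendsto m k h.1))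
  obtain ⟨j, hj⟩ := (ht2.eventually_gt_atTop C0).exists
  simp only [Function.comp] at hj
  rw [hP, real_eval h] at hj
  have h1 := hb (k + m * j)
  have hpos : (0:ℝ) < (((k + m * j : ℕ) : ℝ) + 1) ^ d := by positivity
  simp only [eval_pow, eval_add, eval_X, eval_one] at hj
  rw [abs_div, abs_of_pos hpos, lt_div_iff₀ hpos] at hj
  linarith

lemma QP_lim {a m p} (h : QP a m p) (d : ℕ) (k : ℕ) (hd : (p k).natDegree ≤ d) :
    Tendsto (fun j : ℕ => (a (k + m * j) : ℝ) / (((k + m * j : ℕ) : ℝ) + 1) ^ d) atTop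
      (𝓝 (((p k).coeff d : ℚ) : ℝ)) := by
  set P := (p k).map (algebraMap ℚ ℝ) with hP
  have hdP : P.natDegree = (p k).natDegree := natDegree_map _
  have key : Tendsto (fun x => P.eval x / ((X + 1 : ℝ[X]) ^ d).eval x) atTop (𝓝 (((p k).coeff d : ℚ) : ℝ)) := by
    rcases hd.lt_or_eq with hlt | heq
    · rw [coeff_eq_zero_of_natDegree_lt hlt, Rat.cast_zero]
      apply div_tendsto_zero_of_degree_lt
      apply degree_lt_degree
      rw [(den_deg d).1, hdP]; exact hlt
    · by_cases hP0 : P = 0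
      · have : p k = 0 := (Polynomial.map_eq_zero _).1 hP0
        simp [hP0, this]
      have hdeg : P.degree = ((X + 1 : ℝ[X]) ^ d).degree := by
        have hQ : ((X + 1 : ℝ[X]) ^ d) ≠ 0 := by
          intro h0
          have := (den_deg d).2
          rw [h0] at this; simp at this
        rw [degree_eq_natDegree hP0, degree_eq_natDegree hQ, (den_deg d).1, hdP, heq]
      have := div_tendsto_leadingCoeff_div_of_degree_eq P _ hdeg
      rw [(den_deg d).2, div_one] at this
      have h2 : P.leadingCoeff = (((p k).coeff d : ℚ) : ℝ) := by
        rw [leadingCoeff, hdP, heq, hP, coeff_map]; rfl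
      rwa [h2] at this
  have ht2 := key.comp ((tendsto_natCast_atTop_atTop (R := ℝ)).comp (seq_tendsto m k h.1))
  refine ht2.congr fun j => ?_
  simp only [Function.comp]
  rw [hP, real_eval h]
  simp

/-- binomial inversion -/
lemma inversion (o : ℕ → ℚ) (N : ℚ) (q : ℕ) :
    o q = ∑ κ ∈ Finset.range (q + 1), (q.choose κ : ℚ) * (N ^ (q - κ) *
      ∑ j ∈ Finset.range (κ + 1), (κ.choose j : ℚ) * ((-1) ^ (κ - j) * (N ^ (κ - j) * o j))) := by
  let L : ℚ[X] →ₗ[ℚ] ℚ := Polynomial.lsum fun j => LinearMap.toSpanSingleton ℚ ℚ (o j)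
  have hL : ∀ j (c : ℚ), L (C c * X ^ j) = c * o j := by
    intro j c
    simp only [L, Polynomial.lsum_apply]
    rw [C_mul_X_pow_eq_monomial, Polynomial.sum_monomial_index]
    · simp
    · simp
  have h1 : ∀ κ, L ((X - C N) ^ κ) =
      ∑ j ∈ Finset.range (κ + 1), (κ.choose j : ℚ) * ((-1) ^ (κ - j) * (N ^ (κ - j) * o j)) := by
    intro κ
    rw [sub_eq_add_neg, ← C_neg, add_pow, map_sum]
    refine Finset.sum_congr rfl fun j _ => ?_
    have : X ^ j * C (-N) ^ (κ - j) * ((κ.choose j : ℕ) : ℚ[X]) =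
        C ((-N) ^ (κ - j) * (κ.choose j : ℚ)) * X ^ j := by
      rw [C_mul, C_pow, C_eq_natCast]; ring
    rw [this, hL, neg_pow]; ring
  have h2 : L (X ^ q) = o q := by simpa using hL q 1
  rw [← h2]
  have h3 : (X : ℚ[X]) ^ q = ∑ κ ∈ Finset.range (q + 1),
      (((q.choose κ : ℚ) * N ^ (q - κ)) • (X - C N) ^ κ) := by
    conv_lhs => rw [show (X : ℚ[X]) = (X - C N) + C N by ring, add_pow]
    refine Finset.sum_congr rfl fun κ _ => ?_
    rw [smul_eq_C_mul, C_mul, C_pow, C_eq_natCast]; ring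
  rw [h3, map_sum]
  refine Finset.sum_congr rfl fun κ _ => ?_
  rw [map_smul, h1, smul_eq_mul, mul_assoc]
end CT
namespace CT
open Classical Pointwise MeasureTheory Filter Topology Polynomial

lemma N_QP (V : Finset (ℝ × ℝ)) (hV : ∀ v ∈ V, ∃ a b : ℚ, v = ((a : ℝ), (b : ℝ)))
    (B : Set (ℝ × ℝ)) (hB : B = convexHull ℝ (V : Set (ℝ × ℝ)))
    (hBint : (interior B).Nonempty)
    (E : ℕ → Finset (ℤ × ℤ)) (hE : ∀ n z, z ∈ E n ↔ rp z ∈ ((n:ℝ) + 1) • interior B) :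
    ∃ m p, QP (fun n => ((E n).card : ℚ)) m p := by
  obtain ⟨m, p, h⟩ := conf_QP ∅ V hV B hB hBint E hE 1
  refine ⟨m, p, ?_⟩
  have : ∀ n, (conf ∅ (E n) (Fin 1)).ncard = (E n).card := by
    intro n
    have h1 : conf ∅ (E n) (Fin 1) = (piE (Fin 1) (E n) : Set (Fin 1 → ℤ × ℤ)) := by
      ext z
      simp [conf, mem_piE, att]
    rw [h1, Set.ncard_coe_finset, card_piE]; simp
  simpa only [this] using h

lemma cc_QP (M : Finset (ℤ × ℤ)) (V : Finset (ℝ × ℝ))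
    (hV : ∀ v ∈ V, ∃ a b : ℚ, v = ((a : ℝ), (b : ℝ)))
    (B : Set (ℝ × ℝ)) (hB : B = convexHull ℝ (V : Set (ℝ × ℝ)))
    (hBint : (interior B).Nonempty)
    (E : ℕ → Finset (ℤ × ℤ)) (hE : ∀ n z, z ∈ E n ↔ rp z ∈ ((n:ℝ) + 1) • interior B) (κ : ℕ) :
    ∃ m p, QP (fun n => ((cc M (E n) κ : ℤ) : ℚ)) m p := by
  have := QP_sum (Finset.range (κ + 1)) (fun j n => (κ.choose j : ℚ) * ((-1) ^ (κ - j) *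
    (((E n).card : ℚ) ^ (κ - j) * (oc M (E n) j : ℚ)))) (by
      intro j _
      obtain ⟨m, p, h1⟩ := N_QP V hV B hB hBint E hE
      obtain ⟨m', p', h2⟩ := conf_QP M V hV B hB hBint E hE j
      exact ⟨_, _, (QP_const _).mul ((QP_const _).mul ((QP_pow h1 (κ - j)).mul h2))⟩)
  obtain ⟨m, p, h⟩ := this
  refine ⟨m, p, ?_⟩
  have e : (fun n => ((cc M (E n) κ : ℤ) : ℚ)) = fun n => ∑ j ∈ Finset.range (κ + 1), (κ.choose j : ℚ) * ((-1) ^ (κ - j) *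
    (((E n).card : ℚ) ^ (κ - j) * (oc M (E n) j : ℚ))) := by
    funext n
    unfold cc
    push_cast
    rfl
  rw [e]; exact h

lemma inv_cc (M E : Finset (ℤ × ℤ)) (q : ℕ) :
    (oc M E q : ℚ) = ∑ κ ∈ Finset.range (q + 1), (q.choose κ : ℚ) * ((E.card : ℚ) ^ (q - κ) *
      ((cc M E κ : ℤ) : ℚ)) := by
  have := inversion (fun j => (oc M E j : ℚ)) (E.card : ℚ) q
  refine this.trans ?_
  refine Finset.sum_congr rfl fun κ _ => ?_
  unfold cc
  push_cast
  rfl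

lemma coeff_ne (M : Finset (ℤ × ℤ)) (E : ℕ → Finset (ℤ × ℤ)) (i A : ℕ)
    (hA : ∀ n : ℕ, (E n).card ≤ A * (n + 1) ^ 2 ∧ ∃ Δ : Finset (ℤ × ℤ), Δ.card ≤ A * (n + 1) ∧
        ∀ z ∈ E n, ∀ w ∈ E n, att M z w → z - w ∈ Δ)
    (c : ℝ) (hc : 0 < c) (n0 : ℕ) (hap : ∀ n, n0 ≤ n → c * ((n:ℝ) + 1) ^ 3 ≤ ((ap M (E n)).card : ℝ))
    (m : ℕ) (p : ℕ → ℚ[X]) (h : QP (fun n => ((cc M (E n) (2 * i) : ℤ) : ℚ)) m p)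
    (k : ℕ) (hd : (p k).natDegree ≤ 3 * i) : (p k).coeff (3 * i) ≠ 0 := by
  intro h0
  have hl := QP_lim h (3 * i) k hd
  rw [h0, Rat.cast_zero] at hl
  obtain ⟨D, hD⟩ : ∃ D : ℕ, D = (2 ^ (2 * i) + 1) * (Kc (Fin i × Bool) * A ^ (2 * i)) := ⟨_, rfl⟩
  have hlow : ∀ n, n0 ≤ n → c ^ i - (D : ℝ) / ((n : ℝ) + 1) ≤
      (-1) ^ i * ((((cc M (E n) (2 * i) : ℤ) : ℚ) : ℝ) / ((n : ℝ) + 1) ^ (3 * i)) := by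
    intro n hn
    obtain ⟨h1, Δ, h2, h3⟩ := hA n
    have h4 := cc_lower M (E n) Δ i A (n + 1) h1 h2 (by omega) h3
    rw [← hD] at h4
    have h5 : ((ap M (E n)).card : ℝ) ^ i * ((n:ℝ) + 1) - (D : ℝ) * ((n:ℝ) + 1) ^ (3 * i) ≤
        ((-1) ^ i * (cc M (E n) (2 * i) : ℝ)) * ((n : ℝ) + 1) := by exact_mod_cast h4
    have htp : (0:ℝ) < (n:ℝ) + 1 := by positivity
    have h6 : c ^ i * ((n:ℝ) + 1) ^ (3 * i) ≤ ((ap M (E n)).card : ℝ) ^ i := by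
      rw [pow_mul, ← mul_pow]
      exact pow_le_pow_left₀ (by positivity) (hap n hn) i
    have h7 := mul_le_mul_of_nonneg_right h6 htp.le
    rw [Rat.cast_intCast, ← mul_div_assoc, sub_le_iff_le_add, div_add_div _ _ (by positivity) htp.ne',
      le_div_iff₀ (by positivity)]
    linarith
  have hl2 := hl.const_mul ((-1 : ℝ) ^ i)
  rw [mul_zero] at hl2
  have hl3 : Tendsto (fun n : ℕ => c ^ i - (D : ℝ) / ((n : ℝ) + 1)) atTop (𝓝 (c ^ i)) := by
    have : Tendsto (fun n : ℕ => (D : ℝ) / ((n : ℝ) + 1)) atTop (𝓝 0) := by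
      have := (tendsto_one_div_add_atTop_nhds_zero_nat (𝕜 := ℝ)).const_mul (D : ℝ)
      simpa [div_eq_mul_inv] using this
    simpa using this.const_sub (c ^ i)
  have hl4 := hl3.comp (seq_tendsto m k h.1)
  have := le_of_tendsto_of_tendsto hl4 hl2 (by
    filter_upwards [(seq_tendsto m k h.1).eventually_ge_atTop n0] with j hj
    exact hlow _ hj)
  have : 0 < c ^ i := by positivity
  linarith

end CT

open MeasureTheory Pointwise

/-- Coefficient Theorem: for every `i` there is a period `P_i` and real
polynomials `g_k` of degree exactly `2i` such that for every `q` with `2q ≥ i`, the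
coefficient of `n^(2q-i)` in each constituent of the quasipolynomial `o_P(q;n)` equals
`(vol B)^q · g_{k mod P_i}(q)`. -/
theorem stmt_1
    (M : Finset (ℤ × ℤ)) (hMne : M.Nonempty)
    (hMmove : ∀ m ∈ M, m ≠ 0 ∧ Int.gcd m.1 m.2 = 1)
    (hMpar : ∀ m ∈ M, ∀ m' ∈ M, m ≠ m' → m.1 * m'.2 - m.2 * m'.1 ≠ 0)
    (V : Finset (ℝ × ℝ)) (hV : ∀ v ∈ V, ∃ a b : ℚ, v = ((a : ℝ), (b : ℝ)))
    (B : Set (ℝ × ℝ)) (hB : B = convexHull ℝ (V : Set (ℝ × ℝ)))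
    (hBint : (interior B).Nonempty)
    (o : ℕ → ℕ → ℕ)
    (ho : ∀ q n : ℕ, o q n = Set.ncard {z : Fin q → ℤ × ℤ |
      Function.Injective z ∧
      (∀ i : Fin q, ((((z i).1 : ℝ), ((z i).2 : ℝ)) : ℝ × ℝ) ∈ ((n : ℝ) + 1) • interior B) ∧
      (∀ i j : Fin q, i ≠ j → ∀ m ∈ M,
        ((z j).1 - (z i).1) * m.2 - ((z j).2 - (z i).2) * m.1 ≠ 0)}) :
    ∀ i : ℕ, ∃ P : ℕ, 0 < P ∧ ∃ g : ℕ → Polynomial ℝ,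
      (∀ k < P, (g k).degree = ((2 * i : ℕ) : WithBot ℕ)) ∧
      ∀ q : ℕ, i ≤ 2 * q →
        ∃ p : ℕ, 0 < p ∧ P ∣ p ∧ ∃ f : ℕ → Polynomial ℚ,
          (∀ n : ℕ, (o q n : ℚ) = (f (n % p)).eval (n : ℚ)) ∧
          ∀ k < p, ((f k).coeff (2 * q - i) : ℝ) =
            (volume B).toReal ^ q * (g (k % P)).eval (q : ℝ) := by
  obtain ⟨E, hE⟩ := CT.exists_E V B hB
  have hM0 : ∀ m ∈ M, m ≠ 0 := fun m hm => (hMmove m hm).1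
  have hoc : ∀ q n, o q n = CT.oc M (E n) q := by
    intro q n
    rw [ho, CT.oc]
    congr 1
    ext z
    simp only [CT.conf, Set.mem_ofPred_eq, hE, CT.att, CT.rp]
    constructor
    · rintro ⟨-, h1, h2⟩
      exact ⟨h1, fun i j hij ⟨m, hm, h⟩ => h2 i j hij m hm h⟩
    · rintro ⟨h1, h2⟩
      refine ⟨fun i j hij => ?_, h1, fun i j hij m hm h => h2 i j hij ⟨m, hm, h⟩⟩
      by_contra hne
      obtain ⟨m, hm⟩ := hMne
      exact h2 i j hne ⟨m, hm, by rw [hij]; ring⟩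
  obtain ⟨mN, pN, hN⟩ := CT.N_QP V hV B hB hBint E hE
  choose mc pc hpc using CT.cc_QP M V hV B hB hBint E hE
  obtain ⟨K, hK, hbd⟩ := CT.board_bdd V B hB
  obtain ⟨A, hA'⟩ := CT.delta_bound M hM0 K hK
  have hA : ∀ n : ℕ, (E n).card ≤ A * (n + 1) ^ 2 ∧ ∃ Δ : Finset (ℤ × ℤ), Δ.card ≤ A * (n + 1) ∧
        ∀ z ∈ E n, ∀ w ∈ E n, CT.att M z w → z - w ∈ Δ := by
    intro n
    refine hA' (n + 1) (by omega) (E n) fun z hz => ?_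
    have := hbd ((n + 1 : ℕ) : ℤ) (by omega) z (by
      have := (hE n z).1 hz
      push_cast
      exact this)
    exact this
  obtain ⟨c, hc, n0, hap⟩ := CT.ap_lower M hMne hM0 B hBint E hE
  have hNd : ∀ k, (pN k).natDegree ≤ 2 := by
    refine CT.QP_deg hN 2 A fun n => ?_
    have := (hA n).1
    have h2 : ((E n).card : ℝ) ≤ A * ((n : ℝ) + 1) ^ 2 := by exact_mod_cast this
    rw [Rat.cast_natCast, abs_of_nonneg (Nat.cast_nonneg _)]
    exact h2
  have hN2 : ∀ k, (((pN k).coeff 2 : ℚ) : ℝ) = (volume B).toReal := by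
    intro k
    have h1 := CT.QP_lim hN 2 k (hNd k)
    have h2 := (CT.area V B hB E hE).comp (CT.seq_tendsto mN k hN.1)
    refine tendsto_nhds_unique h1 (h2.congr fun j => ?_)
    simp
  have hvol := CT.area_pos V B hB hBint
  have hNne : ∀ k, (pN k).coeff 2 ≠ 0 := by
    intro k h0
    have := hN2 k
    rw [h0, Rat.cast_zero] at this
    linarith
  have hcd : ∀ κ k, (pc κ k).natDegree ≤ κ + κ / 2 := by
    intro κ
    refine CT.QP_deg (hpc κ) _ ((2 ^ κ * (CT.Kc (Fin κ) * A ^ κ) : ℕ) : ℝ) fun n => ?_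
    obtain ⟨h1, Δ, h2, h3⟩ := hA n
    have h4 := CT.cc_abs M (E n) Δ κ A (n + 1) h1 h2 (by omega) h3
    rw [Rat.cast_intCast]
    exact_mod_cast h4
  intro i
  have hci : ∀ k, (pc (2 * i) k).coeff (3 * i) ≠ 0 := by
    intro k
    refine CT.coeff_ne M E i A hA c hc n0 hap _ _ (hpc (2 * i)) k ?_
    have := hcd (2 * i) k
    omega
  choose g hgd hg using fun k => CT.core i (pN k) _ (hNne k) (hNd k) rfl (fun κ => pc κ k)
    (fun κ => hcd κ k) (hci k)
  have hPpos : 0 < mN * ∏ κ ∈ Finset.range (2 * i + 1), mc κ :=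
    Nat.mul_pos hN.1 (Finset.prod_pos fun κ _ => (hpc κ).1)
  set P := mN * ∏ κ ∈ Finset.range (2 * i + 1), mc κ with hP
  refine ⟨P, hPpos, fun k => (g k).map (algebraMap ℚ ℝ), fun k _ => ?_, fun q hq => ?_⟩
  · rw [Polynomial.degree_map, hgd]
  have hppos : 0 < P * ∏ κ ∈ Finset.range (q + 1), mc κ :=
    Nat.mul_pos hPpos (Finset.prod_pos fun κ _ => (hpc κ).1)
  refine ⟨P * ∏ κ ∈ Finset.range (q + 1), mc κ, hppos, Dvd.intro _ rfl,
    fun k => ∑ κ ∈ Finset.range (q + 1), Polynomial.C (q.choose κ : ℚ) * (pN k ^ (q - κ) * pc κ k), ?_, ?_⟩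
  · intro n
    have e1 := (hN.of_dvd hppos ((Dvd.intro _ rfl : mN ∣ P).trans (Dvd.intro _ rfl))).mod n
    have e2 : ∀ κ ∈ Finset.range (q + 1), pc κ (n % (P * ∏ κ ∈ Finset.range (q + 1), mc κ)) = pc κ n := by
      intro κ hκ
      exact ((hpc κ).of_dvd hppos ((Finset.dvd_prod_of_mem mc hκ).trans (Dvd.intro_left _ rfl))).mod n
    rw [hoc, CT.inv_cc, Polynomial.eval_finsetSum]
    refine Finset.sum_congr rfl fun κ hκ => ?_
    rw [e1, e2 κ hκ, Polynomial.eval_mul, Polynomial.eval_C, Polynomial.eval_mul, Polynomial.eval_pow,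
      ← hN.2.2 n, ← (hpc κ).2.2 n]
  · intro k _
    have e1 : pN (k % P) = pN k := (hN.of_dvd hPpos (Dvd.intro _ rfl)).mod k
    have e2 : ∀ κ ≤ 2 * i, pc κ k = pc κ (k % P) := by
      intro κ hκ
      refine (((hpc κ).of_dvd hPpos ((Finset.dvd_prod_of_mem mc ?_).trans (Dvd.intro_left _ rfl))).mod k).symm
      exact Finset.mem_range.2 (by omega)
    have h1 := hg (k % P) (fun κ => pc κ k) (fun κ => hcd κ k) e2 q hq
    rw [e1] at h1
    simp only
    rw [h1, Rat.cast_mul, Rat.cast_pow, hN2, Polynomial.eval_natCast_map]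
    rfl
end
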